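/- arXiv:0910.3417 — 5 statements merged into one kernel-verified Lean document; each statement's English description precedes it below -/
import Mathlib

section
/- Let q be a prime power with q ≡ 2 (mod 3) and let m be a positive divisor of q + 1. Then for every positive integer N there exists a positive integer n with the following property: letting K_n = 𝔽_q(t)[s]/(s³ − (t^{q^n} − t)) (a field, the function field of the curve s³ = t^{q^n} − t) and letting 𝒪_n be the integral closure of 𝔽_q[t] in K_n, the ideal class group Cl(𝒪_n) contains a subgroup isomorphic to (ℤ/mℤ)^N; that is, there is an injective group homomorphism (ℤ/mℤ)^N → Cl(𝒪_n). In other words, the m-class rank of K_n is arbitrarily large as n varies. -/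
open Polynomial

/-- The algebra `R[s] / (s ^ 3 - S)`: an element is `c0 + c1 * s + c2 * s ^ 2`. -/
@[ext]
structure PureCubic (R : Type*) [CommRing R] (S : R) where
  c0 : R
  c1 : R
  c2 : R

namespace PureCubic

section Ring

variable {R : Type*} [CommRing R] {S : R}

instance : Zero (PureCubic R S) := ⟨⟨0, 0, 0⟩⟩
instance : One (PureCubic R S) := ⟨⟨1, 0, 0⟩⟩
instance : Add (PureCubic R S) := ⟨fun x y => ⟨x.c0 + y.c0, x.c1 + y.c1, x.c2 + y.c2⟩⟩
instance : Neg (PureCubic R S) := ⟨fun x => ⟨-x.c0, -x.c1, -x.c2⟩⟩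
instance : Mul (PureCubic R S) := ⟨fun x y =>
  ⟨x.c0 * y.c0 + S * (x.c1 * y.c2 + x.c2 * y.c1),
   x.c0 * y.c1 + x.c1 * y.c0 + S * (x.c2 * y.c2),
   x.c0 * y.c2 + x.c1 * y.c1 + x.c2 * y.c0⟩⟩

@[simp] theorem zero_c0 : (0 : PureCubic R S).c0 = 0 := rfl
@[simp] theorem zero_c1 : (0 : PureCubic R S).c1 = 0 := rfl
@[simp] theorem zero_c2 : (0 : PureCubic R S).c2 = 0 := rfl
@[simp] theorem one_c0 : (1 : PureCubic R S).c0 = 1 := rfl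
@[simp] theorem one_c1 : (1 : PureCubic R S).c1 = 0 := rfl
@[simp] theorem one_c2 : (1 : PureCubic R S).c2 = 0 := rfl
@[simp] theorem add_c0 (x y : PureCubic R S) : (x + y).c0 = x.c0 + y.c0 := rfl
@[simp] theorem add_c1 (x y : PureCubic R S) : (x + y).c1 = x.c1 + y.c1 := rfl
@[simp] theorem add_c2 (x y : PureCubic R S) : (x + y).c2 = x.c2 + y.c2 := rfl
@[simp] theorem neg_c0 (x : PureCubic R S) : (-x).c0 = -x.c0 := rfl
@[simp] theorem neg_c1 (x : PureCubic R S) : (-x).c1 = -x.c1 := rfl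
@[simp] theorem neg_c2 (x : PureCubic R S) : (-x).c2 = -x.c2 := rfl
@[simp] theorem mul_c0 (x y : PureCubic R S) :
    (x * y).c0 = x.c0 * y.c0 + S * (x.c1 * y.c2 + x.c2 * y.c1) := rfl
@[simp] theorem mul_c1 (x y : PureCubic R S) :
    (x * y).c1 = x.c0 * y.c1 + x.c1 * y.c0 + S * (x.c2 * y.c2) := rfl
@[simp] theorem mul_c2 (x y : PureCubic R S) :
    (x * y).c2 = x.c0 * y.c2 + x.c1 * y.c1 + x.c2 * y.c0 := rfl

instance : CommRing (PureCubic R S) where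
  add_assoc _ _ _ := by ext <;> simp [add_assoc]
  zero_add _ := by ext <;> simp
  add_zero _ := by ext <;> simp
  nsmul := nsmulRec
  zsmul := zsmulRec
  neg_add_cancel _ := by ext <;> simp
  add_comm _ _ := by ext <;> simp [add_comm]
  mul_assoc _ _ _ := by ext <;> simp <;> ring
  one_mul _ := by ext <;> simp
  mul_one _ := by ext <;> simp
  mul_comm _ _ := by ext <;> simp <;> ring
  left_distrib _ _ _ := by ext <;> simp <;> ring
  right_distrib _ _ _ := by ext <;> simp <;> ring
  zero_mul _ := by ext <;> simp
  mul_zero _ := by ext <;> simp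

@[simp] theorem sub_c0 (x y : PureCubic R S) : (x - y).c0 = x.c0 - y.c0 := by
  simp [sub_eq_add_neg]
@[simp] theorem sub_c1 (x y : PureCubic R S) : (x - y).c1 = x.c1 - y.c1 := by
  simp [sub_eq_add_neg]
@[simp] theorem sub_c2 (x y : PureCubic R S) : (x - y).c2 = x.c2 - y.c2 := by
  simp [sub_eq_add_neg]

/-- The inclusion of the base ring. -/
def of (S : R) : R →+* PureCubic R S where
  toFun r := ⟨r, 0, 0⟩
  map_one' := rfl
  map_zero' := rfl
  map_add' _ _ := by ext <;> simp
  map_mul' _ _ := by ext <;> simp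

@[simp] theorem of_c0 (r : R) : (of S r).c0 = r := rfl
@[simp] theorem of_c1 (r : R) : (of S r).c1 = 0 := rfl
@[simp] theorem of_c2 (r : R) : (of S r).c2 = 0 := rfl

theorem of_injective : Function.Injective (of S) := fun _ _ h => congrArg c0 h

/-- The adjoined cube root of `S`. -/
def root (S : R) : PureCubic R S := ⟨0, 1, 0⟩

@[simp] theorem root_c0 : (root S).c0 = 0 := rfl
@[simp] theorem root_c1 : (root S).c1 = 1 := rfl
@[simp] theorem root_c2 : (root S).c2 = 0 := rfl

theorem eq_of_add_root (x : PureCubic R S) :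
    x = of S x.c0 + of S x.c1 * root S + of S x.c2 * root S ^ 2 := by
  ext <;> simp [pow_succ]

/-- The norm form of `R[s] / (s ^ 3 - S)` over `R`. -/
def norm : PureCubic R S →* R where
  toFun x := x.c0 ^ 3 + S * x.c1 ^ 3 + S ^ 2 * x.c2 ^ 3 - 3 * S * x.c0 * x.c1 * x.c2
  map_one' := by simp
  map_mul' x y := by simp; ring

theorem norm_apply (x : PureCubic R S) :
    norm x = x.c0 ^ 3 + S * x.c1 ^ 3 + S ^ 2 * x.c2 ^ 3 - 3 * S * x.c0 * x.c1 * x.c2 := rfl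

theorem exists_mul_eq_of_norm (x : PureCubic R S) : ∃ y, x * y = of S (norm x) :=
  ⟨⟨x.c0 ^ 2 - S * x.c1 * x.c2, S * x.c2 ^ 2 - x.c0 * x.c1, x.c1 ^ 2 - x.c0 * x.c2⟩, by
    ext <;> simp only [mul_c0, mul_c1, mul_c2, of_c0, of_c1, of_c2, norm_apply] <;> ring⟩

/-- The ring homomorphism to an algebra given by a cube root of the image of `S`. -/
def lift {A : Type*} [CommRing A] (f : R →+* A) (s : A) (hs : s ^ 3 = f S) :
    PureCubic R S →+* A where
  toFun x := f x.c0 + f x.c1 * s + f x.c2 * s ^ 2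
  map_one' := by simp
  map_zero' := by simp
  map_add' x y := by simp; ring
  map_mul' x y := by
    simp only [mul_c0, mul_c1, mul_c2, map_add, map_mul, ← hs]
    ring

theorem lift_apply {A : Type*} [CommRing A] (f : R →+* A) (s : A) (hs : s ^ 3 = f S)
    (x : PureCubic R S) : lift f s hs x = f x.c0 + f x.c1 * s + f x.c2 * s ^ 2 := rfl

@[simp] theorem lift_of {A : Type*} [CommRing A] (f : R →+* A) (s : A) (hs : s ^ 3 = f S)
    (r : R) : lift f s hs (of S r) = f r := by simp [lift_apply]

@[simp] theorem lift_root {A : Type*} [CommRing A] (f : R →+* A) (s : A) (hs : s ^ 3 = f S) :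
    lift f s hs (root S) = s := by simp [lift_apply]

theorem hom_ext {A : Type*} [CommRing A] {f g : PureCubic R S →+* A}
    (h : ∀ r, f (of S r) = g (of S r)) (hr : f (root S) = g (root S)) : f = g := by
  ext x
  rw [eq_of_add_root x]
  simp [h, hr]

end Ring

section Domain

variable {k : Type*} [Field k] {S : k[X]}

theorem coeff_eq_zero_of_eq_zero_or {p : k[X]} {D : ℕ} (h : p = 0 ∨ p.natDegree < D) :
    p.coeff D = 0 := by
  rcases h with rfl | h
  · simp
  · exact coeff_eq_zero_of_natDegree_lt h

theorem coeff_natDegree_ne_zero {p : k[X]} {D : ℕ} (h : p ≠ 0) (hD : p.natDegree = D) :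
    p.coeff D ≠ 0 := by
  subst hD; simpa using h

theorem max_degree_cases {A B C Z : Prop} {d x y z w : ℕ} (hd : ¬ 3 ∣ d)
    (k0 : ¬ A → (B ∨ d + 3 * y < 3 * x) → (C ∨ 2 * d + 3 * z < 3 * x) → 3 * x ≤ w ∧ Z)
    (k1 : ¬ B → (A ∨ 3 * x < d + 3 * y) → (C ∨ 2 * d + 3 * z < d + 3 * y) → d + 3 * y ≤ w ∧ Z)
    (k2 : ¬ C → (A ∨ 3 * x < 2 * d + 3 * z) → (B ∨ d + 3 * y < 2 * d + 3 * z) →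
      2 * d + 3 * z ≤ w ∧ Z) :
    (¬ A → 3 * x ≤ w) ∧ (¬ B → d + 3 * y ≤ w) ∧ (¬ C → 2 * d + 3 * z ≤ w) ∧
      (¬ A ∨ ¬ B ∨ ¬ C → Z) := by
  have h01 : d + 3 * y ≠ 3 * x := by omega
  have h02 : 2 * d + 3 * z ≠ 3 * x := by omega
  have h12 : 2 * d + 3 * z ≠ d + 3 * y := by omega
  generalize 2 * d + 3 * z = r2 at *
  generalize d + 3 * y = r1 at *
  generalize 3 * x = r0 at *
  grind

theorem three_mul_natDegree_le_norm (hS : ¬ 3 ∣ S.natDegree) (x : PureCubic k[X] S) :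
    (x.c0 ≠ 0 → 3 * x.c0.natDegree ≤ (norm x).natDegree) ∧
    (x.c1 ≠ 0 → S.natDegree + 3 * x.c1.natDegree ≤ (norm x).natDegree) ∧
    (x.c2 ≠ 0 → 2 * S.natDegree + 3 * x.c2.natDegree ≤ (norm x).natDegree) ∧
    (x ≠ 0 → norm x ≠ 0) := by
  have hS0 : S ≠ 0 := by rintro rfl; simp at hS
  obtain ⟨a, b, c⟩ := x
  have e0 : (a ^ 3).natDegree = 3 * a.natDegree := natDegree_pow _ _
  have e1 : b ≠ 0 → (S * b ^ 3).natDegree = S.natDegree + 3 * b.natDegree := fun h => by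
    rw [natDegree_mul hS0 (pow_ne_zero _ h), natDegree_pow]
  have e2 : c ≠ 0 → (S ^ 2 * c ^ 3).natDegree = 2 * S.natDegree + 3 * c.natDegree := fun h => by
    rw [natDegree_mul (pow_ne_zero _ hS0) (pow_ne_zero _ h), natDegree_pow, natDegree_pow]
  have e3 : (3 * S * a * b * c).natDegree ≤
      S.natDegree + a.natDegree + b.natDegree + c.natDegree := by
    refine natDegree_mul_le.trans (add_le_add_left (natDegree_mul_le.trans (add_le_add_left
      (natDegree_mul_le.trans (add_le_add_left (natDegree_mul_le.trans ?_) _)) _)) _)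
    have : (3 : k[X]).natDegree = 0 := natDegree_natCast 3
    omega
  have hz : (3 * S * a * b * c) = 0 ∨ (a ≠ 0 ∧ b ≠ 0 ∧ c ≠ 0) := by
    by_cases ha : a = 0
    · left; simp [ha]
    by_cases hb : b = 0
    · left; simp [hb]
    by_cases hc : c = 0
    · left; simp [hc]
    exact Or.inr ⟨ha, hb, hc⟩
  have key : ∀ D, (a ^ 3 + S * b ^ 3 + S ^ 2 * c ^ 3 - 3 * S * a * b * c).coeff D ≠ 0 →
      D ≤ (norm (⟨a, b, c⟩ : PureCubic k[X] S)).natDegree ∧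
      norm (⟨a, b, c⟩ : PureCubic k[X] S) ≠ 0 := fun D h =>
    ⟨le_natDegree_of_ne_zero h, fun h0 => h (by rw [norm_apply] at h0; simp only at h0; simp [h0])⟩
  have k0 : a ≠ 0 → (b = 0 ∨ S.natDegree + 3 * b.natDegree < 3 * a.natDegree) →
      (c = 0 ∨ 2 * S.natDegree + 3 * c.natDegree < 3 * a.natDegree) →
      3 * a.natDegree ≤ (norm (⟨a, b, c⟩ : PureCubic k[X] S)).natDegree ∧
      norm (⟨a, b, c⟩ : PureCubic k[X] S) ≠ 0 := by
    intro ha hb hc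
    apply key
    rw [coeff_sub, coeff_add, coeff_add,
      coeff_eq_zero_of_eq_zero_or (p := S * b ^ 3) (by
        rcases eq_or_ne b 0 with h | h
        · simp [h]
        · rw [e1 h]; exact Or.inr (hb.resolve_left h)),
      coeff_eq_zero_of_eq_zero_or (p := S ^ 2 * c ^ 3) (by
        rcases eq_or_ne c 0 with h | h
        · simp [h]
        · rw [e2 h]; exact Or.inr (hc.resolve_left h)),
      coeff_eq_zero_of_eq_zero_or (p := 3 * S * a * b * c) (by
        rcases hz with h | ⟨h1, h2, h3⟩
        · exact Or.inl h
        · have := hb.resolve_left h2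
          have := hc.resolve_left h3
          right; omega)]
    simpa using coeff_natDegree_ne_zero (pow_ne_zero 3 ha) e0
  have k1 : b ≠ 0 → (a = 0 ∨ 3 * a.natDegree < S.natDegree + 3 * b.natDegree) →
      (c = 0 ∨ 2 * S.natDegree + 3 * c.natDegree < S.natDegree + 3 * b.natDegree) →
      S.natDegree + 3 * b.natDegree ≤ (norm (⟨a, b, c⟩ : PureCubic k[X] S)).natDegree ∧
      norm (⟨a, b, c⟩ : PureCubic k[X] S) ≠ 0 := by
    intro hb ha hc
    apply key
    rw [coeff_sub, coeff_add, coeff_add,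
      coeff_eq_zero_of_eq_zero_or (p := a ^ 3) (by
        rcases eq_or_ne a 0 with h | h
        · simp [h]
        · rw [e0]; exact Or.inr (ha.resolve_left h)),
      coeff_eq_zero_of_eq_zero_or (p := S ^ 2 * c ^ 3) (by
        rcases eq_or_ne c 0 with h | h
        · simp [h]
        · rw [e2 h]; exact Or.inr (hc.resolve_left h)),
      coeff_eq_zero_of_eq_zero_or (p := 3 * S * a * b * c) (by
        rcases hz with h | ⟨h1, h2, h3⟩
        · exact Or.inl h
        · have := ha.resolve_left h1
          have := hc.resolve_left h3
          right; omega)]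
    simpa using coeff_natDegree_ne_zero (mul_ne_zero hS0 (pow_ne_zero 3 hb)) (e1 hb)
  have k2 : c ≠ 0 → (a = 0 ∨ 3 * a.natDegree < 2 * S.natDegree + 3 * c.natDegree) →
      (b = 0 ∨ S.natDegree + 3 * b.natDegree < 2 * S.natDegree + 3 * c.natDegree) →
      2 * S.natDegree + 3 * c.natDegree ≤ (norm (⟨a, b, c⟩ : PureCubic k[X] S)).natDegree ∧
      norm (⟨a, b, c⟩ : PureCubic k[X] S) ≠ 0 := by
    intro hc ha hb
    apply key
    rw [coeff_sub, coeff_add, coeff_add,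
      coeff_eq_zero_of_eq_zero_or (p := a ^ 3) (by
        rcases eq_or_ne a 0 with h | h
        · simp [h]
        · rw [e0]; exact Or.inr (ha.resolve_left h)),
      coeff_eq_zero_of_eq_zero_or (p := S * b ^ 3) (by
        rcases eq_or_ne b 0 with h | h
        · simp [h]
        · rw [e1 h]; exact Or.inr (hb.resolve_left h)),
      coeff_eq_zero_of_eq_zero_or (p := 3 * S * a * b * c) (by
        rcases hz with h | ⟨h1, h2, h3⟩
        · exact Or.inl h
        · have := ha.resolve_left h1
          have := hb.resolve_left h2
          right; omega)]
    simpa using coeff_natDegree_ne_zero (mul_ne_zero (pow_ne_zero 2 hS0) (pow_ne_zero 3 hc)) (e2 hc)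
  have hx : (⟨a, b, c⟩ : PureCubic k[X] S) ≠ 0 ↔ (a ≠ 0 ∨ b ≠ 0 ∨ c ≠ 0) := by
    rw [Ne, PureCubic.ext_iff, not_and_or, not_and_or, zero_c0, zero_c1, zero_c2]
  rw [hx]
  exact max_degree_cases hS k0 k1 k2

theorem norm_ne_zero (hS : ¬ 3 ∣ S.natDegree) {x : PureCubic k[X] S} (hx : x ≠ 0) :
    norm x ≠ 0 :=
  (three_mul_natDegree_le_norm hS x).2.2.2 hx

theorem norm_zero' : norm (0 : PureCubic k[X] S) = 0 := by
  simp [norm_apply]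

theorem isDomain (hS : ¬ 3 ∣ S.natDegree) : IsDomain (PureCubic k[X] S) := by
  haveI : Nontrivial (PureCubic k[X] S) := ⟨0, 1, fun h => by simpa using congrArg c0 h⟩
  haveI : NoZeroDivisors (PureCubic k[X] S) := ⟨fun {x y} h => by
    by_contra! hxy
    have := mul_ne_zero (norm_ne_zero hS hxy.1) (norm_ne_zero hS hxy.2)
    rw [← map_mul, h, norm_zero'] at this
    exact this rfl⟩
  exact NoZeroDivisors.to_isDomain _

theorem c2_eq_zero_of_natDegree_norm_lt (hS : ¬ 3 ∣ S.natDegree) {x : PureCubic k[X] S}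
    (hx : (norm x).natDegree < 2 * S.natDegree) : x.c2 = 0 := by
  by_contra h
  have := (three_mul_natDegree_le_norm hS x).2.2.1 h
  omega

theorem eq_of_c0_of_natDegree_norm_lt (hS : ¬ 3 ∣ S.natDegree) {x : PureCubic k[X] S}
    (hx : (norm x).natDegree < S.natDegree) : x = of S x.c0 := by
  have h2 := c2_eq_zero_of_natDegree_norm_lt hS (x := x) (by omega)
  have h1 : x.c1 = 0 := by
    by_contra h
    have := (three_mul_natDegree_le_norm hS x).2.1 h
    omega
  ext <;> simp [h1, h2]

end Domain

end PureCubic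

namespace PureCubic

section IntegralClosure

variable {k : Type*} [Field k] {S : k[X]} {L : Type*} [Field L] [Algebra k[X] L]
  [Algebra (RatFunc k) L] [IsScalarTower k[X] (RatFunc k) L]

theorem ratFunc_pow_three_ne {P : k[X]} (hP : ¬ 3 ∣ P.natDegree) (b : RatFunc k) :
    b ^ 3 ≠ algebraMap k[X] (RatFunc k) P := by
  intro h
  have hP0 : P ≠ 0 := by rintro rfl; simp at hP
  have hb : b ≠ 0 := by
    rintro rfl
    rw [zero_pow three_ne_zero] at h
    exact hP0 ((map_eq_zero_iff _ (IsFractionRing.injective k[X] (RatFunc k))).1 h.symm)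
  have := congrArg RatFunc.intDegree h
  rw [pow_succ, pow_two, RatFunc.intDegree_mul (mul_ne_zero hb hb) hb,
    RatFunc.intDegree_mul hb hb, RatFunc.intDegree_polynomial] at this
  omega

theorem minpoly_of_pow_three_eq {P : k[X]} (hP : ¬ 3 ∣ P.natDegree) {w : L}
    (hw : w ^ 3 = algebraMap k[X] L P) :
    minpoly (RatFunc k) w = X ^ 3 - C (algebraMap k[X] (RatFunc k) P) := by
  refine (minpoly.eq_of_irreducible_of_monic
    (X_pow_sub_C_irreducible_of_prime Nat.prime_three (ratFunc_pow_three_ne hP)) ?_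
    (monic_X_pow_sub_C _ three_ne_zero)).symm
  simp [hw, ← IsScalarTower.algebraMap_apply]

theorem trace_eq_zero_of_pow_three_eq [FiniteDimensional (RatFunc k) L] {P : k[X]}
    (hP : ¬ 3 ∣ P.natDegree) {w : L} (hw : w ^ 3 = algebraMap k[X] L P) :
    Algebra.trace (RatFunc k) L w = 0 := by
  rw [trace_eq_finrank_mul_minpoly_nextCoeff, minpoly_of_pow_three_eq hP hw,
    nextCoeff_of_natDegree_pos (by simp)]
  simp [coeff_X_pow]

theorem isIntegral_of_pow_three_eq {P : k[X]} {w : L} (hw : w ^ 3 = algebraMap k[X] L P) :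
    IsIntegral k[X] w :=
  IsIntegral.of_pow three_pos (hw ▸ isIntegral_algebraMap)

variable (hS : ¬ 3 ∣ S.natDegree) {s : L} (hs : s ^ 3 = algebraMap k[X] L S)
  (hadj : Algebra.adjoin (RatFunc k) {s} = ⊤)

include hs in
theorem isIntegral_ratFunc : IsIntegral (RatFunc k) s :=
  (isIntegral_of_pow_three_eq hs).tower_top

include hs hadj in
theorem finiteDimensional_of_adjoin : FiniteDimensional (RatFunc k) L := by
  have h : (Algebra.adjoin (RatFunc k) {s}).toSubmodule.FG :=
    (isIntegral_ratFunc hs).fg_adjoin_singleton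
  rw [hadj, Algebra.top_toSubmodule] at h
  exact ⟨h⟩

include hs hadj hS in
theorem finrank_eq_three : Module.finrank (RatFunc k) L = 3 := by
  have htop : IntermediateField.adjoin (RatFunc k) {s} = ⊤ := by
    rw [← IntermediateField.toSubalgebra_inj, IntermediateField.top_toSubalgebra]
    exact top_unique (hadj ▸ IntermediateField.algebra_adjoin_le_adjoin _ _)
  rw [← IntermediateField.finrank_top', ← htop,
    IntermediateField.adjoin.finrank (isIntegral_ratFunc hs), minpoly_of_pow_three_eq hS hs,
    natDegree_X_pow_sub_C]

include hs hadj hS in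
theorem isSeparable_of_adjoin (h3 : (3 : k) ≠ 0) : Algebra.IsSeparable (RatFunc k) L := by
  have htop : IntermediateField.adjoin (RatFunc k) {s} = ⊤ := by
    rw [← IntermediateField.toSubalgebra_inj, IntermediateField.top_toSubalgebra]
    exact top_unique (hadj ▸ IntermediateField.algebra_adjoin_le_adjoin _ _)
  have h3' : ((3 : ℕ) : RatFunc k) ≠ 0 := by
    have := (map_ne_zero (algebraMap k (RatFunc k))).2 h3
    rwa [map_ofNat] at this
  have hS0 : S ≠ 0 := by rintro rfl; simp at hS
  have hsep : IsSeparable (RatFunc k) s := by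
    rw [IsSeparable, minpoly_of_pow_three_eq hS hs]
    refine separable_X_pow_sub_C _ h3' ?_
    rwa [Ne, map_eq_zero_iff _ (IsFractionRing.injective k[X] (RatFunc k))]
  have := IntermediateField.isSeparable_adjoin_simple_iff_isSeparable (F := RatFunc k) (E := L)
    (x := s) |>.2 hsep
  rw [htop] at this
  exact Algebra.IsSeparable.of_algHom (RatFunc k) _
    (IntermediateField.topEquiv (F := RatFunc k) (E := L)).symm.toAlgHom

include hs hadj in
theorem exists_coordinates (z : L) : ∃ a b c : RatFunc k,
    z = algebraMap _ L a + algebraMap _ L b * s + algebraMap _ L c * s ^ 2 := by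
  have hs' : s ^ 3 = algebraMap (RatFunc k) L (algebraMap k[X] (RatFunc k) S) := by
    rw [hs, ← IsScalarTower.algebraMap_apply]
  have hz : z ∈ Algebra.adjoin (RatFunc k) {s} := by rw [hadj]; trivial
  suffices ∃ x, z = lift (algebraMap (RatFunc k) L) s hs' x from
    this.imp' c0 fun x hx => ⟨x.c1, x.c2, hx⟩
  induction hz using Algebra.adjoin_induction with
  | mem x hx => exact ⟨root _, by rw [lift_root]; exact hx⟩
  | algebraMap r => exact ⟨of _ r, by rw [lift_of]⟩
  | add x y _ _ hx hy =>
    obtain ⟨x, rfl⟩ := hx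
    obtain ⟨y, rfl⟩ := hy
    exact ⟨x + y, by rw [map_add]⟩
  | mul x y _ _ hx hy =>
    obtain ⟨x, rfl⟩ := hx
    obtain ⟨y, rfl⟩ := hy
    exact ⟨x * y, by rw [map_mul]⟩

include hs in
theorem exists_polynomial_of_isIntegral_mul (hsq : Squarefree S) {c : RatFunc k} {d : k[X]}
    (hd : c * algebraMap k[X] (RatFunc k) S = algebraMap k[X] (RatFunc k) d)
    (hc : IsIntegral k[X] (algebraMap (RatFunc k) L c * s ^ 2)) :
    ∃ e : k[X], c = algebraMap k[X] (RatFunc k) e := by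
  have hinj := IsFractionRing.injective k[X] (RatFunc k)
  have hS0 : algebraMap k[X] (RatFunc k) S ≠ 0 := by
    rw [Ne, map_eq_zero_iff _ hinj]; exact hsq.ne_zero
  have h1 : IsIntegral k[X] (algebraMap (RatFunc k) L (c ^ 3 * algebraMap k[X] _ S ^ 2)) := by
    convert hc.pow 3 using 1
    rw [map_mul, map_pow, map_pow, ← IsScalarTower.algebraMap_apply, ← hs]
    ring
  rw [isIntegral_algebraMap_iff (algebraMap (RatFunc k) L).injective] at h1
  obtain ⟨e, he⟩ := IsIntegrallyClosed.isIntegral_iff.1 h1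
  have h2 : d ^ 3 = S * e := hinj (by rw [map_pow, ← hd, map_mul, he]; ring)
  have h3 : S ∣ d := (hsq.dvd_pow_iff_dvd three_ne_zero).1 ⟨e, h2⟩
  obtain ⟨f, rfl⟩ := h3
  refine ⟨f, mul_right_cancel₀ hS0 ?_⟩
  rw [hd, map_mul, mul_comm]

include hs hadj hS in
theorem exists_polynomial_coordinates (h3 : (3 : k) ≠ 0) (hsq : Squarefree S) {z : L}
    (hz : IsIntegral k[X] z) : ∃ x : PureCubic k[X] S, lift (algebraMap k[X] L) s hs x = z := by
  have := finiteDimensional_of_adjoin hs hadj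
  have hrank := finrank_eq_three hS hs hadj
  have hS2 : ¬ 3 ∣ (S ^ 2).natDegree := by rw [natDegree_pow]; omega
  have hs2 : (s ^ 2) ^ 3 = algebraMap k[X] L (S ^ 2) := by rw [map_pow, ← hs]; ring
  have t1 := trace_eq_zero_of_pow_three_eq hS hs
  have t2 := trace_eq_zero_of_pow_three_eq hS2 hs2
  have ht : ∀ a b c : RatFunc k, Algebra.trace (RatFunc k) L
      (algebraMap _ L a + algebraMap _ L b * s + algebraMap _ L c * s ^ 2) = 3 * a := by
    intro a b c
    rw [map_add, map_add, Algebra.trace_algebraMap, hrank, ← Algebra.smul_def, ← Algebra.smul_def,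
      map_smul, map_smul, t1, t2]
    simp
  have hs_int : IsIntegral k[X] s := isIntegral_of_pow_three_eq hs
  have hdiv : ∀ (a b c : RatFunc k), IsIntegral k[X]
      (algebraMap _ L a + algebraMap _ L b * s + algebraMap _ L c * s ^ 2) →
      ∃ e : k[X], a = algebraMap k[X] (RatFunc k) e := by
    intro a b c h
    have h' : IsIntegral k[X] (3 * a) := ht a b c ▸ Algebra.isIntegral_trace (L := RatFunc k) h
    obtain ⟨e, he⟩ := IsIntegrallyClosed.isIntegral_iff.1 h'
    refine ⟨C (3⁻¹ : k) * e, ?_⟩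
    rw [map_mul, he, ← mul_assoc]
    have : algebraMap k[X] (RatFunc k) (C (3⁻¹ : k)) * 3 = 1 := by
      have h3' : (C (3⁻¹ : k)) * 3 = (1 : k[X]) := by
        rw [show (3 : k[X]) = C 3 from rfl, ← C_mul, inv_mul_cancel₀ h3, C_1]
      rw [← map_one (algebraMap k[X] (RatFunc k)), ← h3', map_mul, map_ofNat]
    rw [this, one_mul]
  obtain ⟨a, b, c, rfl⟩ := exists_coordinates hs hadj z
  have hs' : s ^ 3 = algebraMap (RatFunc k) L (algebraMap k[X] (RatFunc k) S) := by
    rw [hs, ← IsScalarTower.algebraMap_apply]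
  obtain ⟨a, rfl⟩ := hdiv _ _ _ hz
  obtain ⟨d, hd⟩ := hdiv (c * algebraMap k[X] (RatFunc k) S) (algebraMap k[X] (RatFunc k) a) b (by
    refine (congrArg (IsIntegral k[X]) ?_).mpr (hz.mul hs_int)
    rw [map_mul, ← hs']; ring)
  obtain ⟨e, he⟩ := hdiv (b * algebraMap k[X] (RatFunc k) S)
    (c * algebraMap k[X] (RatFunc k) S) (algebraMap k[X] (RatFunc k) a) (by
    refine (congrArg (IsIntegral k[X]) ?_).mpr (hz.mul (hs_int.pow 2))
    rw [map_mul, map_mul, ← hs']; ring)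
  have ha : IsIntegral k[X] (algebraMap (RatFunc k) L (algebraMap k[X] (RatFunc k) a)) := by
    rw [← IsScalarTower.algebraMap_apply]; exact isIntegral_algebraMap
  have hd' : IsIntegral k[X] (algebraMap (RatFunc k) L (algebraMap k[X] (RatFunc k) d)) := by
    rw [← IsScalarTower.algebraMap_apply]; exact isIntegral_algebraMap
  obtain ⟨b, rfl⟩ := exists_polynomial_of_isIntegral_mul hs hsq he (by
    refine (congrArg (IsIntegral k[X]) ?_).mpr (((hz.sub ha).mul hs_int).sub hd')
    rw [← hd, map_mul, ← hs']; ring)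
  have hb : IsIntegral k[X] (algebraMap (RatFunc k) L (algebraMap k[X] (RatFunc k) b)) := by
    rw [← IsScalarTower.algebraMap_apply]; exact isIntegral_algebraMap
  obtain ⟨c, rfl⟩ := exists_polynomial_of_isIntegral_mul hs hsq hd (by
    refine (congrArg (IsIntegral k[X]) ?_).mpr ((hz.sub ha).sub (hb.mul hs_int))
    ring)
  refine ⟨⟨a, b, c⟩, ?_⟩
  simp only [lift_apply, ← IsScalarTower.algebraMap_apply]

include hS in
theorem lift_injective : Function.Injective (lift (algebraMap k[X] L) s hs) := by
  rw [injective_iff_map_eq_zero]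
  intro x hx
  by_contra h
  obtain ⟨y, hy⟩ := exists_mul_eq_of_norm x
  have h1 := congrArg (lift (algebraMap k[X] L) s hs) hy
  rw [map_mul, hx, zero_mul, lift_of, IsScalarTower.algebraMap_apply k[X] (RatFunc k) L, eq_comm,
    map_eq_zero, map_eq_zero_iff _ (IsFractionRing.injective k[X] (RatFunc k))] at h1
  exact norm_ne_zero hS h h1

theorem isIntegral_lift (x : PureCubic k[X] S) :
    IsIntegral k[X] (lift (algebraMap k[X] L) s hs x) := by
  rw [lift_apply]
  have hs_int : IsIntegral k[X] s := isIntegral_of_pow_three_eq hs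
  exact (isIntegral_algebraMap.add (isIntegral_algebraMap.mul hs_int)).add
    (isIntegral_algebraMap.mul (hs_int.pow 2))

/-- The integral closure of `k[X]` in `k(X)(S^(1/3))` is `k[X][S^(1/3)]`. -/
noncomputable def equivIntegralClosure (h3 : (3 : k) ≠ 0) (hsq : Squarefree S) :
    PureCubic k[X] S ≃+* integralClosure k[X] L :=
  RingEquiv.ofBijective
    ((lift (algebraMap k[X] L) s hs).codRestrict (integralClosure k[X] L) (isIntegral_lift hs))
    ⟨fun x y h => lift_injective hS hs (congrArg Subtype.val h), fun z => by
      obtain ⟨x, hx⟩ := exists_polynomial_coordinates hS hs hadj h3 hsq z.2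
      exact ⟨x, Subtype.ext hx⟩⟩

include hS hs hadj in
theorem isDedekindDomain_of_adjoin (h3 : (3 : k) ≠ 0) (hsq : Squarefree S) :
    IsDedekindDomain (PureCubic k[X] S) := by
  have := finiteDimensional_of_adjoin hs hadj
  have := isSeparable_of_adjoin hS hs hadj h3
  have := isDomain hS
  let : Algebra (PureCubic k[X] S) L := (lift (algebraMap k[X] L) s hs).toAlgebra
  let : Algebra k[X] (PureCubic k[X] S) := (of S).toAlgebra
  have : IsScalarTower k[X] (PureCubic k[X] S) L :=
    IsScalarTower.of_algebraMap_eq fun r => (lift_of _ s hs r).symm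
  have : IsIntegralClosure (PureCubic k[X] S) k[X] L :=
    ⟨lift_injective hS hs, fun {z} => ⟨exists_polynomial_coordinates hS hs hadj h3 hsq, by
      rintro ⟨x, rfl⟩
      exact isIntegral_lift hs x⟩⟩
  exact IsIntegralClosure.isDedekindDomain k[X] (RatFunc k) L _

end IntegralClosure

theorem isDedekindDomain {k : Type*} [Field k] {S : k[X]} (hS : ¬ 3 ∣ S.natDegree)
    (h3 : (3 : k) ≠ 0) (hsq : Squarefree S) : IsDedekindDomain (PureCubic k[X] S) := by
  have : Fact (Irreducible (X ^ 3 - C (algebraMap k[X] (RatFunc k) S))) :=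
    ⟨X_pow_sub_C_irreducible_of_prime Nat.prime_three (ratFunc_pow_three_ne hS)⟩
  let L := AdjoinRoot (X ^ 3 - C (algebraMap k[X] (RatFunc k) S))
  refine isDedekindDomain_of_adjoin (L := L) hS (s := AdjoinRoot.root _) ?_
    (AdjoinRoot.adjoinRoot_eq_top) h3 hsq
  have := AdjoinRoot.eval₂_root (X ^ 3 - C (algebraMap k[X] (RatFunc k) S))
  rw [eval₂_sub, eval₂_pow, eval₂_X, eval₂_C, sub_eq_zero] at this
  exact this

end PureCubic

section IdealClass

variable {R : Type*} [CommRing R] [IsDedekindDomain R]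

open scoped nonZeroDivisors Classical in
/-- The class of an ideal, with junk value `0` at the zero ideal. -/
noncomputable def idealClass (I : Ideal R) : Additive (ClassGroup R) :=
  if h : I = ⊥ then 0 else
    Additive.ofMul (ClassGroup.mk0 ⟨I, mem_nonZeroDivisors_iff_ne_zero.2 h⟩)

theorem idealClass_of_ne {I : Ideal R} (h : I ≠ ⊥) : idealClass I =
    Additive.ofMul (ClassGroup.mk0 ⟨I, mem_nonZeroDivisors_iff_ne_zero.2 h⟩) :=
  dif_neg h

theorem idealClass_mul {I J : Ideal R} (hI : I ≠ ⊥) (hJ : J ≠ ⊥) :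
    idealClass (I * J) = idealClass I + idealClass J := by
  rw [idealClass_of_ne hI, idealClass_of_ne hJ,
    idealClass_of_ne (by simpa [Ideal.mul_eq_bot] using ⟨hI, hJ⟩), ← ofMul_mul, ← map_mul]
  rfl

theorem idealClass_eq_zero_iff {I : Ideal R} (hI : I ≠ ⊥) :
    idealClass I = 0 ↔ I.IsPrincipal := by
  rw [idealClass_of_ne hI, ← ClassGroup.mk0_eq_one_iff (mem_nonZeroDivisors_iff_ne_zero.2 hI)]
  exact Iff.rfl

theorem idealClass_one : idealClass (1 : Ideal R) = 0 :=
  (idealClass_eq_zero_iff (by simp)).2 ⟨1, by simp⟩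

theorem idealClass_pow {I : Ideal R} (hI : I ≠ ⊥) (n : ℕ) :
    idealClass (I ^ n) = n • idealClass I := by
  induction n with
  | zero => simpa using idealClass_one
  | succ n ih => rw [pow_succ, idealClass_mul (pow_ne_zero n hI) hI, ih, succ_nsmul]

theorem idealClass_span_singleton (x : R) : idealClass (Ideal.span {x}) = 0 := by
  by_cases h : Ideal.span {x} = ⊥
  · simp [idealClass, h]
  · exact (idealClass_eq_zero_iff h).2 ⟨x, rfl⟩

theorem exists_idealClass_eq (c : Additive (ClassGroup R)) : ∃ I : Ideal R, I ≠ ⊥ ∧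
    idealClass I = c := by
  obtain ⟨⟨I, hI⟩, h⟩ := ClassGroup.mk0_surjective c.toMul
  have hI' := mem_nonZeroDivisors_iff_ne_zero.1 hI
  exact ⟨I, hI', by rw [idealClass_of_ne hI', h]; rfl⟩

theorem idealClass_prod {ι : Type*} (s : Finset ι) (f : ι → Ideal R) (hf : ∀ i ∈ s, f i ≠ ⊥) :
    idealClass (∏ i ∈ s, f i) = ∑ i ∈ s, idealClass (f i) := by
  classical
  induction s using Finset.induction_on with
  | empty => simpa using idealClass_one
  | insert a s ha ih =>
    have h1 : ∏ i ∈ s, f i ≠ ⊥ := Finset.prod_ne_zero_iff.2 fun i hi =>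
      hf i (Finset.mem_insert_of_mem hi)
    rw [Finset.prod_insert ha, Finset.sum_insert ha,
      idealClass_mul (hf a (Finset.mem_insert_self _ _)) h1,
      ih fun i hi => hf i (Finset.mem_insert_of_mem hi)]

variable {R' : Type*} [CommRing R'] [IsDedekindDomain R']

theorem map_ne_bot_of_injective {f : R →+* R'} (hf : Function.Injective f) {I : Ideal R}
    (hI : I ≠ ⊥) : I.map f ≠ ⊥ :=
  (Ideal.map_eq_bot_iff_of_injective hf).not.2 hI

theorem exists_classMap (f : R →+* R') (hf : Function.Injective f) :
    ∃ g : Additive (ClassGroup R) →+ Additive (ClassGroup R'),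
      ∀ I : Ideal R, I ≠ ⊥ → g (idealClass I) = idealClass (I.map f) := by
  let : Algebra R R' := f.toAlgebra
  have : FaithfulSMul R R' := (faithfulSMul_iff_algebraMap_injective R R').2 hf
  have : Module.IsTorsionFree R R' := inferInstance
  refine ⟨MonoidHom.toAdditive (ClassGroup.extendedHom R R'), fun I hI => ?_⟩
  rw [idealClass_of_ne hI, idealClass_of_ne (map_ne_bot_of_injective hf hI)]
  exact congrArg Additive.ofMul (ClassGroup.extendedHom_mk0 R R' _)

/-- The homomorphism of class groups induced by an injective ring homomorphism. -/
noncomputable def classMap (f : R →+* R') (hf : Function.Injective f) :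
    Additive (ClassGroup R) →+ Additive (ClassGroup R') :=
  (exists_classMap f hf).choose

theorem classMap_idealClass (f : R →+* R') (hf : Function.Injective f) {I : Ideal R}
    (hI : I ≠ ⊥) : classMap f hf (idealClass I) = idealClass (I.map f) :=
  (exists_classMap f hf).choose_spec I hI

theorem coe_ringEquiv_injective (e : R ≃+* R') : Function.Injective (e : R →+* R') :=
  e.injective

/-- The action of ring automorphisms on the class group. -/
noncomputable def classAut : (R ≃+* R) →* AddMonoid.End (Additive (ClassGroup R)) where
  toFun e := classMap (e : R →+* R) (coe_ringEquiv_injective e)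
  map_one' := DFunLike.ext _ _ fun c => by
    obtain ⟨I, hI, rfl⟩ := exists_idealClass_eq c
    refine (classMap_idealClass _ (coe_ringEquiv_injective 1) hI).trans ?_
    exact congrArg idealClass (Ideal.map_id I)
  map_mul' e e' := DFunLike.ext _ _ fun c => by
    obtain ⟨I, hI, rfl⟩ := exists_idealClass_eq c
    have h : classMap (e : R →+* R) (coe_ringEquiv_injective e)
        (classMap (e' : R →+* R) (coe_ringEquiv_injective e') (idealClass I)) =
        idealClass (I.map ((e * e' : R ≃+* R) : R →+* R)) := by
      rw [classMap_idealClass _ _ hI,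
        classMap_idealClass _ _ (map_ne_bot_of_injective (coe_ringEquiv_injective e') hI),
        Ideal.map_map]
      rfl
    exact (classMap_idealClass _ (coe_ringEquiv_injective (e * e')) hI).trans h.symm

theorem classAut_idealClass (e : R ≃+* R) {I : Ideal R} (hI : I ≠ ⊥) :
    classAut e (idealClass I) = idealClass (I.map (e : R →+* R)) :=
  classMap_idealClass _ (coe_ringEquiv_injective e) hI

/-- Galois descent: the sum over a cyclic group of automorphisms of an ideal class comes from
the ring of invariants, provided the extension has a "dual basis". -/
theorem exists_classMap_eq_sum (f : R →+* R') (hf : Function.Injective f) (σ : R' ≃+* R')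
    {d : ℕ} (hd : 0 < d) (hσ : σ ^ d = 1) (hfix : ∀ x, σ x = x → ∃ y, f y = x)
    {J : Type*} (s : Finset J) (c e : J → R')
    (hce : ∀ r < d, ∑ j ∈ s, c j * (σ ^ r) (e j) = if r = 0 then 1 else 0)
    (x : Additive (ClassGroup R')) :
    ∃ y, classMap f hf y = ∑ r ∈ Finset.range d, (classAut σ ^ r) x := by
  obtain ⟨I, hI, rfl⟩ := exists_idealClass_eq x
  have hmap : ∀ e : R' ≃+* R', I.map (e : R' →+* R') ≠ ⊥ := fun e =>
    map_ne_bot_of_injective (coe_ringEquiv_injective e) hI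
  let P : Ideal R' := ∏ r ∈ Finset.range d, I.map ((σ ^ r : R' ≃+* R') : R' →+* R')
  have hP : P ≠ ⊥ := Finset.prod_ne_zero_iff.2 fun r _ => hmap _
  have hPσ : P.map (σ : R' →+* R') = P := by
    have h1 : P.map (σ : R' →+* R') =
        ∏ r ∈ Finset.range d, I.map ((σ ^ (r + 1) : R' ≃+* R') : R' →+* R') := by
      rw [← Ideal.mapHom_apply, map_prod]
      refine Finset.prod_congr rfl fun r _ => ?_
      rw [Ideal.mapHom_apply, Ideal.map_map, pow_succ']
      rfl
    have h2 := (Finset.prod_range_succ' (fun r => I.map ((σ ^ r : R' ≃+* R') : R' →+* R')) d).symm.trans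
      (Finset.prod_range_succ (fun r => I.map ((σ ^ r : R' ≃+* R') : R' →+* R')) d)
    rw [hσ, pow_zero] at h2
    rw [h1]
    exact mul_right_cancel₀ (hmap 1) h2
  have hmem : ∀ r x, x ∈ P → (σ ^ r) x ∈ P := by
    intro r
    induction r with
    | zero => intro x hx; simpa using hx
    | succ r ih =>
      intro x hx
      rw [pow_succ']
      have := Ideal.mem_map_of_mem (σ : R' →+* R') (ih x hx)
      rwa [hPσ] at this
  have hcomap : (P.comap f).map f = P := by
    refine le_antisymm Ideal.map_comap_le fun x hx => ?_
    have hx' : x = ∑ j ∈ s, c j * ∑ r ∈ Finset.range d, (σ ^ r) (e j * x) := by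
      simp_rw [Finset.mul_sum]
      rw [Finset.sum_comm]
      have : ∀ r ∈ Finset.range d, ∑ j ∈ s, c j * (σ ^ r) (e j * x) =
          if r = 0 then x else 0 := by
        intro r hr
        simp_rw [map_mul, ← mul_assoc]
        rw [← Finset.sum_mul, hce r (Finset.mem_range.1 hr)]
        split_ifs with h
        · subst h; simp
        · simp
      rw [Finset.sum_congr rfl this, Finset.sum_ite_eq' (Finset.range d) 0 (fun _ => x),
        if_pos (Finset.mem_range.2 hd)]
    rw [hx']
    refine Ideal.sum_mem _ fun j _ => Ideal.mul_mem_left _ _ ?_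
    have hmemj : ∑ r ∈ Finset.range d, (σ ^ r) (e j * x) ∈ P :=
      Ideal.sum_mem _ fun r _ => hmem r _ (P.mul_mem_left _ hx)
    have hfixj : σ (∑ r ∈ Finset.range d, (σ ^ r) (e j * x)) =
        ∑ r ∈ Finset.range d, (σ ^ r) (e j * x) := by
      have h2 := (Finset.sum_range_succ' (fun r => (σ ^ r) (e j * x)) d).symm.trans
        (Finset.sum_range_succ (fun r => (σ ^ r) (e j * x)) d)
      rw [hσ, pow_zero] at h2
      rw [map_sum, ← add_right_cancel h2]
      refine Finset.sum_congr rfl fun r _ => ?_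
      rw [pow_succ']
      rfl
    obtain ⟨y, hy⟩ := hfix _ hfixj
    rw [← hy] at hmemj ⊢
    exact Ideal.mem_map_of_mem f hmemj
  have hne : P.comap f ≠ ⊥ := by
    intro h
    rw [h, Ideal.map_bot] at hcomap
    exact hP hcomap.symm
  refine ⟨idealClass (P.comap f), ?_⟩
  rw [classMap_idealClass _ _ hne, hcomap, idealClass_prod _ _ fun r _ => hmap _]
  refine Finset.sum_congr rfl fun r _ => ?_
  rw [← map_pow, classAut_idealClass _ hI]

end IdealClass

theorem exists_separating_polynomial {E : Type*} [Field E] {d : ℕ} (t : ℕ → E)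
    (ht : ∀ r, 0 < r → r < d → t r ≠ t 0) :
    ∃ P : E[X], ∀ r < d, P.eval (t r) = if r = 0 then 1 else 0 := by
  classical
  refine ⟨∏ r ∈ (Finset.range d).erase 0, (C (t 0 - t r)⁻¹ * (X - C (t r))), fun r hr => ?_⟩
  rw [eval_prod]
  split_ifs with h
  · subst h
    refine Finset.prod_eq_one fun j hj => ?_
    simp only [Finset.mem_erase, Finset.mem_range] at hj
    simp only [eval_mul, eval_C, eval_sub, eval_X]
    exact inv_mul_cancel₀ (sub_ne_zero.2 (ht j (Nat.pos_of_ne_zero hj.1) hj.2).symm)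
  · exact Finset.prod_eq_zero (i := r) (by simp [h, hr]) (by simp)

section CyclicAction

variable {C : Type*} [AddCommGroup C] {G : Type*} [Group G] [DistribMulAction G C]
  {H : Type*} [AddCommGroup H]

theorem eq_zero_of_coprime_nsmul {K M : ℕ} (h : K.Coprime M) {x : C} (hK : K • x = 0)
    (hM : M • x = 0) : x = 0 := by
  have h1 := addOrderOf_dvd_of_nsmul_eq_zero hK
  have h2 := addOrderOf_dvd_of_nsmul_eq_zero hM
  have := Nat.eq_one_of_dvd_one (h ▸ Nat.dvd_gcd h1 h2)
  rwa [AddMonoid.addOrderOf_eq_one_iff] at this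

/-- A group generated by translations `T h`, a Frobenius `F` and a rotation `ω`, with the
relations between them. -/
structure CyclicAction (G H : Type*) [Group G] [AddCommGroup H] where
  /-- the Frobenius on translations -/
  φ : H →+ H
  /-- the translations -/
  T : H → G
  /-- the Frobenius -/
  F : G
  /-- the rotation -/
  ω : G
  /-- the order of `φ` -/
  n : ℕ
  n_pos : 0 < n
  iterate_φ : ∀ h, φ^[n] h = h
  T_add : ∀ a b, T (a + b) = T a * T b
  F_T : ∀ h, F * T h = T (φ h) * F
  ω_T : ∀ h, ω * T h = T h * ω
  F_ω : F * ω = ω ^ 2 * F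
  ω_pow : ω ^ 3 = 1

namespace CyclicAction

variable (A : CyclicAction G H)

theorem T_zero : A.T 0 = 1 := by
  have := A.T_add 0 0
  rw [add_zero] at this
  exact (mul_eq_left.1 this.symm)

theorem T_comm (a b : H) : A.T a * A.T b = A.T b * A.T a := by
  rw [← A.T_add, add_comm, A.T_add]

theorem F_pow_T (r : ℕ) (h : H) : A.F ^ r * A.T h = A.T (A.φ^[r] h) * A.F ^ r := by
  induction r generalizing h with
  | zero => simp
  | succ r ih =>
    rw [pow_succ, mul_assoc, A.F_T, ← mul_assoc, ih, Function.iterate_succ_apply, mul_assoc]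

theorem F_pow_odd_ω {r : ℕ} (hr : Odd r) : A.F ^ r * A.ω = A.ω ^ 2 * A.F ^ r := by
  obtain ⟨k, rfl⟩ := hr
  have h2 : A.F * A.ω ^ 2 = A.ω * A.F := by
    calc A.F * A.ω ^ 2 = A.F * A.ω * A.ω := by rw [pow_two, mul_assoc]
      _ = A.ω ^ 2 * (A.F * A.ω) := by rw [A.F_ω, mul_assoc, A.F_ω]
      _ = A.ω ^ 3 * A.ω * A.F := by rw [A.F_ω, ← mul_assoc, ← pow_succ, ← pow_add]
      _ = _ := by rw [A.ω_pow, one_mul]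
  induction k with
  | zero => simpa using A.F_ω
  | succ k ih =>
    rw [show 2 * (k + 1) + 1 = (2 * k + 1) + 1 + 1 by ring, pow_succ, pow_succ, mul_assoc, A.F_ω,
      mul_assoc, ← mul_assoc A.F, h2, mul_assoc, ← mul_assoc _ A.ω, ih]
    simp only [mul_assoc]

theorem F_pow_odd_ω_sq {A : CyclicAction G H} {r : ℕ} (hr : Odd r) : A.F ^ r * A.ω ^ 2 = A.ω * A.F ^ r := by
  calc A.F ^ r * A.ω ^ 2 = A.F ^ r * A.ω * A.ω := by rw [pow_two, mul_assoc]
    _ = A.ω ^ 2 * (A.F ^ r * A.ω) := by rw [A.F_pow_odd_ω hr, mul_assoc, A.F_pow_odd_ω hr]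
    _ = A.ω ^ 3 * A.ω * A.F ^ r := by
      rw [A.F_pow_odd_ω hr, ← mul_assoc, ← pow_succ, ← pow_add]
    _ = _ := by rw [A.ω_pow, one_mul]

theorem iterate_add (r : ℕ) (a b : H) : A.φ^[r] (a + b) = A.φ^[r] a + A.φ^[r] b :=
  iterate_map_add A.φ r a b

theorem iterate_sub (r : ℕ) (a b : H) : A.φ^[r] (a - b) = A.φ^[r] a - A.φ^[r] b :=
  iterate_map_sub A.φ r a b

theorem iterate_mul_n (c : ℕ) (h : H) : A.φ^[A.n * c] h = h := by
  rw [Function.iterate_mul]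
  exact Function.iterate_fixed (A.iterate_φ h) c

theorem iterate_mod (r : ℕ) (h : H) : A.φ^[r % A.n] h = A.φ^[r] h := by
  conv_rhs => rw [← Nat.mod_add_div r A.n, Function.iterate_add_apply, A.iterate_mul_n]

/-- `φ ^ r - 1`. -/
def δ (r : ℕ) (h : H) : H := A.φ^[r] h - h

theorem δ_add (r : ℕ) (a b : H) : A.δ r (a + b) = A.δ r a + A.δ r b := by
  rw [δ, δ, δ, iterate_add]; abel

theorem iterate_δ (r t : ℕ) (h : H) : A.φ^[r] (A.δ t h) = A.δ t (A.φ^[r] h) := by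
  rw [δ, δ, iterate_sub, ← Function.iterate_add_apply, ← Function.iterate_add_apply, add_comm]

theorem δ_mul (r c : ℕ) (h : H) : ∃ h', A.δ (r * c) h = A.δ r h' := by
  induction c with
  | zero => exact ⟨0, by simp [δ, iterate_map_zero]⟩
  | succ c ih =>
    obtain ⟨h', hh⟩ := ih
    refine ⟨h' + A.φ^[r * c] h, ?_⟩
    rw [δ_add, ← hh, δ, δ, δ, Nat.mul_succ, add_comm (r * c), Function.iterate_add_apply]
    abel

theorem exists_δ_eq {r t : ℕ} (hr : Nat.gcd r A.n ∣ t) (h : H) : ∃ h', A.δ t h = A.δ r h' := by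
  obtain ⟨c, hc⟩ : ∃ c, (r * c) % A.n = t % A.n := by
    obtain ⟨d, rfl⟩ := hr
    rcases Nat.lt_or_ge 1 A.n with h1 | h1
    · by_cases hg : Nat.gcd r A.n < A.n
      · obtain ⟨m, -, hm⟩ := Nat.exists_mul_mod_eq_gcd hg
        refine ⟨m * d, ?_⟩
        rw [← mul_assoc, Nat.mul_mod, hm, Nat.mul_mod_mod]
      · have : Nat.gcd r A.n = A.n :=
          le_antisymm (Nat.le_of_dvd A.n_pos (Nat.gcd_dvd_right _ _)) (not_lt.1 hg)
        exact ⟨0, by rw [this]; simp⟩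
    · have : A.n = 1 := le_antisymm h1 A.n_pos
      exact ⟨0, by rw [this, Nat.mod_one, Nat.mod_one]⟩
  obtain ⟨h', hh⟩ := A.δ_mul r c h
  refine ⟨h', ?_⟩
  rw [← hh, δ, δ, ← A.iterate_mod t, ← hc, A.iterate_mod]

/-- Invariance under the translations by the image of `φ ^ t - 1`. -/
def Inv (t : ℕ) (x : C) : Prop := ∀ h, A.T (A.δ t h) • x = x

variable {A}

theorem Inv.of_gcd {r t : ℕ} (hr : Nat.gcd r A.n ∣ t) {x : C} (hx : A.Inv r x) : A.Inv t x := by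
  intro h
  obtain ⟨h', hh⟩ := A.exists_δ_eq hr h
  rw [hh, hx]

theorem Inv.of_dvd {r t : ℕ} (hr : r ∣ t) {x : C} (hx : A.Inv r x) : A.Inv t x :=
  hx.of_gcd ((Nat.gcd_dvd_left _ _).trans hr)

theorem Inv.smul_of_comm {t : ℕ} {x : C} (hx : A.Inv t x) {g : G}
    (hg : ∀ h, g * A.T h = A.T h * g) : A.Inv t (g • x) := by
  intro h
  rw [← mul_smul, ← hg, mul_smul, hx]

theorem iterate_bijective (r : ℕ) : Function.Bijective (A.φ^[r]) := by
  have : Function.Bijective A.φ := by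
    refine Function.bijective_iff_has_inverse.2 ⟨A.φ^[A.n - 1], fun h => ?_, fun h => ?_⟩
    · rw [← Function.iterate_succ_apply, Nat.succ_eq_add_one, Nat.sub_add_cancel A.n_pos,
        A.iterate_φ]
    · rw [← Function.iterate_succ_apply' (f := A.φ), Nat.succ_eq_add_one,
        Nat.sub_add_cancel A.n_pos, A.iterate_φ]
  exact this.iterate r

theorem Inv.F_pow_smul {t : ℕ} {x : C} (hx : A.Inv t x) (r : ℕ) : A.Inv t (A.F ^ r • x) := by
  intro h
  obtain ⟨h', rfl⟩ := (iterate_bijective (A := A) r).2 h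
  rw [← iterate_δ, ← mul_smul, ← F_pow_T, mul_smul, hx]

theorem Inv.add {t : ℕ} {x y : C} (hx : A.Inv t x) (hy : A.Inv t y) : A.Inv t (x + y) :=
  fun h => by rw [smul_add, hx, hy]

theorem Inv.sub {t : ℕ} {x y : C} (hx : A.Inv t x) (hy : A.Inv t y) : A.Inv t (x - y) :=
  fun h => by rw [smul_sub, hx, hy]

theorem Inv.nsmul {t : ℕ} {x : C} (hx : A.Inv t x) (k : ℕ) : A.Inv t (k • x) :=
  fun h => by rw [smul_comm, hx]

theorem Inv.sum {ι : Type*} {t : ℕ} {s : Finset ι} {f : ι → C} (hx : ∀ i ∈ s, A.Inv t (f i)) :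
    A.Inv t (∑ i ∈ s, f i) :=
  fun h => by rw [Finset.smul_sum]; exact Finset.sum_congr rfl fun i hi => hx i hi h

variable [Fintype H] (A)

/-- The sum over the translations by the image of `φ ^ t - 1` (with multiplicity). -/
def Nm (t : ℕ) : C →+ C where
  toFun x := ∑ h, A.T (A.δ t h) • x
  map_zero' := by simp
  map_add' x y := by simp [Finset.sum_add_distrib]

theorem Nm_apply (t : ℕ) (x : C) : A.Nm t x = ∑ h, A.T (A.δ t h) • x := rfl

theorem Inv_Nm (t : ℕ) (x : C) : A.Inv t (A.Nm t x) := by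
  intro h
  rw [Nm_apply, Finset.smul_sum]
  refine Fintype.sum_equiv (Equiv.addLeft h) _ _ fun h' => ?_
  rw [← mul_smul, ← A.T_add, Equiv.coe_addLeft, δ_add]

variable {A}

theorem Inv.Nm_eq {t : ℕ} {x : C} (hx : A.Inv t x) : A.Nm t x = Fintype.card H • x := by
  rw [Nm_apply, Finset.sum_congr rfl fun h _ => hx h]
  simp

theorem Nm_smul_of_comm (t : ℕ) (x : C) {g : G} (hg : ∀ h, g * A.T h = A.T h * g) :
    A.Nm t (g • x) = g • A.Nm t x := by
  simp_rw [Nm_apply, Finset.smul_sum, ← mul_smul, hg]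

theorem Nm_F_pow (t r : ℕ) (x : C) : A.Nm t (A.F ^ r • x) = A.F ^ r • A.Nm t x := by
  rw [Nm_apply, Nm_apply, Finset.smul_sum]
  refine (Fintype.sum_bijective _ (iterate_bijective (A := A) r) _ _ fun h => ?_).symm
  rw [← mul_smul, ← mul_smul, F_pow_T, iterate_δ]

theorem nsmul_add_F_pow_smul_eq_zero {t u R M k : ℕ} (hK : (Fintype.card H).Coprime M)
    (hR : R = 2 * u) (hu : 0 < u) (ht : ∀ r, 0 < r → r < R → r ≠ u → Nat.gcd r A.n ∣ t)
    {w : C} (hw : A.Inv u w) (hNw : A.Nm t w = 0) (hM : M • w = 0)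
    (hk : ∀ h, k • ∑ r ∈ Finset.range R, A.F ^ r • A.T h • w = 0) :
    k • (w + A.F ^ u • w) = 0 := by
  let Y : ℕ → C := fun r => ∑ h, A.T (A.δ r h) • A.F ^ r • w
  have hY : ∀ r, 0 < r → r < R → r ≠ u → Y r = 0 := by
    intro r h0 hr hru
    have hinv : A.Inv r (Y r) := A.Inv_Nm r (A.F ^ r • w)
    have h1 : A.Nm t (Y r) = 0 := by
      have : ∀ h, A.Nm t (A.T (A.δ r h) • A.F ^ r • w) = 0 := fun h => by
        rw [Nm_smul_of_comm _ _ (fun h' => A.T_comm _ _), Nm_F_pow, hNw, smul_zero, smul_zero]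
      rw [map_sum, Finset.sum_congr rfl fun h _ => this h, Finset.sum_const_zero]
    rw [(hinv.of_gcd (ht r h0 hr hru)).Nm_eq] at h1
    refine eq_zero_of_coprime_nsmul hK h1 ?_
    simp only [Y, Finset.smul_sum]
    refine Finset.sum_eq_zero fun h _ => ?_
    rw [smul_comm, smul_comm M, hM, smul_zero, smul_zero]
  have hsum : k • ∑ r ∈ Finset.range R, Y r = 0 := by
    have : ∀ h, k • ∑ r ∈ Finset.range R, A.T (A.δ r h) • A.F ^ r • w = 0 := by
      intro h
      have h1 := congrArg (A.T (-h) • ·) (hk h)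
      simp only [smul_zero] at h1
      rw [smul_comm, Finset.smul_sum] at h1
      rw [← h1]
      refine congrArg (k • ·) (Finset.sum_congr rfl fun r _ => ?_)
      rw [← mul_smul (A.F ^ r), F_pow_T, ← mul_smul, ← mul_smul, ← mul_assoc, ← A.T_add, δ,
        sub_eq_neg_add]
    simp only [Y]
    rw [Finset.sum_comm, Finset.smul_sum]
    exact Finset.sum_eq_zero fun h _ => this h
  have hY0 : Y 0 = Fintype.card H • w := by
    simp [Y, δ, T_zero]
  have hYu : Y u = Fintype.card H • (A.F ^ u • w) := (hw.F_pow_smul u).Nm_eq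
  have hYsum : ∑ r ∈ Finset.range R, Y r = Y 0 + Y u := by
    rw [← Finset.sum_pair hu.ne]
    symm
    refine Finset.sum_subset (fun r hr => ?_) fun r hr hr' => ?_
    · simp only [Finset.mem_insert, Finset.mem_singleton] at hr
      rw [Finset.mem_range]; omega
    · simp only [Finset.mem_insert, Finset.mem_singleton, not_or] at hr'
      exact hY r (by omega) (Finset.mem_range.1 hr) hr'.2
  rw [hYsum, hY0, hYu, ← smul_add, smul_comm] at hsum
  refine eq_zero_of_coprime_nsmul hK hsum ?_
  rw [smul_comm, smul_add, smul_comm M (A.F ^ u), hM]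
  simp

/-- The elements killed by the coarser translation norm at a given level. -/
structure Level (A : CyclicAction G H) (t u M : ℕ) (w : C) : Prop where
  inv : A.Inv u w
  nm : A.Nm t w = 0
  frob : A.F ^ (2 * u) • w = w
  tors : M • w = 0

theorem Level.smul_of_comm {t u M : ℕ} {w : C} (hw : Level A t u M w) {g : G}
    (hg : ∀ h, g * A.T h = A.T h * g) (hF : A.F ^ (2 * u) • g • w = g • A.F ^ (2 * u) • w) :
    Level A t u M (g • w) where
  inv := hw.inv.smul_of_comm hg
  nm := by rw [Nm_smul_of_comm _ _ hg, hw.nm, smul_zero]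
  frob := by rw [hF, hw.frob]
  tors := by rw [smul_comm, hw.tors, smul_zero]

theorem Level.T_smul {t u M : ℕ} {w : C} (hw : Level A t u M w) (h : H) :
    Level A t u M (A.T h • w) := by
  refine hw.smul_of_comm (fun h' => A.T_comm _ _) ?_
  have h1 : A.φ^[2 * u] h = A.δ u (A.φ^[u] h + h) + h := by
    rw [δ_add, δ, δ, two_mul, Function.iterate_add_apply]; abel
  rw [← mul_smul, F_pow_T, h1, A.T_add, mul_smul, mul_smul, hw.frob]
  exact (hw.inv.smul_of_comm fun h' => A.T_comm _ _) _

theorem Level.F_pow_smul {t u M : ℕ} {w : C} (hw : Level A t u M w) (r : ℕ) :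
    Level A t u M (A.F ^ r • w) where
  inv := hw.inv.F_pow_smul r
  nm := by rw [Nm_F_pow, hw.nm, smul_zero]
  frob := by rw [← mul_smul, ← pow_add, add_comm, pow_add, mul_smul, hw.frob]
  tors := by rw [smul_comm, hw.tors, smul_zero]

theorem Level.ω_smul {t u M : ℕ} {w : C} (hw : Level A t u M w) (hu : Odd u) :
    Level A t u M (A.ω • w) := by
  refine hw.smul_of_comm A.ω_T ?_
  rw [← mul_smul, ← mul_smul, two_mul, pow_add, mul_assoc, A.F_pow_odd_ω hu, ← mul_assoc,
    F_pow_odd_ω_sq hu, mul_assoc]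

theorem Level.nsmul_ω_smul_sub_eq_zero {t u M k : ℕ} (hK : (Fintype.card H).Coprime M)
    (hu : Odd u) (ht : ∀ r, 0 < r → r < 2 * u → r ≠ u → Nat.gcd r A.n ∣ t)
    (hk : ∀ w : C, Level A t u M w → k • ∑ r ∈ Finset.range (2 * u), A.F ^ r • w = 0)
    {w : C} (hw : Level A t u M w) : k • (A.ω • w - w) = 0 := by
  have key : ∀ w : C, Level A t u M w → k • (w + A.F ^ u • w) = 0 := fun w hw =>
    nsmul_add_F_pow_smul_eq_zero hK rfl hu.pos ht hw.inv hw.nm hw.tors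
      fun h => hk _ (hw.T_smul h)
  have hv := hw.F_pow_smul u
  have hFF : A.F ^ u • A.F ^ u • w = w := by
    rw [← mul_smul, ← pow_add, ← two_mul, hw.frob]
  have e1 := key _ hv
  have e2 := key _ (hv.ω_smul hu)
  rw [hFF] at e1
  rw [← mul_smul (A.F ^ u) A.ω, A.F_pow_odd_ω hu, mul_smul, hFF] at e2
  have e3 := congrArg (A.ω • ·) e1
  simp only [smul_zero] at e3
  rw [smul_comm, smul_add] at e3
  have e4 : k • (A.ω ^ 2 • w - A.ω • w) = 0 := by
    have : A.ω ^ 2 • w - A.ω • w = (A.ω • A.F ^ u • w + A.ω ^ 2 • w) -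
      (A.ω • A.F ^ u • w + A.ω • w) := by abel
    rw [this, smul_sub, e2, e3, sub_zero]
  have e5 := congrArg (A.ω ^ 2 • ·) e4
  simp only [smul_zero] at e5
  rw [smul_comm, smul_sub, ← mul_smul, ← mul_smul, ← pow_add, ← pow_succ, A.ω_pow,
    show 2 + 2 = 3 + 1 from rfl, pow_succ, A.ω_pow, one_mul, one_smul] at e5
  exact e5

theorem inv_nsmul_ω_smul_sub {t u M k : ℕ} (hK : (Fintype.card H).Coprime M)
    (hu : Odd u) (ht : ∀ r, 0 < r → r < 2 * u → r ≠ u → Nat.gcd r A.n ∣ t)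
    (hk : ∀ w : C, Level A t u M w → k • ∑ r ∈ Finset.range (2 * u), A.F ^ r • w = 0)
    {x : C} (hx : A.Inv u x) (hF : A.F ^ (2 * u) • x = x) (hM : M • x = 0) :
    A.Inv t (k • (A.ω • x - x)) := by
  have hT : ∀ h, A.T h • A.Nm t x = A.Nm t (A.T h • x) := fun h =>
    (Nm_smul_of_comm _ _ fun _ => A.T_comm _ _).symm
  have hw : Level A t u M (Fintype.card H • x - A.Nm t x) := by
    refine ⟨(hx.nsmul _).sub fun h => ?_, ?_, ?_, ?_⟩
    · rw [hT, hx]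
    · rw [map_sub, map_nsmul, (A.Inv_Nm t x).Nm_eq, sub_self]
    · rw [smul_sub, ← Nm_F_pow, smul_comm, hF]
    · rw [smul_sub, smul_comm, hM, smul_zero, ← map_nsmul, hM, map_zero, sub_zero]
  have h1 := hw.nsmul_ω_smul_sub_eq_zero hK hu ht hk
  have h2 : Fintype.card H • (k • (A.ω • x - x)) = A.Nm t (k • (A.ω • x - x)) := by
    rw [← sub_eq_zero, ← h1, map_nsmul, map_sub, Nm_smul_of_comm _ _ A.ω_T, smul_sub A.ω,
      smul_comm A.ω, smul_comm (Fintype.card H) k, ← smul_sub]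
    congr 1
    rw [smul_sub]; abel
  intro h
  refine sub_eq_zero.1 (eq_zero_of_coprime_nsmul hK ?_ ?_)
  · rw [smul_sub, ← smul_comm (A.T _), h2, A.Inv_Nm t _ h, sub_self]
  · have : M • (k • (A.ω • x - x)) = 0 := by
      rw [smul_comm, smul_sub, smul_comm, hM, smul_zero, sub_zero, smul_zero]
    rw [smul_sub, ← smul_comm (A.T _), this, smul_zero, sub_zero]

end CyclicAction

end CyclicAction

theorem Nat.Prime.pow_mul_dvd_of_factorization_le {l : ℕ} (hl : l.Prime) {e M j : ℕ}
    (he : e ∣ M) (hM : M ≠ 0) (h : e.factorization l + j ≤ M.factorization l) :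
    l ^ j * e ∣ M := by
  have he0 : e ≠ 0 := ne_zero_of_dvd_ne_zero hM he
  have hl0 : l ^ j ≠ 0 := pow_ne_zero _ hl.ne_zero
  rw [← Nat.factorization_prime_le_iff_dvd (mul_ne_zero hl0 he0) hM]
  intro p hp
  rw [Nat.factorization_mul hl0 he0, hl.factorization_pow, Finsupp.add_apply,
    Finsupp.single_apply]
  split_ifs with hlp
  · subst hlp; omega
  · rw [zero_add]
    exact (Nat.factorization_le_iff_dvd he0 hM).2 he p

theorem add_one_dvd_pow_three_pow_add_one (q i : ℕ) : q + 1 ∣ q ^ 3 ^ i + 1 := by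
  simpa using Odd.nat_add_dvd_pow_add_pow q 1 (Odd.pow (by decide : Odd 3) : Odd (3 ^ i))

theorem three_pow_mul_dvd_pow_three_pow_add_one {q : ℕ} (hq : 3 ∣ q + 1) (i : ℕ) :
    3 ^ i * (q + 1) ∣ q ^ 3 ^ i + 1 := by
  induction i with
  | zero => simp
  | succ i ih =>
    have h3 := hq.trans (add_one_dvd_pow_three_pow_add_one q i)
    rw [pow_succ 3 i, pow_mul]
    generalize q ^ 3 ^ i = a at *
    obtain ⟨b, rfl⟩ : ∃ b, a = 3 * b + 2 := ⟨a / 3, by omega⟩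
    obtain ⟨c, hc⟩ := ih
    refine ⟨c * (3 * b ^ 2 + 3 * b + 1), ?_⟩
    calc (3 * b + 2) ^ 3 + 1 = (3 * b + 2 + 1) * 3 * (3 * b ^ 2 + 3 * b + 1) := by ring
      _ = _ := by rw [hc]; ring

theorem nine_mul_dvd_of_factorization_lt {q i n' m e : ℕ} (hq : 3 ∣ q + 1) (hi : n' + 1 ≤ 2 * i)
    (hin : i ≤ n') (hm : m ∣ q + 1) (he : e ∣ q ^ 3 ^ i + 1)
    (hlt : e.factorization 3 < m.factorization 3) :
    9 * (e * 3 ^ (n' - i)) ∣ q ^ 3 ^ i + 1 := by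
  have h1 : m.factorization 3 ≤ (q + 1).factorization 3 :=
    (Nat.factorization_le_iff_dvd (ne_zero_of_dvd_ne_zero (Nat.succ_ne_zero q) hm)
      (Nat.succ_ne_zero q)).2 hm 3
  have h2 : i + (q + 1).factorization 3 ≤ (q ^ 3 ^ i + 1).factorization 3 := by
    have := (Nat.factorization_le_iff_dvd (by positivity) (Nat.succ_ne_zero _)).2
      (three_pow_mul_dvd_pow_three_pow_add_one hq i) 3
    rwa [Nat.factorization_mul (by positivity) (Nat.succ_ne_zero q),
      Nat.prime_three.factorization_pow, Finsupp.add_apply, Finsupp.single_eq_same] at this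
  have := Nat.prime_three.pow_mul_dvd_of_factorization_le (j := 2 + (n' - i)) he
    (Nat.succ_ne_zero _) (by omega)
  rw [pow_add] at this
  convert this using 1
  ring

namespace CyclicAction

variable {C : Type*} [AddCommGroup C] {G : Type*} [Group G] [DistribMulAction G C]
  {H : Type*} [AddCommGroup H] [Fintype H] (A : CyclicAction G H)

/-- The elements of a given level form a subgroup. -/
def levelSubgroup (C : Type*) [AddCommGroup C] [DistribMulAction G C] (t u M : ℕ) :
    AddSubgroup C where
  carrier := {w | Level A t u M w}
  zero_mem' := ⟨fun _ => smul_zero _, map_zero _, smul_zero _, smul_zero _⟩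
  add_mem' {x y} hx hy := ⟨hx.inv.add hy.inv, by rw [map_add, hx.nm, hy.nm, add_zero],
    by rw [smul_add, hx.frob, hy.frob], by rw [smul_add, hx.tors, hy.tors, add_zero]⟩
  neg_mem' {x} hx := ⟨fun h => by rw [smul_neg, hx.inv], by rw [map_neg, hx.nm, neg_zero],
    by rw [smul_neg, hx.frob], by rw [smul_neg, hx.tors, neg_zero]⟩

/-- The trace for `F`. -/
def tr (C : Type*) [AddCommGroup C] [DistribMulAction G C] (R : ℕ) : C →+ C where
  toFun w := ∑ r ∈ Finset.range R, A.F ^ r • w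
  map_zero' := by simp
  map_add' x y := by simp [Finset.sum_add_distrib]

theorem tr_mul {R : ℕ} {w : C} (hw : A.F ^ R • w = w) (c : ℕ) :
    A.tr C (R * c) w = c • A.tr C R w := by
  have hfix : ∀ c, A.F ^ (R * c) • w = w := fun c => by
    induction c with
    | zero => simp
    | succ c ih => rw [Nat.mul_succ, pow_add, mul_smul, hw, ih]
  induction c with
  | zero => simp [tr]
  | succ c ih =>
    have : A.tr C (R * c + R) w = A.tr C (R * c) w + A.tr C R w := by
      simp only [tr, AddMonoidHom.coe_mk, ZeroHom.coe_mk]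
      rw [Finset.sum_range_add]
      refine congrArg _ (Finset.sum_congr rfl fun r _ => ?_)
      rw [add_comm, pow_add, mul_smul, hfix]
    rw [Nat.mul_succ, this, ih, succ_nsmul]

theorem exists_addOrderOf_tr_eq {q i n' m : ℕ} (hq : 3 ∣ q + 1) (hm : m ∣ q + 1)
    (hi0 : 0 < i) (hi : n' + 1 ≤ 2 * i) (hin : i ≤ n') (hn : A.n = 3 ^ n')
    (hK : (Fintype.card H).Coprime (q ^ 3 ^ i + 1))
    {x : C} (hx : A.Inv (3 ^ i) x) (hF : A.F ^ (2 * 3 ^ i) • x = x)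
    (hM : (q ^ 3 ^ i + 1) • x = 0)
    (hgeom : ∀ k, 0 < k → (9 * k ∣ q ^ 3 ^ i + 1 ∨
      ∃ l, l.Prime ∧ l ≠ 3 ∧ l * k = q ^ 3 ^ i + 1) →
      ¬ A.Inv (3 ^ (i - 1)) (k • (A.ω • x - x))) :
    ∃ w : C, Level A (3 ^ (i - 1)) (3 ^ i) (q ^ 3 ^ i + 1) w ∧
      addOrderOf (A.tr C (2 * A.n) w) = m := by
  set M := q ^ 3 ^ i + 1 with hMdef
  have hm0 : m ≠ 0 := by rintro rfl; simp at hm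
  have hmM : m ∣ M := hm.trans (add_one_dvd_pow_three_pow_add_one q i)
  let W := A.levelSubgroup C (3 ^ (i - 1)) (3 ^ i) M
  let Y := W.map (A.tr C (2 * A.n))
  have hu : Odd (3 ^ i) := Odd.pow (by decide)
  have htr : ∀ w, Level A (3 ^ (i - 1)) (3 ^ i) M w →
      A.tr C (2 * A.n) w = 3 ^ (n' - i) • A.tr C (2 * 3 ^ i) w := fun w hw => by
    rw [hn, ← tr_mul A hw.frob, mul_assoc, ← pow_add, Nat.add_sub_cancel' hin]
  have hYM : ∀ y : Y, M • y = 0 := by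
    rintro ⟨_, w, hw, rfl⟩
    refine Subtype.ext ?_
    change M • A.tr C (2 * A.n) w = 0
    rw [← map_nsmul, Level.tors hw, map_zero]
  have hkill : ∀ k, 0 < k → (9 * k ∣ M ∨ ∃ l, l.Prime ∧ l ≠ 3 ∧ l * k = M) →
      ¬ ∀ w, Level A (3 ^ (i - 1)) (3 ^ i) M w → k • A.tr C (2 * 3 ^ i) w = 0 := by
    intro k hk0 hk hall
    refine hgeom k hk0 hk (inv_nsmul_ω_smul_sub hK hu (fun r h0 hr hru => ?_) hall hx hF hM)
    rw [hn]
    obtain ⟨v, hv, hg⟩ := (Nat.dvd_prime_pow Nat.prime_three).1 (Nat.gcd_dvd_right r (3 ^ n'))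
    rw [hg]
    refine pow_dvd_pow 3 ?_
    by_contra hlt
    have h3 : 3 ^ i ∣ r := (pow_dvd_pow 3 (by omega)).trans (hg ▸ Nat.gcd_dvd_left r (3 ^ n'))
    obtain ⟨c, rfl⟩ := h3
    have hpos : 0 < 3 ^ i := by positivity
    have : c = 1 := by
      have h1 : c ≠ 0 := by rintro rfl; simp at h0
      have h2 : c < 2 := by
        rw [mul_comm 2] at hr
        exact lt_of_mul_lt_mul_left hr hpos.le
      omega
    subst this
    simp at hru
  have hexp : AddMonoid.ExponentExists Y := ⟨M, by omega, hYM⟩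
  obtain ⟨y, hy⟩ := AddMonoid.exists_addOrderOf_eq_exponent hexp
  have he0 : AddMonoid.exponent Y ≠ 0 := AddMonoid.exponent_ne_zero.2 hexp
  have heM : AddMonoid.exponent Y ∣ M := AddMonoid.exponent_dvd_of_forall_nsmul_eq_zero hYM
  have heY : ∀ w, Level A (3 ^ (i - 1)) (3 ^ i) M w →
      (AddMonoid.exponent Y * 3 ^ (n' - i)) • A.tr C (2 * 3 ^ i) w = 0 := by
    intro w hw
    rw [mul_smul, ← htr w hw]
    have := AddMonoid.exponent_nsmul_eq_zero (⟨_, w, hw, rfl⟩ : Y)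
    exact congrArg Subtype.val this
  generalize AddMonoid.exponent Y = e at *
  have hme : m ∣ e := by
    by_contra hnot
    rw [← Nat.factorization_prime_le_iff_dvd hm0 he0] at hnot
    push Not at hnot
    obtain ⟨l, hl, hlt⟩ := hnot
    by_cases hl3 : l = 3
    · subst hl3
      exact hkill (e * 3 ^ (n' - i)) (by positivity)
        (Or.inl (nine_mul_dvd_of_factorization_lt hq hi hin hm heM hlt)) heY
    · have hle : l * e ∣ M := by
        have h1 := (Nat.factorization_le_iff_dvd hm0 (Nat.succ_ne_zero _)).2 hmM l
        simpa using hl.pow_mul_dvd_of_factorization_le (j := 1) heM (Nat.succ_ne_zero _)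
          ((Nat.succ_le_of_lt hlt).trans h1)
      obtain ⟨c, hc⟩ := hle
      refine hkill (e * c) ?_ (Or.inr ⟨l, hl, hl3, by rw [hc, mul_assoc]⟩) fun w hw => ?_
      · refine Nat.pos_of_ne_zero fun h => ?_
        rw [mul_assoc, h, mul_zero] at hc
        omega
      · have h1 : (3 ^ (n' - i)).Coprime l :=
          Nat.Coprime.pow_left _ ((Nat.coprime_primes Nat.prime_three hl).2 (Ne.symm hl3))
        refine eq_zero_of_coprime_nsmul h1 ?_ ?_
        · have := congrArg (c • ·) (heY w hw)
          simp only [smul_zero, ← mul_smul] at this ⊢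
          rw [← this]; congr 1; ring
        · rw [← mul_smul, ← mul_assoc, ← hc, ← map_nsmul, hw.tors, map_zero]
  obtain ⟨c, rfl⟩ := hme
  obtain ⟨_, w, hw, rfl⟩ := y
  refine ⟨c • w, W.nsmul_mem hw c, ?_⟩
  rw [map_nsmul]
  have h2 : addOrderOf (A.tr C (2 * A.n) w) = m * c := by
    rw [← hy]; exact (AddSubgroup.addOrderOf_coe (⟨_, w, hw, rfl⟩ : Y))
  have hc0 : c ≠ 0 := by rintro rfl; simp at he0
  rw [addOrderOf_nsmul' _ hc0, h2, Nat.gcd_eq_right (dvd_mul_left c m),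
    Nat.mul_div_cancel _ (Nat.pos_of_ne_zero hc0)]

end CyclicAction

/-- A finite abelian group containing elements whose relations are all divisible by `m` contains
`(ℤ / m) ^ N`. -/
theorem exists_injective_pi_zmod {B : Type*} [AddCommGroup B] [Finite B] {N m : ℕ}
    (b : Fin N → B) (hb : ∀ e : Fin N → ℤ, ∑ i, e i • b i = 0 → ∀ i, (m : ℤ) ∣ e i) :
    ∃ f : (Fin N → ZMod m) →+ B, Function.Injective f := by
  let g : (Fin N → ℤ) →ₗ[ℤ] B := Fintype.linearCombination ℤ b
  have hg : ∀ e, g e = ∑ i, e i • b i := fun e => Fintype.linearCombination_apply ℤ b e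
  have hκ : (Nat.card B : ℤ) ≠ 0 := by exact_mod_cast Nat.card_pos.ne'
  have hfin : Module.finrank ℤ (LinearMap.ker g) = N := by
    apply le_antisymm
    · simpa using Submodule.finrank_le (LinearMap.ker g)
    · let j : (Fin N → ℤ) →ₗ[ℤ] LinearMap.ker g :=
        LinearMap.codRestrict _ ((Nat.card B : ℤ) • LinearMap.id) fun e => by
          rw [LinearMap.mem_ker, LinearMap.smul_apply, map_smul, natCast_zsmul]
          exact card_nsmul_eq_zero'
      have hj : Function.Injective j := fun x y hxy => by
        have := congrArg Subtype.val hxy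
        exact smul_right_injective _ hκ this
      simpa using LinearMap.finrank_le_finrank_of_injective hj
  let Λ : Module.Basis (Fin N) ℤ (LinearMap.ker g) := Module.finBasisOfFinrankEq ℤ _ hfin
  have hΛ : ∀ j, ∃ μ : Fin N → ℤ, (m : ℤ) • μ = Λ j := fun j => by
    have := hb (Λ j) (by rw [← hg]; exact (Λ j).2)
    choose μ hμ using this
    exact ⟨μ, funext fun i => (hμ i).symm⟩
  choose μ hμ using hΛ
  have hmμ : ∀ j, (m : ℤ) • g (μ j) = 0 := fun j => by
    rw [← map_smul, hμ]; exact (Λ j).2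
  let f : ∀ j : Fin N, ZMod m →+ B := fun j =>
    ZMod.lift m ⟨(zmultiplesHom B) (g (μ j)), by
      rw [zmultiplesHom_apply]; exact hmμ j⟩
  have hf : ∀ j (c : ℤ), f j (c : ZMod m) = c • g (μ j) := fun j c => by
    simp only [f, ZMod.lift_coe, zmultiplesHom_apply]
  refine ⟨∑ j, (f j).comp (Pi.evalAddMonoidHom (fun _ => ZMod m) j), ?_⟩
  rw [injective_iff_map_eq_zero]
  intro a ha
  obtain ⟨c, rfl⟩ : ∃ c : Fin N → ℤ, a = fun j => (c j : ZMod m) := by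
    choose c hc using fun j => ZMod.intCast_surjective (a j)
    exact ⟨c, funext fun j => (hc j).symm⟩
  have h1 : ∑ j, c j • μ j ∈ LinearMap.ker g := by
    rw [LinearMap.mem_ker, map_sum]
    simp only [AddMonoidHom.finsetSum_apply, AddMonoidHom.comp_apply, Pi.evalAddMonoidHom_apply, hf]
      at ha
    simpa only [map_smul] using ha
  have h2 : ∑ j, c j • Λ j = (m : ℤ) • (⟨_, h1⟩ : LinearMap.ker g) := by
    apply Subtype.ext
    rw [Submodule.coe_sum]
    simp only [Submodule.coe_smul, ← hμ, Finset.smul_sum]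
    exact Finset.sum_congr rfl fun j _ => smul_comm _ _ _
  funext j
  have h3 := congrArg (fun v => Λ.repr v j) h2
  simp only [Λ.repr_sum_self, map_smul, Finsupp.smul_apply, smul_eq_mul] at h3
  rw [Pi.zero_apply, ZMod.intCast_zmod_eq_zero_iff_dvd]
  exact ⟨_, h3⟩

namespace CyclicAction

variable {C : Type*} [AddCommGroup C] {G : Type*} [Group G] [DistribMulAction G C]
  {H : Type*} [AddCommGroup H] [Fintype H] (A : CyclicAction G H)

theorem tr_apply (R : ℕ) (w : C) : A.tr C R w = ∑ r ∈ Finset.range R, A.F ^ r • w := rfl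

theorem Inv.tr {A : CyclicAction G H} {t : ℕ} {w : C} (hw : A.Inv t w) (R : ℕ) :
    A.Inv t (A.tr C R w) := by
  rw [tr_apply]
  exact Inv.sum fun r _ => hw.F_pow_smul r

theorem Nm_tr (t R : ℕ) (w : C) : A.Nm t (A.tr C R w) = A.tr C R (A.Nm t w) := by
  simp only [CyclicAction.tr, AddMonoidHom.coe_mk, ZeroHom.coe_mk, map_sum, Nm_F_pow]

/-- Classes of order `m` on distinct levels are independent modulo `m`. -/
theorem dvd_of_sum_zsmul_eq_zero {m N s : ℕ} (hK : (Fintype.card H).Coprime m) (y : ℕ → C)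
    (hinv : ∀ i < N, A.Inv (3 ^ (s + i + 1)) (y i)) (hnm : ∀ i < N, A.Nm (3 ^ (s + i)) (y i) = 0)
    (hord : ∀ i < N, addOrderOf (y i) = m) (e : ℕ → ℤ)
    (h : ∑ i ∈ Finset.range N, e i • y i = 0) : ∀ i < N, (m : ℤ) ∣ e i := by
  induction N with
  | zero => intro i hi; omega
  | succ N ih =>
    have h0 : ∑ i ∈ Finset.range N, e i • y i = 0 := by
      refine eq_zero_of_coprime_nsmul hK ?_ ?_
      · have := congrArg (A.Nm (3 ^ (s + N))) h
        rw [Finset.sum_range_succ, map_add, map_zsmul, hnm N (by omega), smul_zero, add_zero,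
          map_zero] at this
        rw [← this]
        refine (Inv.Nm_eq ?_).symm
        refine Inv.sum fun i hi h => ?_
        rw [Finset.mem_range] at hi
        have h1 : A.Inv (3 ^ (s + N)) (y i) :=
          (hinv i (by omega)).of_dvd (pow_dvd_pow 3 (by omega))
        rw [smul_comm, h1]
      · rw [Finset.smul_sum]
        refine Finset.sum_eq_zero fun i hi => ?_
        rw [smul_comm, ← hord i (by rw [Finset.mem_range] at hi; omega), addOrderOf_nsmul_eq_zero,
          smul_zero]
    intro i hi
    rcases Nat.lt_succ_iff_lt_or_eq.1 hi with hi | rfl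
    · exact ih (fun i hi => hinv i (by omega)) (fun i hi => hnm i (by omega))
        (fun i hi => hord i (by omega)) h0 i hi
    · rw [Finset.sum_range_succ, h0, zero_add] at h
      rw [← hord i hi]
      exact addOrderOf_dvd_iff_zsmul_eq_zero.2 h

/-- Independent classes from a range of levels that descend along `π` give a copy of
`(ℤ / m) ^ N`. -/
theorem exists_injective_pi_zmod {B : Type*} [AddCommGroup B] [Finite B] (π : B →+ C)
    {q N m : ℕ} (hq : 3 ∣ q + 1) (hm : m ∣ q + 1) (hn : A.n = 3 ^ (2 * N))
    (hK : ∀ i, (Fintype.card H).Coprime (q ^ 3 ^ i + 1))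
    (hπ : ∀ w, ∃ b, π b = A.tr C (2 * A.n) w)
    (hx : ∀ i, N < i → i ≤ 2 * N → ∃ x : C, A.Inv (3 ^ i) x ∧ A.F ^ (2 * 3 ^ i) • x = x ∧
      (q ^ 3 ^ i + 1) • x = 0 ∧ ∀ k, 0 < k → (9 * k ∣ q ^ 3 ^ i + 1 ∨
      ∃ l, l.Prime ∧ l ≠ 3 ∧ l * k = q ^ 3 ^ i + 1) →
      ¬ A.Inv (3 ^ (i - 1)) (k • (A.ω • x - x))) :
    ∃ f : (Fin N → ZMod m) →+ B, Function.Injective f := by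
  have key : ∀ i, ∃ b : B, i < N → A.Inv (3 ^ (N + i + 1)) (π b) ∧ A.Nm (3 ^ (N + i)) (π b) = 0 ∧
      addOrderOf (π b) = m := fun i => by
    by_cases hi : i < N
    · obtain ⟨x, h1, h2, h3, h4⟩ := hx (N + i + 1) (by omega) (by omega)
      obtain ⟨w, hw, hord⟩ := A.exists_addOrderOf_tr_eq hq hm (by omega) (by omega)
        (by omega) hn (hK _) h1 h2 h3 h4
      obtain ⟨b, hb⟩ := hπ w
      refine ⟨b, fun _ => ?_⟩
      rw [hb]
      refine ⟨hw.inv.tr _, ?_, hord⟩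
      rw [Nm_tr]
      have := hw.nm
      rw [Nat.add_sub_cancel] at this
      rw [this, map_zero]
    · exact ⟨0, fun h => absurd h hi⟩
  choose b hb using key
  have hKm : (Fintype.card H).Coprime m :=
    (hK 0).coprime_dvd_right (hm.trans (add_one_dvd_pow_three_pow_add_one q 0))
  refine _root_.exists_injective_pi_zmod (fun i : Fin N => b i) fun e he i => ?_
  have := A.dvd_of_sum_zsmul_eq_zero hKm (fun i => π (b i)) (fun i hi => (hb i hi).1)
    (fun i hi => (hb i hi).2.1) (fun i hi => (hb i hi).2.2)
    (fun i => if h : i < N then e ⟨i, h⟩ else 0) ?_ i i.2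
  · simpa using this
  · rw [Finset.sum_range]
    have := congrArg π he
    rw [map_sum, map_zero] at this
    simpa using this

end CyclicAction

namespace PureCubic

variable {E : Type*} [Field E] {S u : E[X]} {P : ℕ} {ζ : E}

/-- The ideal of the fibre over `u = a`, `s = b`. -/
noncomputable def pointIdeal (S u : E[X]) (a b : E) : Ideal (PureCubic E[X] S) :=
  Ideal.span {of S (u - C a), root S - of S (C b)}

theorem mem_pointIdeal {a b : E} (h : u - C a ∣ C b ^ 3 - S) (x : PureCubic E[X] S) :
    x ∈ pointIdeal S u a b ↔ u - C a ∣ x.c0 + x.c1 * C b + x.c2 * C b ^ 2 := by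
  constructor
  · intro hx
    let q := Ideal.Quotient.mk (Ideal.span {u - C a})
    have hq : ∀ y, q y = 0 ↔ u - C a ∣ y := fun y => by
      rw [Ideal.Quotient.eq_zero_iff_mem, Ideal.mem_span_singleton]
    have hb : q (C b) ^ 3 = q S := by
      rw [← map_pow, ← sub_eq_zero, ← map_sub, hq]
      exact h
    have hle : pointIdeal S u a b ≤ RingHom.ker (lift q (q (C b)) hb) := by
      rw [pointIdeal, Ideal.span_le]
      rintro y (rfl | rfl)
      · simp only [SetLike.mem_coe, RingHom.mem_ker, lift_of]
        exact (hq _).2 dvd_rfl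
      · simp only [SetLike.mem_coe, RingHom.mem_ker, map_sub, lift_root, lift_of, sub_self]
    have := hle hx
    rw [RingHom.mem_ker, lift_apply] at this
    rw [← hq]
    simpa only [map_add, map_mul, map_pow] using this
  · rintro ⟨c, hc⟩
    have : x = of S (u - C a) * of S c + (root S - of S (C b)) *
        (of S x.c1 + of S x.c2 * (root S + of S (C b))) := by
      rw [← map_mul, ← hc]
      ext1 <;> simp [pow_two] <;> ring
    rw [this]
    refine add_mem (Ideal.mul_mem_right _ _ (Ideal.subset_span (by simp)))
      (Ideal.mul_mem_right _ _ (Ideal.subset_span (by simp)))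

theorem isCoprime_pointIdeal {a b a' b' : E} (h : a ≠ a' ∨ b ≠ b') :
    IsCoprime (pointIdeal S u a b) (pointIdeal S u a' b') := by
  rw [Ideal.isCoprime_iff_exists]
  have key : ∀ {c c' : E} (_ : c ≠ c') (w : PureCubic E[X] S),
      (-of S (C (c - c')⁻¹)) * (w - of S (C c)) + of S (C (c - c')⁻¹) * (w - of S (C c')) = 1 := by
    intro c c' hc w
    have : of S (C (c - c')⁻¹) * (of S (C c) - of S (C c')) = 1 := by
      rw [← map_sub, ← map_sub, ← map_mul, ← map_mul, inv_mul_cancel₀ (sub_ne_zero.2 hc), map_one,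
        map_one]
    linear_combination this
  rcases h with h | h
  · refine ⟨_, Ideal.mul_mem_left _ _ ?_, _, Ideal.mul_mem_left _ _ ?_, key h (of S u)⟩
    · rw [← map_sub]; exact Ideal.subset_span (by simp)
    · rw [← map_sub]; exact Ideal.subset_span (by simp)
  · exact ⟨_, Ideal.mul_mem_left _ _ (Ideal.subset_span (by simp)), _,
      Ideal.mul_mem_left _ _ (Ideal.subset_span (by simp)), key h (root S)⟩

/-- The data of a covering `u` of the curve `s ^ 3 = S` onto `y ^ 3 = u ^ P - u`. -/
structure Covering (S u : E[X]) (P : ℕ) (ζ : E) : Prop where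
  sub_pow : ∀ x y : E[X], (x - y) ^ P = x ^ P - y ^ P
  pow_sub : u ^ P - u = S
  three_dvd : 3 ∣ P + 1
  not_dvd : ¬ 3 ∣ S.natDegree
  pos : 0 < u.natDegree
  zeta : ζ ^ 2 + ζ + 1 = 0
  three_ne : (3 : E) ≠ 0
  neg_one_pow : (-1 : E) ^ ((P + 1) / 3) = 1

/-- A point of `y ^ 3 = x ^ P - x` over the field with `P ^ 2` elements. -/
structure IsPoint (P : ℕ) (a b : E) : Prop where
  eq : b ^ 3 = a ^ P - a
  pow_pow : (a ^ P) ^ P = a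
  ne_zero : b ≠ 0

namespace Covering

variable (h : Covering S u P ζ)
include h

theorem two_le : 2 ≤ P := by
  have := h.three_dvd; omega

theorem zeta_pow : ζ ^ 3 = 1 := by linear_combination (ζ - 1) * h.zeta

theorem zeta_ne_zero : ζ ≠ 0 := fun h0 => by
  have := h.zeta; rw [h0] at this; norm_num at this

theorem zeta_ne_one : ζ ≠ 1 := fun h0 => by
  have := h.zeta; rw [h0] at this; exact h.three_ne (by linear_combination this)

theorem zeta_sq_ne_one : ζ ^ 2 ≠ 1 := fun h0 => by
  apply h.zeta_ne_one
  have := h.zeta_pow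
  rw [pow_succ, h0, one_mul] at this
  exact this

theorem zeta_ne_zeta_sq : ζ ≠ ζ ^ 2 := fun h0 => by
  apply h.zeta_ne_one
  have h1 : ζ * (ζ - 1) = 0 := by linear_combination -h0
  rcases mul_eq_zero.1 h1 with h1 | h1
  · exact absurd h1 h.zeta_ne_zero
  · exact sub_eq_zero.1 h1

theorem natDegree_S : S.natDegree = P * u.natDegree := by
  rw [← h.pow_sub, natDegree_sub_eq_left_of_natDegree_lt, natDegree_pow]
  rw [natDegree_pow]
  have := h.two_le
  have := h.pos
  nlinarith

theorem sub_C_pow (a : E) : (u - C a) ^ P = u ^ P - C (a ^ P) := by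
  rw [h.sub_pow, map_pow]

theorem isPoint_zeta {a b : E} (hp : IsPoint P a b) : IsPoint P a (ζ * b) where
  eq := by rw [mul_pow, h.zeta_pow, one_mul, hp.eq]
  pow_pow := hp.pow_pow
  ne_zero := mul_ne_zero h.zeta_ne_zero hp.ne_zero

theorem dvd {a b : E} (hp : IsPoint P a b) : u - C a ∣ C b ^ 3 - S := by
  have : C b ^ 3 - S = (u - C a) * (1 - (u - C a) ^ (P - 1)) := by
    rw [mul_sub, mul_one, mul_pow_sub_one (by have := h.two_le; omega), h.sub_C_pow, ← h.pow_sub,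
      ← map_pow, hp.eq, map_sub]
    ring
  exact this ▸ dvd_mul_right _ _

theorem sub_C_ne_zero (a : E) : u - C a ≠ 0 := fun h0 => by
  have := natDegree_sub_C (p := u) (a := a)
  rw [h0, natDegree_zero] at this
  have := h.pos
  omega

theorem not_isUnit (a : E) : ¬ IsUnit (u - C a) := fun h0 => by
  have := natDegree_eq_zero_of_isUnit h0
  rw [natDegree_sub_C] at this
  exact h.pos.ne' this

theorem pointIdeal_ne_top {a b : E} (hp : IsPoint P a b) : pointIdeal S u a b ≠ ⊤ := by
  rw [Ne, Ideal.eq_top_iff_one, mem_pointIdeal (h.dvd hp)]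
  simpa [isUnit_iff_dvd_one] using h.not_isUnit a

theorem pointIdeal_ne_bot (a b : E) : pointIdeal S u a b ≠ ⊥ := by
  intro h0
  have h1 : of S (u - C a) ∈ pointIdeal S u a b := Ideal.subset_span (by simp)
  rw [h0, Ideal.mem_bot] at h1
  exact h.sub_C_ne_zero a (of_injective (h1.trans (map_zero _).symm))

theorem pointIdeal_mul_eq {a b : E} (hp : IsPoint P a b) :
    pointIdeal S u a b * (pointIdeal S u a (ζ * b) * pointIdeal S u a (ζ ^ 2 * b)) =
      Ideal.span {of S (u - C a)} := by
  have hb := hp.ne_zero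
  have h12 : IsCoprime (pointIdeal S u a (ζ * b)) (pointIdeal S u a (ζ ^ 2 * b)) :=
    isCoprime_pointIdeal (Or.inr fun e => h.zeta_ne_zeta_sq (mul_right_cancel₀ hb e))
  have h01 : IsCoprime (pointIdeal S u a b) (pointIdeal S u a (ζ * b)) :=
    isCoprime_pointIdeal (Or.inr fun e => h.zeta_ne_one (mul_right_cancel₀ hb (by rw [← e, one_mul])))
  have h02 : IsCoprime (pointIdeal S u a b) (pointIdeal S u a (ζ ^ 2 * b)) :=
    isCoprime_pointIdeal
      (Or.inr fun e => h.zeta_sq_ne_one (mul_right_cancel₀ hb (by rw [← e, one_mul])))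
  have hp1 := h.isPoint_zeta hp
  have hp2 := h.isPoint_zeta hp1
  rw [← mul_assoc, ← pow_two] at hp2
  rw [Ideal.mul_eq_inf_of_isCoprime (h01.mul_right h02), Ideal.mul_eq_inf_of_isCoprime h12]
  ext x
  rw [Submodule.mem_inf, Submodule.mem_inf, mem_pointIdeal (h.dvd hp), mem_pointIdeal (h.dvd hp1),
    mem_pointIdeal (h.dvd hp2), Ideal.mem_span_singleton]
  have hz : C ζ ^ 2 + C ζ + 1 = (0 : E[X]) := by
    rw [← map_pow, ← map_add, ← C_1, ← map_add, h.zeta, map_zero]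
  have hz3 : C ζ ^ 3 = (1 : E[X]) := by rw [← map_pow, h.zeta_pow, map_one]
  simp only [map_mul, map_pow]
  have hu3 : IsUnit (3 : E[X]) := by
    exact (isUnit_C (R := E)).2 (isUnit_iff_ne_zero.2 h.three_ne)
  have hub : IsUnit (C b) := isUnit_C.2 (isUnit_iff_ne_zero.2 hb)
  constructor
  · rintro ⟨⟨y0, h0⟩, ⟨y1, h1⟩, ⟨y2, h2⟩⟩
    have d0 : u - C a ∣ x.c0 := by
      rw [← hu3.dvd_mul_left]
      refine ⟨y0 + y1 + y2, ?_⟩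
      linear_combination h0 + h1 + h2 - x.c1 * C b * hz - x.c2 * C b ^ 2 * (C ζ ^ 2 - C ζ + 1) * hz
    have d1 : u - C a ∣ x.c1 := by
      rw [← hub.dvd_mul_right, ← hu3.dvd_mul_left]
      refine ⟨y0 + C ζ ^ 2 * y1 + C ζ * y2, ?_⟩
      linear_combination h0 + C ζ ^ 2 * h1 + C ζ * h2 - x.c0 * hz - x.c2 * C b ^ 2 * hz
        - 2 * x.c1 * C b * hz3 - x.c2 * C b ^ 2 * (C ζ + C ζ ^ 2) * hz3
    have d2 : u - C a ∣ x.c2 := by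
      rw [← (hub.pow 2).dvd_mul_right, ← hu3.dvd_mul_left]
      refine ⟨y0 + C ζ * y1 + C ζ ^ 2 * y2, ?_⟩
      linear_combination h0 + C ζ * h1 + C ζ ^ 2 * h2 - x.c0 * hz - x.c1 * C b * hz
        - x.c1 * C b * C ζ * hz3 - x.c2 * C b ^ 2 * (2 + C ζ ^ 3) * hz3
    obtain ⟨z0, hz0⟩ := d0
    obtain ⟨z1, hz1⟩ := d1
    obtain ⟨z2, hz2⟩ := d2
    refine ⟨⟨z0, z1, z2⟩, ?_⟩
    ext1
    · simpa using hz0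
    · simpa using hz1
    · simpa using hz2
  · rintro ⟨y, rfl⟩
    simp only [mul_c0, mul_c1, mul_c2, of_c0, of_c1, of_c2, zero_mul, mul_zero, add_zero, mul_assoc,
      ← mul_add, dvd_mul_right, and_self]

end Covering

end PureCubic

theorem Ideal.eq_of_mul_eq_mul_of_isCoprime {R : Type*} [CommRing R] {A B I J : Ideal R}
    (h : A * B = I * J) (hAJ : IsCoprime A J) (hIB : IsCoprime I B) : A = I :=
  le_antisymm (Ideal.le_of_dvd (hIB.dvd_of_dvd_mul_right (h ▸ dvd_mul_right _ _)))
    (Ideal.le_of_dvd (hAJ.dvd_of_dvd_mul_right (h ▸ dvd_mul_right _ _)))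

namespace PureCubic

variable {E : Type*} [Field E] {S u : E[X]} {P : ℕ} {ζ : E}

theorem isCoprime_of_sub_mem {x : PureCubic E[X] S} {I : Ideal (PureCubic E[X] S)} {c : E}
    (hc : c ≠ 0) (h : x - of S (C c) ∈ I) : IsCoprime (Ideal.span {x}) I := by
  rw [Ideal.isCoprime_iff_exists]
  refine ⟨of S (C c⁻¹) * x, Ideal.mul_mem_left _ _ (Ideal.mem_span_singleton_self x),
    -of S (C c⁻¹) * (x - of S (C c)), Ideal.mul_mem_left _ _ h, ?_⟩
  have : of S (C c⁻¹) * of S (C c) = 1 := by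
    rw [← map_mul, ← map_mul, inv_mul_cancel₀ hc, map_one, map_one]
  linear_combination this

/-- A generator of the `P + 1`-st power of the ideal of a point. -/
noncomputable def gen (S u : E[X]) (P : ℕ) (a b : E) : PureCubic E[X] S :=
  ⟨(u - C (a ^ P)) ^ ((P + 1) / 3), -C (b ^ P), 0⟩

namespace Covering

variable (h : Covering S u P ζ) {a b : E} (hp : IsPoint P a b)
include h hp

theorem gen_pow_three : ((u - C (a ^ P)) ^ ((P + 1) / 3)) ^ 3 - C (b ^ P) ^ 3 * S =
    (u - C a) ^ (P + 1) := by
  have h1 : C (b ^ P) ^ 3 = C a - C (a ^ P) := by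
    rw [← map_pow, ← pow_mul, mul_comm, pow_mul, hp.eq]
    rw [map_pow, map_sub, h.sub_pow, ← map_pow, ← map_pow, hp.pow_pow]
  rw [h1, ← pow_mul, Nat.div_mul_cancel h.three_dvd, pow_succ, pow_succ (u - C a), h.sub_C_pow,
    h.sub_C_pow, hp.pow_pow, ← h.pow_sub]
  ring

theorem norm_gen : norm (gen S u P a b) = (u - C a) ^ (P + 1) := by
  rw [← h.gen_pow_three hp, norm_apply, gen]
  ring

theorem exists_gen_eq : ∃ z, (u - C (a ^ P)) ^ ((P + 1) / 3) = C (b ^ P * b) + (u - C a) * z := by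
  have h1 : C (b ^ P * b) = C (a - a ^ P) ^ ((P + 1) / 3) := by
    rw [← map_pow, ← pow_succ, show a - a ^ P = -1 * b ^ 3 by rw [hp.eq]; ring, mul_pow,
      h.neg_one_pow, one_mul, ← pow_mul, Nat.mul_div_cancel' h.three_dvd]
  obtain ⟨z, hz⟩ := sub_dvd_pow_sub_pow (u - C (a ^ P)) (C (a - a ^ P)) ((P + 1) / 3)
  refine ⟨z, ?_⟩
  rw [h1]
  rw [map_sub] at hz ⊢
  linear_combination hz

theorem isCoprime_span_gen {b' : E} (hp' : IsPoint P a b') (hb : b ≠ b') :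
    IsCoprime (Ideal.span {gen S u P a b}) (pointIdeal S u a b') := by
  refine isCoprime_of_sub_mem (mul_ne_zero (pow_ne_zero P hp.ne_zero) (sub_ne_zero.2 hb)) ?_
  rw [mem_pointIdeal (h.dvd hp')]
  obtain ⟨z, hz⟩ := h.exists_gen_eq hp
  refine ⟨z, ?_⟩
  simp only [sub_c0, sub_c1, sub_c2, of_c0, of_c1, of_c2, gen, hz]
  simp only [map_mul, map_sub]
  ring

theorem pointIdeal_pow : pointIdeal S u a b ^ (P + 1) = Ideal.span {gen S u P a b} := by
  set Y := (u - C (a ^ P)) ^ ((P + 1) / 3) with hY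
  let g' : PureCubic E[X] S := ⟨Y ^ 2, Y * C (b ^ P), C (b ^ P) ^ 2⟩
  have hg' : gen S u P a b * g' = of S (u - C a) ^ (P + 1) := by
    rw [← map_pow, ← h.gen_pow_three hp]
    ext1 <;> simp only [gen, g', mul_c0, mul_c1, mul_c2, of_c0, of_c1, of_c2, hY] <;> ring
  have hcop : IsCoprime (Ideal.span {g'}) (pointIdeal S u a b) := by
    have h0 := mul_ne_zero h.three_ne (pow_ne_zero 2 (mul_ne_zero (pow_ne_zero P hp.ne_zero) hp.ne_zero))
    refine isCoprime_of_sub_mem h0 ?_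
    rw [mem_pointIdeal (h.dvd hp)]
    obtain ⟨z, hz⟩ := h.exists_gen_eq hp
    refine ⟨z * (Y + 2 * C (b ^ P * b)), ?_⟩
    simp only [sub_c0, sub_c1, sub_c2, of_c0, of_c1, of_c2, g']
    rw [hY, hz]
    simp only [map_mul, map_pow, map_ofNat]
    ring
  have hp1 := h.isPoint_zeta hp
  have hp2 := h.isPoint_zeta hp1
  rw [← mul_assoc, ← pow_two] at hp2
  have hc1 := h.isCoprime_span_gen hp hp1 fun e =>
    h.zeta_ne_one (mul_right_cancel₀ hp.ne_zero (by rw [← e, one_mul]))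
  have hc2 := h.isCoprime_span_gen hp hp2 fun e =>
    h.zeta_sq_ne_one (mul_right_cancel₀ hp.ne_zero (by rw [← e, one_mul]))
  have hprod : Ideal.span {gen S u P a b} * Ideal.span {g'} = pointIdeal S u a b ^ (P + 1) *
      (pointIdeal S u a (ζ * b) * pointIdeal S u a (ζ ^ 2 * b)) ^ (P + 1) := by
    rw [Ideal.span_singleton_mul_span_singleton, hg', ← mul_pow, h.pointIdeal_mul_eq hp,
      Ideal.span_singleton_pow]
  exact (Ideal.eq_of_mul_eq_mul_of_isCoprime hprod (hc1.mul_right hc2).pow_right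
    hcop.symm.pow_left).symm

end Covering

/-- The ideal `I` has an `M`-th power that is generated by an element of norm of degree `M * d`. -/
def HasDegree (M : ℕ) (I : Ideal (PureCubic E[X] S)) (d : ℕ) : Prop :=
  ∃ g, g ≠ 0 ∧ I ^ M = Ideal.span {g} ∧ (norm g).natDegree = M * d

theorem HasDegree.mul (hS : ¬ 3 ∣ S.natDegree) {M d d' : ℕ} {I I' : Ideal (PureCubic E[X] S)}
    (hI : HasDegree M I d) (hI' : HasDegree M I' d') : HasDegree M (I * I') (d + d') := by
  obtain ⟨g, h1, h2, h3⟩ := hI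
  obtain ⟨g', h1', h2', h3'⟩ := hI'
  have := isDomain hS
  refine ⟨g * g', mul_ne_zero h1 h1', ?_, ?_⟩
  · rw [mul_pow, h2, h2', Ideal.span_singleton_mul_span_singleton]
  · rw [map_mul, natDegree_mul (norm_ne_zero hS h1) (norm_ne_zero hS h1'), h3, h3', mul_add]

theorem HasDegree.pow (hS : ¬ 3 ∣ S.natDegree) {M d : ℕ} {I : Ideal (PureCubic E[X] S)}
    (hI : HasDegree M I d) (k : ℕ) : HasDegree M (I ^ k) (k * d) := by
  obtain ⟨g, h1, h2, h3⟩ := hI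
  have := isDomain hS
  refine ⟨g ^ k, pow_ne_zero _ h1, ?_, ?_⟩
  · rw [← pow_mul, mul_comm, pow_mul, h2, Ideal.span_singleton_pow]
  · rw [map_pow, natDegree_pow, h3]; ring

theorem natDegree_norm_eq_of_associated (hS : ¬ 3 ∣ S.natDegree) {x y : PureCubic E[X] S}
    (h : Associated x y) : (norm x).natDegree = (norm y).natDegree := by
  obtain ⟨v, rfl⟩ := h
  by_cases hx : x = 0
  · rw [hx, zero_mul]
  · have := isDomain hS
    rw [map_mul, natDegree_mul (norm_ne_zero hS hx) (norm_ne_zero hS v.ne_zero),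
      natDegree_eq_zero_of_isUnit (v.isUnit.map norm), add_zero]

theorem HasDegree.natDegree_norm (hS : ¬ 3 ∣ S.natDegree) {M d : ℕ} (hM : 0 < M)
    {x : PureCubic E[X] S} (h : HasDegree M (Ideal.span {x}) d) : (norm x).natDegree = d := by
  obtain ⟨g, h1, h2, h3⟩ := h
  have := isDomain hS
  rw [Ideal.span_singleton_pow, Ideal.span_singleton_eq_span_singleton] at h2
  have := natDegree_norm_eq_of_associated hS h2
  rw [map_pow, natDegree_pow, h3] at this
  exact Nat.eq_of_mul_eq_mul_left hM this

namespace Covering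

variable (h : Covering S u P ζ)
include h

theorem hasDegree {a b : E} (hp : IsPoint P a b) :
    HasDegree (P + 1) (pointIdeal S u a b) u.natDegree := by
  have hn := h.norm_gen hp
  refine ⟨_, ?_, h.pointIdeal_pow hp, ?_⟩
  · intro h0
    rw [h0, norm_zero'] at hn
    exact pow_ne_zero _ (h.sub_C_ne_zero a) hn.symm
  · rw [hn, natDegree_pow, natDegree_sub_C]

theorem not_isPrincipal {I : Ideal (PureCubic E[X] S)} {d : ℕ} (hI : HasDegree (P + 1) I (d * u.natDegree))
    (hd : d < P) {a b b' : E} (hp : IsPoint P a b) (hp' : IsPoint P a b')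
    (hle : I ≤ pointIdeal S u a b) (hcop : IsCoprime I (pointIdeal S u a b')) :
    ¬ I.IsPrincipal := by
  rintro ⟨α, hα⟩
  rw [Ideal.submodule_span_eq] at hα
  subst hα
  have h1 := hI.natDegree_norm h.not_dvd (Nat.succ_pos P)
  have h2 : (norm α).natDegree < S.natDegree := by
    rw [h1, h.natDegree_S]
    exact Nat.mul_lt_mul_of_pos_right hd h.pos
  have h3 := eq_of_c0_of_natDegree_norm_lt h.not_dvd h2
  rw [Ideal.span_singleton_le_iff_mem, h3, mem_pointIdeal (h.dvd hp)] at hle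
  have h4 : Ideal.span {α} ≤ pointIdeal S u a b' := by
    rw [Ideal.span_singleton_le_iff_mem, h3, mem_pointIdeal (h.dvd hp')]
    simpa using hle
  rw [Ideal.isCoprime_iff_sup_eq, sup_eq_right.2 h4] at hcop
  exact h.pointIdeal_ne_top hp' hcop

end Covering

end PureCubic

namespace PureCubic.Covering

variable {E : Type*} [Field E] {S u : E[X]} {P : ℕ} {ζ : E} (h : Covering S u P ζ)
include h

theorem isPoint_zeta_sq {a b : E} (hp : IsPoint P a b) : IsPoint P a (ζ ^ 2 * b) := by
  rw [pow_two, mul_assoc]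
  exact h.isPoint_zeta (h.isPoint_zeta hp)

theorem isCoprime_zeta {a b : E} (hb : b ≠ 0) :
    IsCoprime (pointIdeal S u a b) (pointIdeal S u a (ζ * b)) :=
  isCoprime_pointIdeal (Or.inr fun e => h.zeta_ne_one (mul_right_cancel₀ hb (by rw [← e, one_mul])))

theorem isCoprime_zeta_sq {a b : E} (hb : b ≠ 0) :
    IsCoprime (pointIdeal S u a b) (pointIdeal S u a (ζ ^ 2 * b)) :=
  isCoprime_pointIdeal
    (Or.inr fun e => h.zeta_sq_ne_one (mul_right_cancel₀ hb (by rw [← e, one_mul])))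

variable [IsDedekindDomain (PureCubic E[X] S)] {a b a' b' : E} (hp : IsPoint P a b)
include hp

theorem nsmul_idealClass : (P + 1) • idealClass (pointIdeal S u a b) = 0 := by
  rw [← idealClass_pow (h.pointIdeal_ne_bot a b), h.pointIdeal_pow hp, idealClass_span_singleton]

theorem idealClass_add_add : idealClass (pointIdeal S u a b) +
    (idealClass (pointIdeal S u a (ζ * b)) + idealClass (pointIdeal S u a (ζ ^ 2 * b))) = 0 := by
  rw [← idealClass_mul, ← idealClass_mul, h.pointIdeal_mul_eq hp, idealClass_span_singleton]
  any_goals exact h.pointIdeal_ne_bot _ _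
  exact mul_ne_zero (h.pointIdeal_ne_bot _ _) (h.pointIdeal_ne_bot _ _)

variable (hp' : IsPoint P a' b') (ha : a ≠ a')
include hp' ha

theorem nsmul_sub_ne {k : ℕ} (hk : 0 < k) (hkP : 6 * k < P) :
    k • (idealClass (pointIdeal S u a (ζ ^ 2 * b)) - idealClass (pointIdeal S u a b)) ≠
    k • (idealClass (pointIdeal S u a' (ζ ^ 2 * b')) - idealClass (pointIdeal S u a' b')) := by
  intro heq
  have hb := h.pointIdeal_ne_bot
  have s1 := congrArg (k • ·) (h.idealClass_add_add hp)
  have s2 := congrArg (k • ·) (h.idealClass_add_add hp')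
  simp only [smul_add, smul_zero] at s1 s2
  have hd := (((h.hasDegree (h.isPoint_zeta_sq hp)).pow h.not_dvd (2 * k)).mul h.not_dvd
    ((h.hasDegree (h.isPoint_zeta hp)).pow h.not_dvd k)).mul h.not_dvd
    (((h.hasDegree hp').pow h.not_dvd (2 * k)).mul h.not_dvd
    ((h.hasDegree (h.isPoint_zeta hp')).pow h.not_dvd k))
  have hd' : 2 * k * u.natDegree + k * u.natDegree + (2 * k * u.natDegree + k * u.natDegree) =
    6 * k * u.natDegree := by ring
  rw [hd'] at hd
  refine h.not_isPrincipal hd hkP (h.isPoint_zeta_sq hp) hp ?_ ?_ ?_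
  · exact (Ideal.mul_le_left.trans Ideal.mul_le_left).trans
      (Ideal.pow_le_self (n := 2 * k) (by omega))
  · refine ((h.isCoprime_zeta_sq hp.ne_zero).symm.pow_left.mul_left
      (h.isCoprime_zeta hp.ne_zero).symm.pow_left).mul_left
      (IsCoprime.mul_left (IsCoprime.pow_left ?_) (IsCoprime.pow_left ?_))
    · exact isCoprime_pointIdeal (Or.inl ha.symm)
    · exact isCoprime_pointIdeal (Or.inl ha.symm)
  · rw [← idealClass_eq_zero_iff, idealClass_mul, idealClass_mul, idealClass_mul, idealClass_pow,
      idealClass_pow, idealClass_pow, idealClass_pow]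
    · simp only [smul_sub, mul_smul, two_smul] at heq ⊢
      linear_combination (norm := module) heq + s1 + s2
    any_goals exact hb _ _
    any_goals exact pow_ne_zero _ (hb _ _)
    any_goals exact mul_ne_zero (pow_ne_zero _ (hb _ _)) (pow_ne_zero _ (hb _ _))
    exact mul_ne_zero (mul_ne_zero (pow_ne_zero _ (hb _ _)) (pow_ne_zero _ (hb _ _)))
      (mul_ne_zero (pow_ne_zero _ (hb _ _)) (pow_ne_zero _ (hb _ _)))

theorem nsmul_ne {k : ℕ} (hk : 0 < k) (hkP : 3 * k < P) :
    k • idealClass (pointIdeal S u a b) ≠ k • idealClass (pointIdeal S u a' b') := by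
  intro heq
  have hb := h.pointIdeal_ne_bot
  have s2 := congrArg (k • ·) (h.idealClass_add_add hp')
  simp only [smul_add, smul_zero] at s2
  have hd := ((h.hasDegree hp).pow h.not_dvd k).mul h.not_dvd
    (((h.hasDegree (h.isPoint_zeta hp')).pow h.not_dvd k).mul h.not_dvd
    ((h.hasDegree (h.isPoint_zeta_sq hp')).pow h.not_dvd k))
  have hd' : k * u.natDegree + (k * u.natDegree + k * u.natDegree) =
    3 * k * u.natDegree := by ring
  rw [hd'] at hd
  refine h.not_isPrincipal hd hkP hp (h.isPoint_zeta hp) ?_ ?_ ?_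
  · exact Ideal.mul_le_left.trans (Ideal.pow_le_self hk.ne')
  · refine (h.isCoprime_zeta hp.ne_zero).pow_left.mul_left
      (IsCoprime.mul_left (IsCoprime.pow_left ?_) (IsCoprime.pow_left ?_))
    · exact isCoprime_pointIdeal (Or.inl ha.symm)
    · exact isCoprime_pointIdeal (Or.inl ha.symm)
  · rw [← idealClass_eq_zero_iff, idealClass_mul, idealClass_mul, idealClass_pow,
      idealClass_pow, idealClass_pow]
    · linear_combination (norm := module) heq + s2
    any_goals exact hb _ _
    any_goals exact pow_ne_zero _ (hb _ _)
    any_goals exact mul_ne_zero (pow_ne_zero _ (hb _ _)) (pow_ne_zero _ (hb _ _))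
    exact mul_ne_zero (pow_ne_zero _ (hb _ _))
      (mul_ne_zero (pow_ne_zero _ (hb _ _)) (pow_ne_zero _ (hb _ _)))

omit hp' in
theorem nsmul_ne_of_two_mul (hp' : IsPoint P a' b) {k : ℕ} (hk : 2 * k = P + 1) :
    k • idealClass (pointIdeal S u a b) ≠ k • idealClass (pointIdeal S u a' b) := by
  intro heq
  have hb := h.pointIdeal_ne_bot
  have hprin : (pointIdeal S u a b ^ k * pointIdeal S u a' b ^ k).IsPrincipal := by
    rw [← idealClass_eq_zero_iff, idealClass_mul, idealClass_pow, idealClass_pow, heq, ← two_nsmul,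
      ← mul_smul, hk, h.nsmul_idealClass hp']
    any_goals exact hb _ _
    any_goals exact pow_ne_zero _ (hb _ _)
    exact mul_ne_zero (pow_ne_zero _ (hb _ _)) (pow_ne_zero _ (hb _ _))
  obtain ⟨g, hg⟩ := hprin
  rw [Ideal.submodule_span_eq] at hg
  have hd := ((h.hasDegree hp).pow h.not_dvd k).mul h.not_dvd
    ((h.hasDegree hp').pow h.not_dvd k)
  rw [hg] at hd
  have h2 := h.two_le
  have hc2 : g.c2 = 0 := by
    refine c2_eq_zero_of_natDegree_norm_lt h.not_dvd ?_
    rw [hd.natDegree_norm h.not_dvd (Nat.succ_pos P), h.natDegree_S, ← add_mul, ← two_mul, hk,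
      ← mul_assoc]
    exact Nat.mul_lt_mul_of_pos_right (by omega) h.pos
  have hsq : Ideal.span {g ^ 2} = Ideal.span {gen S u P a b * gen S u P a' b} := by
    rw [← Ideal.span_singleton_pow, ← hg, mul_pow, ← pow_mul, ← pow_mul, mul_comm k, hk,
      h.pointIdeal_pow hp, h.pointIdeal_pow hp', Ideal.span_singleton_mul_span_singleton]
  rw [Ideal.span_singleton_eq_span_singleton] at hsq
  obtain ⟨v, hv⟩ := hsq.symm
  have hv0 : (v : PureCubic E[X] S) = of S (v : PureCubic E[X] S).c0 := by
    refine eq_of_c0_of_natDegree_norm_lt h.not_dvd ?_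
    rw [natDegree_eq_zero_of_isUnit (v.isUnit.map norm)]
    rw [h.natDegree_S]
    exact Nat.mul_pos (by omega) h.pos
  have hγ0 : (v : PureCubic E[X] S).c0 ≠ 0 := fun h0 => by
    rw [h0, map_zero] at hv0
    exact v.ne_zero hv0
  rw [hv0] at hv
  generalize (v : PureCubic E[X] S).c0 = γ at hv hγ0
  have e0 := congrArg c0 hv
  have e1 := congrArg c1 hv
  have e2 := congrArg c2 hv
  simp only [pow_two g, gen, mul_c0, mul_c1, mul_c2, of_c0, of_c1, of_c2, hc2, mul_zero, zero_mul,
    add_zero, zero_add] at e0 e1 e2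
  have hβ : C (b ^ P) ≠ 0 := C_ne_zero.2 (pow_ne_zero _ hp.ne_zero)
  have hY : (γ * C (b ^ P) * ((u - C (a ^ P)) ^ ((P + 1) / 3) - (u - C (a' ^ P)) ^ ((P + 1) / 3))) ^ 2
      = 0 := by
    generalize (u - C (a ^ P)) ^ ((P + 1) / 3) = Y at *
    generalize (u - C (a' ^ P)) ^ ((P + 1) / 3) = Y' at *
    generalize C (b ^ P) = β at *
    linear_combination (2 * g.c0 * g.c1 - γ * β * (Y + Y')) * e1 - 4 * g.c0 ^ 2 * e2 - 4 * β ^ 2 * γ * e0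
  have hY' := (mul_eq_zero.1 (pow_eq_zero_iff (two_ne_zero) |>.1 hY)).resolve_left
    (mul_ne_zero hγ0 hβ)
  have haP : a ^ P - a' ^ P ≠ 0 := fun h0 => ha (by
    rw [← hp.pow_pow, sub_eq_zero.1 h0, hp'.pow_pow])
  have hcop : IsCoprime (u - C (a ^ P)) (u - C (a' ^ P)) := by
    refine ⟨-C (a ^ P - a' ^ P)⁻¹, C (a ^ P - a' ^ P)⁻¹, ?_⟩
    have : C (a ^ P - a' ^ P)⁻¹ * (C (a ^ P) - C (a' ^ P)) = 1 := by
      rw [← map_sub, ← map_mul, inv_mul_cancel₀ haP, map_one]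
    linear_combination this
  have hcop' := hcop.pow (m := (P + 1) / 3) (n := (P + 1) / 3)
  rw [← sub_eq_zero.1 hY', isCoprime_self, isUnit_pow_iff (by omega)] at hcop'
  exact h.not_isUnit _ hcop'

end PureCubic.Covering

namespace PureCubic

section Aut

variable {R : Type*} [CommRing R] {S : R}

/-- The automorphism of `R[s] / (s ^ 3 - S)` given by an automorphism of `R` and by
`s ↦ ζ * s`. -/
def aut (g : R ≃+* R) (hg : g S = S) (ζ : R) (hζ : ζ ^ 3 = 1) :
    PureCubic R S ≃+* PureCubic R S where
  toFun x := ⟨g x.c0, ζ * g x.c1, ζ ^ 2 * g x.c2⟩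
  invFun x := ⟨g.symm x.c0, g.symm (ζ ^ 2 * x.c1), g.symm (ζ * x.c2)⟩
  left_inv x := by
    ext1
    · simp
    · rw [RingEquiv.symm_apply_eq]; linear_combination g x.c1 * hζ
    · rw [RingEquiv.symm_apply_eq]; linear_combination g x.c2 * hζ
  right_inv x := by
    ext1
    · simp
    · simp only [RingEquiv.apply_symm_apply]; linear_combination x.c1 * hζ
    · simp only [RingEquiv.apply_symm_apply]; linear_combination x.c2 * hζ
  map_add' x y := by ext1 <;> simp <;> ring
  map_mul' x y := by
    ext1
    · simp only [mul_c0, map_add, map_mul, hg]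
      linear_combination -(S * (g x.c1 * g y.c2 + g x.c2 * g y.c1)) * hζ
    · simp only [mul_c1, map_add, map_mul, hg]
      linear_combination -(ζ * S * (g x.c2 * g y.c2)) * hζ
    · simp only [mul_c2, map_add, map_mul]
      ring

variable (g : R ≃+* R) (hg : g S = S) (ζ : R) (hζ : ζ ^ 3 = 1) (x : PureCubic R S)

@[simp] theorem aut_c0 : (aut g hg ζ hζ x).c0 = g x.c0 := rfl
@[simp] theorem aut_c1 : (aut g hg ζ hζ x).c1 = ζ * g x.c1 := rfl
@[simp] theorem aut_c2 : (aut g hg ζ hζ x).c2 = ζ ^ 2 * g x.c2 := rfl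

theorem aut_of (r : R) : aut g hg ζ hζ (of S r) = of S (g r) := by
  ext1 <;> simp

theorem aut_root : aut g hg ζ hζ (root S) = of S ζ * root S := by
  ext1 <;> simp

end Aut

section Map

variable {R R' : Type*} [CommRing R] [CommRing R'] {S : R} {S' : R'}

/-- Base change of coefficients. -/
def mapHom (f : R →+* R') (h : f S = S') : PureCubic R S →+* PureCubic R' S' where
  toFun x := ⟨f x.c0, f x.c1, f x.c2⟩
  map_one' := by ext1 <;> simp
  map_zero' := by ext1 <;> simp
  map_add' x y := by ext1 <;> simp
  map_mul' x y := by ext1 <;> simp [h]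

theorem mapHom_injective {f : R →+* R'} (hf : Function.Injective f) (h : f S = S') :
    Function.Injective (mapHom f h) := fun x y hxy => by
  ext1
  · exact hf (congrArg c0 hxy)
  · exact hf (congrArg c1 hxy)
  · exact hf (congrArg c2 hxy)

theorem exists_mapHom_eq {f : R →+* R'} (h : f S = S') {x : PureCubic R' S'}
    (h0 : x.c0 ∈ f.range) (h1 : x.c1 ∈ f.range) (h2 : x.c2 ∈ f.range) :
    ∃ y, mapHom f h y = x := by
  obtain ⟨y0, h0⟩ := h0
  obtain ⟨y1, h1⟩ := h1
  obtain ⟨y2, h2⟩ := h2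
  exact ⟨⟨y0, y1, y2⟩, by ext1 <;> assumption⟩

end Map

end PureCubic

/-- A field with `q ^ (2 * n)` elements, where `q ≡ 2 (mod 3)`. -/
structure FrobeniusField (E : Type*) [Field E] (q n : ℕ) : Prop where
  char : ∃ p e, p.Prime ∧ CharP E p ∧ q = p ^ e
  card : Nat.card E = q ^ (2 * n)
  mod : q % 3 = 2
  pos : 0 < n

namespace FrobeniusField

variable {E : Type*} [Field E] {q n : ℕ} (hE : FrobeniusField E q n)

/-- The polynomial `X ^ q ^ n - X`. -/
noncomputable def poly (E : Type*) [Field E] (q n : ℕ) : E[X] := X ^ q ^ n - X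

include hE

theorem add_pow_poly (j : ℕ) (x y : E[X]) : (x + y) ^ q ^ j = x ^ q ^ j + y ^ q ^ j := by
  obtain ⟨p, e, hp, _, rfl⟩ := hE.char
  have := Fact.mk hp
  rw [← pow_mul]
  exact add_pow_char_pow x y p _

theorem sub_pow_poly (j : ℕ) (x y : E[X]) : (x - y) ^ q ^ j = x ^ q ^ j - y ^ q ^ j := by
  obtain ⟨p, e, hp, _, rfl⟩ := hE.char
  have := Fact.mk hp
  rw [← pow_mul]
  exact sub_pow_char_pow x y _

theorem add_pow (j : ℕ) (x y : E) : (x + y) ^ q ^ j = x ^ q ^ j + y ^ q ^ j := by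
  obtain ⟨p, e, hp, _, rfl⟩ := hE.char
  have := Fact.mk hp
  rw [← pow_mul]
  exact add_pow_char_pow x y p _

theorem sub_pow (j : ℕ) (x y : E) : (x - y) ^ q ^ j = x ^ q ^ j - y ^ q ^ j := by
  obtain ⟨p, e, hp, _, rfl⟩ := hE.char
  have := Fact.mk hp
  rw [← pow_mul]
  exact sub_pow_char_pow x y _

theorem two_le : 2 ≤ q := by have := hE.mod; omega

theorem finite : Finite E :=
  Nat.finite_of_card_ne_zero (by rw [hE.card]; exact pow_ne_zero _ (by have := hE.two_le; omega))

theorem pow (x : E) : x ^ q ^ (2 * n) = x := by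
  have := hE.finite
  have := Fintype.ofFinite E
  rw [← hE.card, Nat.card_eq_fintype_card, FiniteField.pow_card]

omit hE in
/-- The Frobenius `x ↦ x ^ q`. -/
def frob (hE : FrobeniusField E q n) : E ≃+* E where
  toFun x := x ^ q
  invFun x := x ^ q ^ (2 * n - 1)
  left_inv x := by
    have := hE.pos
    dsimp only
    rw [← pow_mul, ← pow_succ', show 2 * n - 1 + 1 = 2 * n by omega, hE.pow]
  right_inv x := by
    have := hE.pos
    dsimp only
    rw [← pow_mul, ← pow_succ, show 2 * n - 1 + 1 = 2 * n by omega, hE.pow]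
  map_add' x y := by simpa using hE.add_pow 1 x y
  map_mul' x y := mul_pow x y q

theorem frob_apply (x : E) : hE.frob x = x ^ q := rfl

omit hE in
/-- The translations preserving `X ^ q ^ n - X`. -/
def trans (hE : FrobeniusField E q n) : AddSubgroup E where
  carrier := {h | h ^ q ^ n = h}
  zero_mem' := zero_pow (pow_ne_zero _ (by have := hE.two_le; omega))
  add_mem' {x y} hx hy := by
    rw [Set.mem_ofPred_eq] at hx hy ⊢
    rw [hE.add_pow, hx, hy]
  neg_mem' {x} hx := by
    rw [Set.mem_ofPred_eq] at hx ⊢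
    have := hE.sub_pow n 0 x
    rwa [zero_sub, hx, zero_pow (pow_ne_zero _ (by have := hE.two_le; omega)), zero_sub] at this

theorem mem_trans {x : E} : x ∈ hE.trans ↔ x ^ q ^ n = x := Iff.rfl

theorem taylor_poly (h : hE.trans) : taylorEquiv (h : E) (poly E q n) = poly E q n := by
  have hh : (h : E) ^ q ^ n = h := h.2
  have : taylor (h : E) (poly E q n) = poly E q n := by
    rw [poly, map_sub, taylor_X_pow, taylor_X, hE.add_pow_poly, ← map_pow, hh]
    ring
  exact this

theorem frob_poly : mapEquiv hE.frob (poly E q n) = poly E q n := by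
  have : (poly E q n).map (hE.frob : E →+* E) = poly E q n := by
    simp [poly]
  exact this

theorem zeta_pow_q {ζ : E} (hζ : ζ ^ 3 = 1) : ζ ^ q = ζ ^ 2 := by
  have := Nat.div_add_mod q 3
  rw [hE.mod] at this
  rw [← this, pow_add, pow_mul, hζ, one_pow, one_mul]

open PureCubic

omit hE in
/-- The Frobenius acting on translations. -/
def transFrob (hE : FrobeniusField E q n) : hE.trans →+ hE.trans :=
  AddMonoidHom.mk' (fun h => ⟨(h : E) ^ q, hE.mem_trans.2 (by
      rw [← pow_mul, mul_comm, pow_mul, hE.mem_trans.1 h.2])⟩) fun a b =>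
        Subtype.ext (by simpa using hE.add_pow 1 a b)

theorem coe_transFrob (h : hE.trans) : (hE.transFrob h : E) = (h : E) ^ q := rfl

theorem coe_iterate_transFrob (r : ℕ) (h : hE.trans) :
    (hE.transFrob^[r] h : E) = (h : E) ^ q ^ r := by
  induction r generalizing h with
  | zero => simp
  | succ r ih => rw [Function.iterate_succ_apply, ih, coe_transFrob, ← pow_mul, pow_succ']

omit hE in
theorem ext_of_root {S : E[X]} {f g : PureCubic E[X] S ≃+* PureCubic E[X] S}
    (h0 : ∀ x, f (of S x) = g (of S x)) (h1 : f (root S) = g (root S)) : f = g := by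
  have : (f : PureCubic E[X] S →+* PureCubic E[X] S) = g := hom_ext h0 h1
  exact RingEquiv.ext fun x => DFunLike.congr_fun this x

omit hE in
/-- The automorphism given by `X ↦ X + h`. -/
noncomputable def translation (hE : FrobeniusField E q n) (h : hE.trans) :
    PureCubic E[X] (poly E q n) ≃+* PureCubic E[X] (poly E q n) :=
  aut (taylorEquiv (h : E)).toRingEquiv (hE.taylor_poly h) 1 (one_pow 3)

theorem translation_of (h : hE.trans) (f : E[X]) :
    hE.translation h (of _ f) = of _ (taylor (h : E) f) := aut_of _ _ _ _ _

theorem translation_root (h : hE.trans) : hE.translation h (root _) = root _ := by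
  rw [translation, aut_root, map_one, one_mul]

omit hE in
/-- The automorphism given by the Frobenius of the coefficients. -/
noncomputable def frobenius (hE : FrobeniusField E q n) :
    PureCubic E[X] (poly E q n) ≃+* PureCubic E[X] (poly E q n) :=
  aut (mapEquiv hE.frob) hE.frob_poly 1 (one_pow 3)

theorem frobenius_of (f : E[X]) :
    hE.frobenius (of _ f) = of _ (f.map (hE.frob : E →+* E)) := aut_of _ _ _ _ _

theorem frobenius_root : hE.frobenius (root _) = root _ := by
  rw [frobenius, aut_root, map_one, one_mul]

omit hE in
/-- The automorphism given by `s ↦ ζ * s`. -/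
noncomputable def rotation (S : E[X]) {ζ : E} (hζ : ζ ^ 3 = 1) :
    PureCubic E[X] S ≃+* PureCubic E[X] S :=
  aut (RingEquiv.refl _) (RingEquiv.refl_apply _ _) (C ζ) (by rw [← map_pow, hζ, map_one])

omit hE in
theorem rotation_of (S : E[X]) {ζ : E} (hζ : ζ ^ 3 = 1) (f : E[X]) :
    rotation S hζ (of _ f) = of _ f := aut_of _ _ _ _ _

omit hE in
theorem rotation_root (S : E[X]) {ζ : E} (hζ : ζ ^ 3 = 1) :
    rotation S hζ (root S) = of _ (C ζ) * root _ := by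
  rw [rotation, aut_root]

omit hE in
/-- Frobenius, translations and rotations acting on `E[X][s] / (s ^ 3 - (X ^ q ^ n - X))`. -/
noncomputable def action (hE : FrobeniusField E q n) {ζ : E} (hζ : ζ ^ 3 = 1) :
    CyclicAction (PureCubic E[X] (poly E q n) ≃+* PureCubic E[X] (poly E q n)) hE.trans where
  φ := hE.transFrob
  T h := hE.translation h
  F := hE.frobenius
  ω := rotation _ hζ
  n := n
  n_pos := hE.pos
  iterate_φ h := Subtype.ext ((hE.coe_iterate_transFrob n h).trans h.2)
  T_add a b := by
    refine ext_of_root (fun x => ?_) ?_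
    · simp only [RingAut.mul_apply, translation_of]
      exact congrArg _ (taylor_taylor x _ _).symm
    · simp only [RingAut.mul_apply, translation_root]
  F_T h := by
    refine ext_of_root (fun x => ?_) ?_
    · simp only [RingAut.mul_apply, translation_of, frobenius_of]
      exact congrArg _ (map_taylor x h (hE.frob : E →+* E))
    · simp only [RingAut.mul_apply, translation_root, frobenius_root]
  ω_T h := by
    refine ext_of_root (fun x => ?_) ?_
    · simp only [RingAut.mul_apply, translation_of, rotation_of]
    · simp only [RingAut.mul_apply, translation_root, rotation_root, map_mul, translation_of,
        taylor_C]
  F_ω := by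
    refine ext_of_root (fun x => ?_) ?_
    · simp only [RingAut.mul_apply, frobenius_of, rotation_of, pow_two]
    · simp only [RingAut.mul_apply, frobenius_root, rotation_root, map_mul, frobenius_of, map_C,
        rotation_of, pow_two]
      rw [← mul_assoc, ← map_mul, ← map_mul, ← pow_two, ← hE.zeta_pow_q hζ]
      rfl
  ω_pow := by
    refine ext_of_root (fun x => ?_) ?_
    · simp only [RingAut.mul_apply, rotation_of, pow_succ, pow_zero, RingAut.one_apply]
    · simp only [RingAut.mul_apply, rotation_root, map_mul, rotation_of, pow_succ, pow_zero,
        RingAut.one_apply]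
      rw [← mul_assoc, ← mul_assoc, ← map_mul, ← map_mul, ← map_mul, ← map_mul, ← pow_two,
        ← pow_succ, hζ, map_one, map_one, one_mul]

end FrobeniusField

namespace PureCubic.Covering

variable {E : Type*} [Field E] {S u : E[X]} {P : ℕ} {ζ : E}

theorem false_of_nsmul_eq (h : Covering S u P ζ) [IsDedekindDomain (PureCubic E[X] S)]
    {a b a' : E} (hp : IsPoint P a b) (hp' : IsPoint P a' b) (ha : a ≠ a') {k : ℕ} (hk : 0 < k)
    (hkP : 9 * k ∣ P + 1 ∨ ∃ l, l.Prime ∧ l ≠ 3 ∧ l * k = P + 1)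
    (h1 : k • (idealClass (pointIdeal S u a (ζ ^ 2 * b)) - idealClass (pointIdeal S u a b)) =
      k • (idealClass (pointIdeal S u a' (ζ ^ 2 * b)) - idealClass (pointIdeal S u a' b)))
    (h2 : k • (idealClass (pointIdeal S u a (ζ * b)) - idealClass (pointIdeal S u a (ζ ^ 2 * b))) =
      k • (idealClass (pointIdeal S u a' (ζ * b)) -
        idealClass (pointIdeal S u a' (ζ ^ 2 * b)))) : False := by
  rcases hkP with hkP | ⟨l, hl, hl3, hkP⟩
  · have := Nat.le_of_dvd (Nat.succ_pos _) hkP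
    exact h.nsmul_sub_ne hp hp' ha hk (by omega) h1
  · have s := congrArg (k • ·) ((h.idealClass_add_add hp).trans (h.idealClass_add_add hp').symm)
    have t := congrArg₂ (· - ·) (h.nsmul_idealClass hp) (h.nsmul_idealClass hp')
    simp only [smul_add, smul_sub, ← hkP, mul_smul] at s t h1 h2
    have h3 : 3 • (k • idealClass (pointIdeal S u a b) - k • idealClass (pointIdeal S u a' b)) =
        0 := by
      linear_combination (norm := module) s - 2 • h1 - h2
    have h4 : l • (k • idealClass (pointIdeal S u a b) - k • idealClass (pointIdeal S u a' b)) =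
        0 := by
      rw [smul_sub, t, sub_zero]
    have h5 := sub_eq_zero.1 (eq_zero_of_coprime_nsmul
      ((Nat.coprime_primes Nat.prime_three hl).2 hl3.symm) h3 h4)
    rcases Nat.lt_or_ge 2 l with h2l | h2l
    · have h5l : 5 ≤ l := by
        by_contra hlt
        obtain rfl : l = 4 := by omega
        exact absurd hl (by decide)
      have : 5 * k ≤ P + 1 := hkP ▸ Nat.mul_le_mul_right k h5l
      exact h.nsmul_ne hp hp' ha hk (by omega) h5
    · obtain rfl : l = 2 := le_antisymm h2l hl.two_le
      exact h.nsmul_ne_of_two_mul hp ha hp' hkP h5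

end PureCubic.Covering

section ClassAction

variable {R : Type*} [CommRing R] [IsDedekindDomain R]

noncomputable instance classAction : DistribMulAction (R ≃+* R) (Additive (ClassGroup R)) :=
  DistribMulAction.compHom _ classAut

theorem smul_idealClass (e : R ≃+* R) {I : Ideal R} (hI : I ≠ ⊥) :
    e • idealClass I = idealClass (I.map (e : R →+* R)) := classAut_idealClass e hI

end ClassAction

namespace FrobeniusField

open PureCubic

variable {E : Type*} [Field E] {q n : ℕ} (hE : FrobeniusField E q n) {u : E[X]} {ζ : E}

theorem map_translation (h : hE.trans) {c : E} (hu : taylor (h : E) u = u + C c) (a b : E) :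
    (pointIdeal (poly E q n) u a b).map (hE.translation h : _ →+* PureCubic E[X] (poly E q n)) =
      pointIdeal (poly E q n) u (a - c) b := by
  rw [pointIdeal, pointIdeal, Ideal.map_span, Set.image_pair]
  simp only [RingHom.coe_coe, map_sub, translation_of, translation_root, hu, taylor_C, map_add]
  rw [add_sub_right_comm, sub_sub_eq_add_sub, add_sub_right_comm]

theorem map_frobenius (hu : u.map (hE.frob : E →+* E) = u) (a b : E) :
    (pointIdeal (poly E q n) u a b).map (hE.frobenius : _ →+* PureCubic E[X] (poly E q n)) =
      pointIdeal (poly E q n) u (a ^ q) (b ^ q) := by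
  rw [pointIdeal, pointIdeal, Ideal.map_span, Set.image_pair]
  simp only [RingHom.coe_coe, map_sub, frobenius_of, frobenius_root, hu, map_C,
    frob_apply]

theorem map_rotation (hζ : ζ ^ 3 = 1) (a b : E) :
    (pointIdeal (poly E q n) u a b).map
      (rotation (poly E q n) hζ : _ →+* PureCubic E[X] (poly E q n)) =
      pointIdeal (poly E q n) u a (ζ ^ 2 * b) := by
  have h3 : of (poly E q n) (C ζ) ^ 3 = 1 := by rw [← map_pow, ← map_pow, hζ, map_one, map_one]
  have hunit : IsUnit (of (poly E q n) (C ζ)) := IsUnit.of_pow_eq_one h3 (by norm_num)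
  rw [pointIdeal, pointIdeal, Ideal.map_span, Set.image_pair, Ideal.span_insert, Ideal.span_insert]
  simp only [RingHom.coe_coe, map_sub, rotation_of, rotation_root]
  congr 1
  rw [show of (poly E q n) (C ζ) * root _ - of _ (C b) =
    of _ (C ζ) * (root _ - of _ (C (ζ ^ 2 * b))) by
      simp only [map_mul, map_pow]; linear_combination of (poly E q n) (C b) * h3]
  exact Ideal.span_singleton_mul_left_unit hunit _

end FrobeniusField

namespace FrobeniusField

open PureCubic

variable {E : Type*} [Field E] {q n : ℕ} (hE : FrobeniusField E q n)

section Trace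

/-- The polynomial `∑ X ^ q ^ (r * l)` over `l < n / r`. -/
noncomputable def tracePoly (E : Type*) [Field E] (q n r : ℕ) : E[X] :=
  ∑ l ∈ Finset.range (n / r), X ^ q ^ (r * l)

theorem eval_tracePoly (r : ℕ) (x : E) :
    (tracePoly E q n r).eval x = ∑ l ∈ Finset.range (n / r), x ^ q ^ (r * l) := by
  simp [tracePoly, eval_finsetSum]

include hE

theorem zero_pow_pow (j : ℕ) : (0 : E) ^ q ^ j = 0 :=
  zero_pow (pow_ne_zero _ (by have := hE.two_le; omega))

theorem sum_pow {ι : Type*} (s : Finset ι) (f : ι → E) (j : ℕ) :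
    (∑ i ∈ s, f i) ^ q ^ j = ∑ i ∈ s, f i ^ q ^ j := by
  classical
  induction s using Finset.induction_on with
  | empty => simp [hE.zero_pow_pow]
  | insert a s ha ih => rw [Finset.sum_insert ha, Finset.sum_insert ha, hE.add_pow, ih]

theorem tracePoly_pow_sub {r : ℕ} (hr : r ∣ n) :
    tracePoly E q n r ^ q ^ r - tracePoly E q n r = poly E q n := by
  have key : ∀ M, (∑ l ∈ Finset.range M, (X : E[X]) ^ q ^ (r * l)) ^ q ^ r -
      ∑ l ∈ Finset.range M, (X : E[X]) ^ q ^ (r * l) = X ^ q ^ (r * M) - X := by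
    intro M
    induction M with
    | zero =>
      simp [zero_pow (pow_ne_zero r (show q ≠ 0 by have := hE.two_le; omega))]
    | succ M ih =>
      rw [Finset.sum_range_succ, hE.add_pow_poly, ← pow_mul, ← pow_add,
        show r * (M + 1) = r * M + r by ring]
      linear_combination ih
  rw [tracePoly, key, Nat.mul_div_cancel' hr, poly]

theorem taylor_tracePoly (r : ℕ) (h : E) :
    taylor h (tracePoly E q n r) = tracePoly E q n r + C ((tracePoly E q n r).eval h) := by
  rw [eval_tracePoly, tracePoly, map_sum, map_sum, ← Finset.sum_add_distrib]
  refine Finset.sum_congr rfl fun l _ => ?_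
  rw [taylor_X_pow, hE.add_pow_poly, map_pow]

theorem map_frob_tracePoly (r : ℕ) :
    (tracePoly E q n r).map (hE.frob : E →+* E) = tracePoly E q n r := by
  simp [tracePoly, Polynomial.map_sum]

theorem eval_tracePoly_sub (r : ℕ) (x y : E) : (tracePoly E q n r).eval (x - y) =
    (tracePoly E q n r).eval x - (tracePoly E q n r).eval y := by
  simp only [eval_tracePoly, hE.sub_pow, Finset.sum_sub_distrib]

theorem eval_tracePoly_pow (r j : ℕ) (x : E) : (tracePoly E q n r).eval (x ^ q ^ j) =
    (tracePoly E q n r).eval x ^ q ^ j := by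
  simp only [eval_tracePoly, hE.sum_pow]
  refine Finset.sum_congr rfl fun l _ => ?_
  rw [← pow_mul, ← pow_mul, mul_comm]

theorem eval_tracePoly_pow_sub {r : ℕ} (hr : r ∣ n) (x : E) :
    (tracePoly E q n r).eval x ^ q ^ r - (tracePoly E q n r).eval x = x ^ q ^ n - x := by
  simpa [poly] using congrArg (eval x) (hE.tracePoly_pow_sub hr)

theorem natDegree_poly : (poly E q n).natDegree = q ^ n :=
  FiniteField.X_pow_card_sub_X_natDegree_eq E
    (Nat.one_lt_pow hE.pos.ne' (by have := hE.two_le; omega))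

theorem natDegree_pow_sub {r : ℕ} (hr : 0 < r) {u : E[X]} :
    (u ^ q ^ r - u).natDegree = q ^ r * u.natDegree := by
  have hP : 1 < q ^ r := Nat.one_lt_pow hr.ne' (by have := hE.two_le; omega)
  rcases Nat.eq_zero_or_pos u.natDegree with h0 | h0
  · rw [eq_C_of_natDegree_eq_zero h0, ← map_pow, ← map_sub, natDegree_C, natDegree_C, mul_zero]
  · rw [natDegree_sub_eq_left_of_natDegree_lt, natDegree_pow]
    rw [natDegree_pow]
    exact lt_mul_of_one_lt_left h0 hP

theorem natDegree_tracePoly {r : ℕ} (hr : r ∣ n) :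
    q ^ r * (tracePoly E q n r).natDegree = q ^ n := by
  rw [← hE.natDegree_pow_sub (Nat.pos_of_dvd_of_pos hr hE.pos), hE.tracePoly_pow_sub hr,
    hE.natDegree_poly]

theorem natDegree_tracePoly_pos {r : ℕ} (hr : r ∣ n) : 0 < (tracePoly E q n r).natDegree := by
  rcases Nat.eq_zero_or_pos (tracePoly E q n r).natDegree with h0 | h0
  · have := hE.natDegree_tracePoly hr
    rw [h0, mul_zero] at this
    exact absurd this.symm (pow_ne_zero _ (by have := hE.two_le; omega))
  · exact h0

theorem exists_trace_ne {r r' : ℕ} (hr : r ∣ n) (h0 : 0 < r') (hlt : r' < r) :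
    ∃ h ∈ hE.trans, (tracePoly E q n r).eval (h ^ q ^ r' - h) ≠ 0 := by
  have := hE.finite
  have := Fintype.ofFinite E
  have hq := hE.two_le
  set D : E[X] := tracePoly E q n r ^ q ^ r' - tracePoly E q n r with hD
  have hDdeg : D.natDegree = q ^ r' * (tracePoly E q n r).natDegree := hE.natDegree_pow_sub h0
  have hDlt : D.natDegree < q ^ n := by
    rw [hDdeg, ← hE.natDegree_tracePoly hr]
    exact Nat.mul_lt_mul_of_pos_right (Nat.pow_lt_pow_right (by omega) hlt)
      (hE.natDegree_tracePoly_pos hr)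
  have hDpos : 0 < D.natDegree := by
    rw [hDdeg]
    exact Nat.mul_pos (Nat.pow_pos (by omega)) (hE.natDegree_tracePoly_pos hr)
  have hVdeg : (X ^ q ^ n + X : E[X]).natDegree = q ^ n := by
    have h1 : 1 < q ^ n := Nat.one_lt_pow hE.pos.ne' (by omega)
    rw [natDegree_add_eq_left_of_natDegree_lt, natDegree_X_pow]
    rwa [natDegree_X_pow, natDegree_X]
  have hcdeg : (D.comp (X ^ q ^ n + X)).natDegree = D.natDegree * q ^ n := by
    rw [natDegree_comp, hVdeg]
  have hc0 : D.comp (X ^ q ^ n + X) ≠ 0 := fun hz => by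
    rw [hz, natDegree_zero] at hcdeg
    exact absurd hcdeg.symm (Nat.mul_pos hDpos (Nat.pow_pos (by omega))).ne'
  obtain ⟨x, hx⟩ : ∃ x, (D.comp (X ^ q ^ n + X)).eval x ≠ 0 := by
    by_contra! hall
    refine hc0 (eq_zero_of_natDegree_lt_card_of_eval_eq_zero _ Function.injective_id hall ?_)
    rw [hcdeg, ← Nat.card_eq_fintype_card, hE.card, two_mul, pow_add]
    exact Nat.mul_lt_mul_of_pos_right hDlt (Nat.pow_pos (by omega))
  refine ⟨x ^ q ^ n + x, ?_, ?_⟩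
  · rw [hE.mem_trans, hE.add_pow, ← pow_mul, ← pow_add, ← two_mul, hE.pow, add_comm]
  · rw [hE.eval_tracePoly_sub, hE.eval_tracePoly_pow]
    simpa [hD] using hx

end Trace

section Generator

include hE

theorem exists_generator : ∃ g : E, g ≠ 0 ∧ (∀ x : E, x ≠ 0 → ∃ k : ℕ, x = g ^ k) ∧
    ∀ k : ℕ, g ^ k = 1 ↔ q ^ (2 * n) - 1 ∣ k := by
  have := hE.finite
  obtain ⟨g, hg⟩ := IsCyclic.exists_generator (α := Eˣ)
  have ho : orderOf g = q ^ (2 * n) - 1 := by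
    rw [orderOf_eq_card_of_forall_mem_zpowers hg, Nat.card_units, hE.card]
  refine ⟨g, g.ne_zero, fun x hx => ?_, fun k => ?_⟩
  · obtain ⟨k, hk⟩ := mem_powers_iff_mem_zpowers.2 (hg (Units.mk0 x hx))
    exact ⟨k, by simpa using (congrArg Units.val hk).symm⟩
  · rw [← ho, orderOf_dvd_iff_pow_eq_one, ← Units.val_pow_eq_pow_val, Units.val_eq_one]

theorem three_dvd : 3 ∣ q + 1 := by have := hE.mod; omega

theorem three_dvd_sq_sub (j : ℕ) : 3 ∣ q ^ (2 * j) - 1 := by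
  have h1 : (q ^ 2) ^ j ≡ 1 ^ j [MOD 3] := Nat.ModEq.pow j (by
    have := hE.mod
    rw [Nat.ModEq, Nat.pow_mod, this])
  rw [one_pow, ← pow_mul] at h1
  exact (Nat.modEq_iff_dvd' (Nat.one_le_pow _ _ (by have := hE.two_le; omega))).1 h1.symm

theorem three_ne : (3 : E) ≠ 0 := by
  obtain ⟨p, e, hp, _, he⟩ := hE.char
  intro h3
  have : p ∣ 3 := (CharP.cast_eq_zero_iff E p 3).1 (by exact_mod_cast h3)
  have hp3 := (Nat.prime_dvd_prime_iff_eq hp Nat.prime_three).1 this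
  subst hp3
  have := hE.mod
  rcases Nat.eq_zero_or_pos e with rfl | he0
  · subst he; simp at this
  · have := dvd_pow_self 3 he0.ne'
    omega

theorem exists_zeta : ∃ ζ : E, ζ ^ 2 + ζ + 1 = 0 := by
  obtain ⟨g, g0, -, hg⟩ := hE.exists_generator
  obtain ⟨k, hk⟩ := hE.three_dvd_sq_sub n
  have hpos : 1 < q ^ (2 * n) :=
    Nat.one_lt_pow (by have := hE.pos; omega) (by have := hE.two_le; omega)
  refine ⟨g ^ k, ?_⟩
  have h1 : (g ^ k) ^ 3 = 1 := by rw [← pow_mul, hg, hk, mul_comm]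
  have h2 : g ^ k ≠ 1 := by
    rw [Ne, hg, hk]
    intro hd
    have := Nat.le_of_dvd (by omega) hd
    omega
  refine mul_left_cancel₀ (sub_ne_zero.2 h2) ?_
  linear_combination h1

theorem exists_cube {z : E} {j : ℕ} (hj : j ∣ n) (hz : z ^ ((q ^ (2 * j) - 1) / 3) = 1) :
    ∃ b, b ^ 3 = z := by
  have hpos : 1 < q ^ (2 * n) :=
    Nat.one_lt_pow (by have := hE.pos; omega) (by have := hE.two_le; omega)
  obtain ⟨g, g0, hgen, hg⟩ := hE.exists_generator
  rcases eq_or_ne z 0 with rfl | hz0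
  · exact ⟨0, by simp⟩
  obtain ⟨k, rfl⟩ := hgen z hz0
  obtain ⟨w, hw⟩ := Nat.pow_sub_one_dvd_pow_sub_one q (mul_dvd_mul_left 2 hj)
  obtain ⟨v, hv⟩ := hE.three_dvd_sq_sub j
  rw [hv, Nat.mul_div_cancel_left _ (by norm_num)] at hz
  have h1 : g ^ (k * (v * w)) = 1 := by rw [pow_mul, pow_mul, ← pow_mul g, pow_mul, hz, one_pow]
  rw [hg, hw, hv, mul_assoc] at h1
  have hvw : 0 < v * w := by
    rcases Nat.eq_zero_or_pos (v * w) with h0 | h0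
    · rw [hv, mul_assoc, h0] at hw
      omega
    · exact h0
  obtain ⟨m, rfl⟩ := Nat.dvd_of_mul_dvd_mul_right hvw h1
  exact ⟨g ^ m, by rw [← pow_mul, mul_comm]⟩

theorem exists_pow_ne {j : ℕ} (hj : j ∣ n) : ∃ a : E, (a ^ q ^ j) ^ q ^ j = a ∧ a ^ q ^ j ≠ a := by
  have hj0 := Nat.pos_of_dvd_of_pos hj hE.pos
  have hq := hE.two_le
  obtain ⟨g, g0, -, hg⟩ := hE.exists_generator
  obtain ⟨w, hw⟩ := Nat.pow_sub_one_dvd_pow_sub_one q (mul_dvd_mul_left 2 hj)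
  have hpos : 1 < q ^ (2 * n) := Nat.one_lt_pow (by have := hE.pos; omega) (by omega)
  have hw0 : 0 < w := by
    rcases Nat.eq_zero_or_pos w with h0 | h0
    · rw [h0] at hw; omega
    · exact h0
  have key : ∀ k, (g ^ w) ^ k = 1 ↔ q ^ (2 * j) - 1 ∣ k := fun k => by
    rw [← pow_mul, hg, hw, mul_comm w]
    exact Nat.mul_dvd_mul_iff_right hw0
  have hstep : ∀ k, 0 < k → ((g ^ w) ^ k = g ^ w ↔ q ^ (2 * j) - 1 ∣ k - 1) := fun k hk => by
    rw [← key, ← mul_left_inj' (pow_ne_zero w g0) (a := (g ^ w) ^ (k - 1)), ← pow_succ, one_mul,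
      Nat.sub_add_cancel hk]
  refine ⟨g ^ w, ?_, ?_⟩
  · rw [← pow_mul, ← pow_add, ← two_mul, hstep _ (Nat.pow_pos (by omega))]
  · rw [Ne, hstep _ (Nat.pow_pos (by omega))]
    intro hd
    have h1 : 1 < q ^ j := Nat.one_lt_pow hj0.ne' (by omega)
    have h2 := Nat.le_of_dvd (by omega) hd
    have h3 : q ^ j < q ^ (2 * j) := Nat.pow_lt_pow_right (by omega) (by omega)
    omega

theorem neg_one_pow {i : ℕ} : (-1 : E) ^ ((q ^ 3 ^ i + 1) / 3) = 1 := by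
  obtain ⟨p, e, hp, _, he⟩ := hE.char
  rcases hp.eq_two_or_odd' with rfl | hodd
  · rw [CharTwo.neg_eq, one_pow]
  · obtain ⟨w, hw⟩ := hE.three_dvd.trans (add_one_dvd_pow_three_pow_add_one q i)
    rw [hw, Nat.mul_div_cancel_left _ (by norm_num)]
    have h1 : Even (q ^ 3 ^ i + 1) := by
      rw [he]
      exact (hodd.pow.pow).add_one
    rw [hw, Nat.even_mul] at h1
    exact (h1.resolve_left (by decide)).neg_one_pow

theorem not_three_dvd (j : ℕ) : ¬ 3 ∣ q ^ j := fun h => by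
  have := Nat.prime_three.dvd_of_dvd_pow h
  have := hE.mod
  omega

theorem covering {ζ : E} (hζ : ζ ^ 2 + ζ + 1 = 0) {i : ℕ} (hi : 3 ^ i ∣ n) :
    Covering (poly E q n) (tracePoly E q n (3 ^ i)) (q ^ 3 ^ i) ζ where
  sub_pow := hE.sub_pow_poly _
  pow_sub := hE.tracePoly_pow_sub hi
  three_dvd := hE.three_dvd.trans (add_one_dvd_pow_three_pow_add_one q i)
  not_dvd := by rw [hE.natDegree_poly]; exact hE.not_three_dvd n
  pos := hE.natDegree_tracePoly_pos hi
  zeta := hζ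
  three_ne := hE.three_ne
  neg_one_pow := hE.neg_one_pow

theorem exists_isPoint {i : ℕ} (hi : 3 ^ i ∣ n) :
    ∃ a b : E, IsPoint (q ^ 3 ^ i) a b ∧ b ^ q ^ (2 * 3 ^ i) = b := by
  obtain ⟨a, ha, hne⟩ := hE.exists_pow_ne hi
  have hq := hE.two_le
  set P := q ^ 3 ^ i with hP
  have hP1 : 1 < P := Nat.one_lt_pow (by positivity) (by omega)
  have hP2 : q ^ (2 * 3 ^ i) = P * P := by rw [two_mul, pow_add]
  obtain ⟨w, hw⟩ := hE.three_dvd.trans (add_one_dvd_pow_three_pow_add_one q i)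
  rw [← hP] at hw
  have hz0 : a ^ P - a ≠ 0 := sub_ne_zero.2 hne
  have hz : (a ^ P - a) ^ P = -(a ^ P - a) := by rw [hP, hE.sub_pow, ← hP, ha]; ring
  have hz1 : (a ^ P - a) ^ (P - 1) = -1 := by
    refine mul_right_cancel₀ hz0 ?_
    rw [← pow_succ, Nat.sub_add_cancel hP1.le, hz]
    ring
  have hexp : P * P - 1 = 3 * ((P - 1) * w) := by
    obtain ⟨P', hP'⟩ : ∃ P', P = P' + 1 := ⟨P - 1, by omega⟩
    rw [hP'] at hw ⊢
    rw [Nat.add_sub_cancel, mul_left_comm, ← hw]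
    have : (P' + 1) * (P' + 1) = P' * (P' + 1 + 1) + 1 := by ring
    omega
  have hm1 : (-1 : E) ^ w = 1 := by
    have := hE.neg_one_pow (i := i)
    rwa [← hP, hw, Nat.mul_div_cancel_left _ (by norm_num)] at this
  have hzw : (a ^ P - a) ^ ((P - 1) * w) = 1 := by rw [pow_mul, hz1, hm1]
  obtain ⟨b, hb⟩ := hE.exists_cube (z := a ^ P - a) hi (by
    rw [hP2, hexp, Nat.mul_div_cancel_left _ (by norm_num), hzw])
  have hb0 : b ≠ 0 := fun h0 => hz0 (by rw [← hb, h0]; ring)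
  refine ⟨a, b, ⟨hb, ha, hb0⟩, ?_⟩
  rw [hP2, ← Nat.sub_add_cancel (Nat.one_le_iff_ne_zero.2 (by positivity : P * P ≠ 0)), pow_succ,
    hexp, pow_mul, hb, hzw, one_mul]

end Generator

end FrobeniusField

namespace FrobeniusField

open PureCubic

variable {E : Type*} [Field E] {q n : ℕ} (hE : FrobeniusField E q n)

theorem frob_pow_apply (r : ℕ) (x : E) : (hE.frob ^ r) x = x ^ q ^ r := by
  induction r generalizing x with
  | zero => simp
  | succ r ih => rw [pow_succ, RingAut.mul_apply, ih, frob_apply, ← pow_mul, pow_succ']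

theorem frobenius_pow_of (r : ℕ) (f : E[X]) :
    (hE.frobenius ^ r) (of _ f) = of _ (f.map ((hE.frob ^ r : E ≃+* E) : E →+* E)) := by
  induction r generalizing f with
  | zero => exact congrArg (of _) (Polynomial.map_id (p := f)).symm
  | succ r ih =>
    rw [pow_succ, RingAut.mul_apply, frobenius_of, ih, Polynomial.map_map, pow_succ]
    rfl

theorem frobenius_pow_root (r : ℕ) : (hE.frobenius ^ r) (root _) = root _ := by
  induction r with
  | zero => rfl
  | succ r ih => rw [pow_succ, RingAut.mul_apply, frobenius_root, ih]

theorem frobenius_pow_two_mul : hE.frobenius ^ (2 * n) = 1 := by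
  refine ext_of_root (fun f => ?_) (hE.frobenius_pow_root _)
  have : hE.frob ^ (2 * n) = 1 := RingEquiv.ext fun x => by
    rw [frob_pow_apply, hE.pow]; rfl
  rw [frobenius_pow_of, this]
  exact congrArg (of _) (Polynomial.map_id (p := f))

theorem coprime_card [Fintype hE.trans] {j : ℕ} (hj : 0 < j) :
    (Fintype.card hE.trans).Coprime (q ^ j + 1) := by
  have h1 := AddSubgroup.card_addSubgroup_dvd_card hE.trans
  rw [hE.card, Nat.card_eq_fintype_card] at h1
  refine Nat.Coprime.coprime_dvd_left h1 (Nat.Coprime.pow_left _ ?_)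
  refine Nat.Coprime.coprime_dvd_left (dvd_pow_self q hj.ne') ?_
  exact (Nat.coprime_self_add_right).2 (Nat.coprime_one_right _)

section Level

variable [IsDedekindDomain (PureCubic E[X] (poly E q n))]

theorem smul_pow_frobenius {u : E[X]} (hu : u.map (hE.frob : E →+* E) = u)
    (hne : ∀ a b, pointIdeal (poly E q n) u a b ≠ ⊥) (r : ℕ) (a b : E) :
    hE.frobenius ^ r • idealClass (pointIdeal (poly E q n) u a b) =
      idealClass (pointIdeal (poly E q n) u (a ^ q ^ r) (b ^ q ^ r)) := by
  induction r generalizing a b with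
  | zero => simp
  | succ r ih =>
    rw [pow_succ, mul_smul, smul_idealClass _ (hne a b), hE.map_frobenius hu, ih, ← pow_mul,
      ← pow_mul, ← pow_succ']

theorem exists_level {ζ : E} (hζ : ζ ^ 2 + ζ + 1 = 0) (hζ3 : ζ ^ 3 = 1) {i : ℕ} (hi0 : 0 < i)
    (hi : 3 ^ i ∣ n) :
    ∃ x : Additive (ClassGroup (PureCubic E[X] (poly E q n))),
      (hE.action hζ3).Inv (3 ^ i) x ∧ (hE.action hζ3).F ^ (2 * 3 ^ i) • x = x ∧
      (q ^ 3 ^ i + 1) • x = 0 ∧ ∀ k, 0 < k → (9 * k ∣ q ^ 3 ^ i + 1 ∨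
      ∃ l, l.Prime ∧ l ≠ 3 ∧ l * k = q ^ 3 ^ i + 1) →
      ¬ (hE.action hζ3).Inv (3 ^ (i - 1)) (k • ((hE.action hζ3).ω • x - x)) := by
  have hcov := hE.covering hζ hi
  obtain ⟨a, b, hp, hb⟩ := hE.exists_isPoint hi
  set u := tracePoly E q n (3 ^ i) with hu
  have hne := hcov.pointIdeal_ne_bot
  have hδ : ∀ (r : ℕ) (h : hE.trans), ((hE.action hζ3).δ r h : E) = (h : E) ^ q ^ r - h :=
    fun r h => by
      rw [CyclicAction.δ, AddSubgroup.coe_sub]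
      exact congrArg (· - (h : E)) (hE.coe_iterate_transFrob r h)
  have hT : ∀ (h : hE.trans) (a b : E),
      (hE.action hζ3).T h • idealClass (pointIdeal (poly E q n) u a b) =
      idealClass (pointIdeal (poly E q n) u (a - u.eval (h : E)) b) := fun h a b =>
    (smul_idealClass _ (hne a b)).trans
      (congrArg idealClass (hE.map_translation h (hE.taylor_tracePoly _ _) a b))
  have hω : ∀ a b : E, (hE.action hζ3).ω • idealClass (pointIdeal (poly E q n) u a b) =
      idealClass (pointIdeal (poly E q n) u a (ζ ^ 2 * b)) := fun a b =>
    (smul_idealClass _ (hne a b)).trans (congrArg idealClass (map_rotation hζ3 a b))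
  refine ⟨idealClass (pointIdeal (poly E q n) u a b), fun h => ?_, ?_, hcov.nsmul_idealClass hp, ?_⟩
  · rw [hT, hδ, hE.eval_tracePoly_sub, hE.eval_tracePoly_pow, hE.eval_tracePoly_pow_sub hi,
      hE.mem_trans.1 h.2, sub_self, sub_zero]
  · refine (hE.smul_pow_frobenius (hE.map_frob_tracePoly _) hne _ a b).trans ?_
    rw [hb, two_mul, pow_add, pow_mul, hp.pow_pow]
  · intro k hk hkP hinv
    obtain ⟨h, hh, hc⟩ := hE.exists_trace_ne hi (r' := 3 ^ (i - 1)) (by positivity)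
      (Nat.pow_lt_pow_right (by norm_num) (by omega))
    have hT' := hinv ⟨h, hh⟩
    set c := u.eval (h ^ q ^ 3 ^ (i - 1) - h) with hcdef
    have hcP : c ^ q ^ 3 ^ i = c := by
      have h1 := hE.eval_tracePoly_pow_sub hi (h ^ q ^ 3 ^ (i - 1) - h)
      have h2 : (h ^ q ^ 3 ^ (i - 1) - h) ^ q ^ n = h ^ q ^ 3 ^ (i - 1) - h := by
        rw [hE.sub_pow, ← pow_mul, mul_comm, pow_mul, hE.mem_trans.1 hh]
      rw [h2, sub_self, sub_eq_zero] at h1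
      exact h1
    have hp' : IsPoint (q ^ 3 ^ i) (a - c) b :=
      ⟨by rw [hE.sub_pow, hcP, hp.eq]; ring, by rw [hE.sub_pow, hE.sub_pow, hp.pow_pow, hcP, hcP],
        hp.ne_zero⟩
    have hac : a ≠ a - c := fun e => hc (by linear_combination e)
    have hsmul : ∀ (e : PureCubic E[X] (poly E q n) ≃+* PureCubic E[X] (poly E q n))
        (x : Additive (ClassGroup (PureCubic E[X] (poly E q n)))), e • k • x = k • e • x :=
      fun e x => map_nsmul (DistribSMul.toAddMonoidHom _ e) k x
    have h1 : k • (idealClass (pointIdeal (poly E q n) u a (ζ ^ 2 * b)) -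
        idealClass (pointIdeal (poly E q n) u a b)) =
      k • (idealClass (pointIdeal (poly E q n) u (a - c) (ζ ^ 2 * b)) -
        idealClass (pointIdeal (poly E q n) u (a - c) b)) := by
      rw [hω, hsmul, smul_sub, hT, hT, hδ] at hT'
      exact hT'.symm
    have h2 := congrArg ((hE.action hζ3).ω • ·) h1
    have hζ4 : ζ ^ 2 * (ζ ^ 2 * b) = ζ * b := by linear_combination ζ * b * hζ3
    simp only [hsmul] at h2
    simp only [smul_sub (hE.action hζ3).ω, hω, hζ4] at h2
    exact hcov.false_of_nsmul_eq hp hp' hac hk hkP h1 h2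

end Level

section Descent

variable {K : Type*} [Field K] [Fintype K] [Algebra K E]

include hE in
theorem mem_range_algebraMap (hK : Fintype.card K = q) {x : E} (hx : x ^ q = x) :
    x ∈ (algebraMap K E).range := by
  classical
  have hq : 1 < q := by have := hE.two_le; omega
  have hne := FiniteField.X_pow_card_sub_X_ne_zero E hq
  have hroot : ∀ y : E, y ∈ (X ^ q - X : E[X]).roots.toFinset ↔ y ^ q = y := fun y => by
    rw [Multiset.mem_toFinset, mem_roots hne]
    simp [sub_eq_zero]
  have hle : (X ^ q - X : E[X]).roots.toFinset.card ≤ q :=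
    (Multiset.toFinset_card_le _).trans ((card_roots' _).trans
      (FiniteField.X_pow_card_sub_X_natDegree_eq E hq).le)
  have hsub : Finset.univ.image (algebraMap K E) ⊆ (X ^ q - X : E[X]).roots.toFinset := by
    intro y hy
    obtain ⟨z, -, rfl⟩ := Finset.mem_image.1 hy
    rw [hroot, ← map_pow, ← hK, FiniteField.pow_card]
  have heq := Finset.eq_of_subset_of_card_le hsub (by
    rwa [Finset.card_image_of_injective _ (algebraMap K E).injective, Finset.card_univ, hK])
  have := (hroot x).2 hx
  rw [← heq] at this
  obtain ⟨z, -, hz⟩ := Finset.mem_image.1 this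
  exact ⟨z, hz⟩

theorem map_poly (K E : Type*) [Field K] [Field E] [Algebra K E] (q n : ℕ) :
    mapRingHom (algebraMap K E) (poly K q n) = poly E q n := by
  simp [poly]

variable [IsDedekindDomain (PureCubic E[X] (poly E q n))]
  [IsDedekindDomain (PureCubic K[X] (poly K q n))]

theorem exists_classMap_eq_tr (hK : Fintype.card K = q) {ζ : E} (hζ3 : ζ ^ 3 = 1)
    (w : Additive (ClassGroup (PureCubic E[X] (poly E q n)))) :
    ∃ y, classMap (mapHom (mapRingHom (algebraMap K E)) (map_poly K E q n))
      (mapHom_injective (map_injective _ (algebraMap K E).injective) _) y =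
      (hE.action hζ3).tr _ (2 * n) w := by
  have hn := hE.pos
  have hq := hE.two_le
  obtain ⟨g, g0, -, hg⟩ := hE.exists_generator
  obtain ⟨D, hD⟩ := exists_separating_polynomial (d := 2 * n) (fun r => g ^ q ^ r)
    fun r h0 hr e => by
      rw [pow_zero, pow_one, ← Nat.sub_add_cancel (Nat.one_le_pow r q (by omega)), pow_succ] at e
      have h1 : g ^ (q ^ r - 1) = 1 := mul_right_cancel₀ g0 (by rw [e, one_mul])
      rw [hg] at h1
      have h2 : 1 < q ^ r := Nat.one_lt_pow h0.ne' (by omega)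
      have h3 : q ^ r < q ^ (2 * n) := Nat.pow_lt_pow_right (by omega) hr
      have := Nat.le_of_dvd (by omega) h1
      omega
  have key : ∀ f : E[X], f.map (hE.frob : E →+* E) = f →
      f ∈ (mapRingHom (algebraMap K E)).range := fun f hf => by
    rw [mem_map_range]
    intro j
    refine hE.mem_range_algebraMap hK ?_
    have := congrArg (coeff · j) hf
    rwa [coeff_map] at this
  have hfix : ∀ x, hE.frobenius x = x →
      ∃ y, mapHom (mapRingHom (algebraMap K E)) (map_poly K E q n) y = x := fun x hx => by
    refine exists_mapHom_eq _ (key _ (congrArg c0 hx)) (key _ ?_) (key _ ?_)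
    · exact (one_mul _).symm.trans (congrArg c1 hx)
    · have := congrArg c2 hx
      rw [frobenius, aut_c2, one_pow, one_mul] at this
      exact this
  have hdual : ∀ r < 2 * n, ∑ j ∈ Finset.range (D.natDegree + 1), of (poly E q n) (C (D.coeff j)) *
      (hE.frobenius ^ r) (of _ (C (g ^ j))) = if r = 0 then 1 else 0 := fun r hr => by
    have h1 : ∀ j ∈ Finset.range (D.natDegree + 1), of (poly E q n) (C (D.coeff j)) *
        (hE.frobenius ^ r) (of _ (C (g ^ j))) =
        of _ (C (D.coeff j * (g ^ q ^ r) ^ j)) := fun j _ => by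
      rw [frobenius_pow_of, map_C, ← map_mul, ← map_mul]
      congr 3
      exact (hE.frob_pow_apply r _).trans (by rw [← pow_mul, ← pow_mul, mul_comm])
    rw [Finset.sum_congr rfl h1, ← map_sum, ← map_sum, ← eval_eq_sum_range, hD r hr]
    split_ifs <;> simp
  obtain ⟨y, hy⟩ := exists_classMap_eq_sum _
    (mapHom_injective (map_injective _ (algebraMap K E).injective) (map_poly K E q n))
    hE.frobenius (by omega) hE.frobenius_pow_two_mul hfix _ _ _ hdual w
  refine ⟨y, hy.trans (Finset.sum_congr rfl fun r _ => ?_)⟩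
  exact (DFunLike.congr_fun (map_pow classAut hE.frobenius r) w).symm

end Descent

end FrobeniusField

theorem finite_classGroup_integralClosure {k L : Type*} [Field k] [Fintype k] [Field L]
    [Algebra k[X] L] [Algebra (RatFunc k) L] [IsScalarTower k[X] (RatFunc k) L]
    [FiniteDimensional (RatFunc k) L] [Algebra.IsSeparable (RatFunc k) L] :
    Finite (ClassGroup (integralClosure k[X] L)) :=
  Finite.of_fintype (ClassGroup (FunctionField.ringOfIntegers k L))

namespace FrobeniusField

open PureCubic

variable {E : Type*} [Field E] {q n : ℕ} (hE : FrobeniusField E q n)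
include hE

theorem squarefree_poly {K : Type*} [Field K] [Algebra K E] : Squarefree (poly K q n) := by
  obtain ⟨p, e, hp, _, he⟩ := hE.char
  have : CharP K p := (RingHom.charP_iff (algebraMap K E) (algebraMap K E).injective p).2 ‹_›
  refine (galois_poly_separable p (q ^ n) ?_).squarefree
  have he0 : e ≠ 0 := by
    rintro rfl
    have := hE.mod
    rw [he] at this
    simp at this
  rw [he]
  exact dvd_pow (dvd_pow_self p he0) hE.pos.ne'

theorem isDedekindDomain : IsDedekindDomain (PureCubic E[X] (poly E q n)) :=
  PureCubic.isDedekindDomain (by rw [hE.natDegree_poly]; exact hE.not_three_dvd n) hE.three_ne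
    hE.squarefree_poly

theorem exists_injective_pi_zmod {K : Type*} [Field K] [Fintype K] [Algebra K E]
    [IsDedekindDomain (PureCubic K[X] (poly K q n))]
    [Finite (Additive (ClassGroup (PureCubic K[X] (poly K q n))))]
    (hK : Fintype.card K = q) {m N : ℕ} (hm : m ∣ q + 1) (hn : n = 3 ^ (2 * N)) :
    ∃ f : (Fin N → ZMod m) →+ Additive (ClassGroup (PureCubic K[X] (poly K q n))),
      Function.Injective f := by
  have := hE.isDedekindDomain
  have := hE.finite
  have := Fintype.ofFinite hE.trans
  obtain ⟨ζ, hζ⟩ := hE.exists_zeta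
  have hζ3 : ζ ^ 3 = 1 := by linear_combination (ζ - 1) * hζ
  exact (hE.action hζ3).exists_injective_pi_zmod _ hE.three_dvd hm hn
    (fun i => hE.coprime_card (by positivity)) (hE.exists_classMap_eq_tr hK hζ3)
    fun i hi hi' => hE.exists_level hζ hζ3 (by omega) (hn ▸ pow_dvd_pow 3 hi')

end FrobeniusField

theorem stmt15 (Fq : Type*) [Field Fq] [Fintype Fq]
    (hq : Fintype.card Fq % 3 = 2)
    (m : ℕ) (hm : 0 < m) (hmdvd : m ∣ Fintype.card Fq + 1) (N : ℕ) :
    ∃ n : ℕ, 0 < n ∧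
      ∀ (L : Type) (_ : Field L) (_ : Algebra (Polynomial Fq) L)
        (_ : Algebra (RatFunc Fq) L)
        (_ : IsScalarTower (Polynomial Fq) (RatFunc Fq) L) (s : L),
        s ^ 3 = algebraMap (RatFunc Fq) L
            (RatFunc.X ^ (Fintype.card Fq ^ n) - RatFunc.X) →
        Algebra.adjoin (RatFunc Fq) {s} = ⊤ →
        ∃ φ : (Fin N → ZMod m) →+
            Additive (ClassGroup (integralClosure (Polynomial Fq) L)),
          Function.Injective φ := by
  refine ⟨3 ^ (2 * N), by positivity, fun L _ _ _ _ s hs hadj => ?_⟩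
  set q := Fintype.card Fq with hqdef
  set n := 3 ^ (2 * N) with hn
  have hn0 : 0 < n := by positivity
  obtain ⟨p, hchar⟩ := CharP.exists Fq
  obtain ⟨e, hp, he⟩ := FiniteField.card Fq p
  have := Fact.mk hp
  have : NeZero (2 * n) := ⟨by positivity⟩
  have hE : FrobeniusField (FiniteField.Extension Fq p (2 * n)) q n :=
    ⟨⟨p, e, hp, charP_of_injective_algebraMap (algebraMap Fq _).injective p, he⟩,
      by rw [FiniteField.natCard_extension, Nat.card_eq_fintype_card], hq, hn0⟩
  have hdeg : ¬ 3 ∣ (FrobeniusField.poly Fq q n).natDegree := by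
    rw [FrobeniusField.poly, FiniteField.X_pow_card_sub_X_natDegree_eq Fq
      (Nat.one_lt_pow hn0.ne' (by have := hE.two_le; omega))]
    exact hE.not_three_dvd n
  have h3 : (3 : Fq) ≠ 0 := fun h0 => hE.three_ne (by
    rw [← map_ofNat (algebraMap Fq (FiniteField.Extension Fq p (2 * n))) 3, h0, map_zero])
  have hsq : Squarefree (FrobeniusField.poly Fq q n) := hE.squarefree_poly
  have hs' : s ^ 3 = algebraMap Fq[X] L (FrobeniusField.poly Fq q n) := by
    rw [hs, IsScalarTower.algebraMap_apply Fq[X] (RatFunc Fq) L, FrobeniusField.poly]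
    simp only [map_sub, map_pow, RatFunc.algebraMap_X]
  have := PureCubic.isDedekindDomain hdeg h3 hsq
  have  := PureCubic.finiteDimensional_of_adjoin hs' hadj
  have := PureCubic.isSeparable_of_adjoin hdeg hs' hadj h3
  let Φ := (ClassGroup.mulEquiv (PureCubic.equivIntegralClosure hdeg hs' hadj h3 hsq)).toAdditive
  have : Finite (ClassGroup (integralClosure Fq[X] L)) := finite_classGroup_integralClosure
  have := Finite.of_equiv _ Φ.symm.toEquiv
  obtain ⟨f, hf⟩ := hE.exists_injective_pi_zmod hqdef.symm hmdvd hn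
  exact ⟨Φ.toAddMonoidHom.comp f, Φ.injective.comp hf⟩
end

section
/- Let q be an odd prime power, let f ∈ 𝔽_q[x] be a squarefree polynomial of degree 3, and let A ∈ 𝔽_q[t] be a squarefree polynomial of odd degree d > 1. Then the set of separable ∞-integral points of the quadratic twist A(t)·y² = f(x), namely {(F, G) ∈ 𝔽_q[t] × 𝔽_q[t] : A·G² = f(F) and F′ ≠ 0}, is finite. -/
open Polynomial

/-- Over a finite field there are only finitely many polynomials of bounded degree. -/
theorem finite_setOf_natDegree_lt (K : Type*) [Field K] [Finite K] (n : ℕ) :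
    {F : K[X] | F.natDegree < n}.Finite := by
  have : Finite (degreeLT K n) := Finite.of_equiv _ (degreeLTEquiv K n).symm.toEquiv
  refine (Set.toFinite (degreeLT K n : Set K[X])).subset fun F hF => ?_
  rw [SetLike.mem_coe, mem_degreeLT]
  exact degree_le_natDegree.trans_lt (by exact_mod_cast hF)

/-- If `A * G ^ 2 = f(F)` with `f` separable, then `G` divides `F'`. -/
theorem dvd_derivative_of_mul_sq_eq_comp {K : Type*} [Field K] {f A F G : K[X]}
    (hf : f.Separable) (h : A * G ^ 2 = f.comp F) : G ∣ derivative F := by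
  obtain ⟨u, v, huv⟩ := hf
  have hcomp := congrArg (fun P => P.comp F) huv
  simp only [add_comp, mul_comp, one_comp, ← h] at hcomp
  have hcop : IsCoprime G ((derivative f).comp F) :=
    ⟨u.comp F * A * G, v.comp F, by rw [← hcomp]; ring⟩
  refine hcop.dvd_of_dvd_mul_right ⟨derivative A * G + 2 * A * derivative G, ?_⟩
  rw [← derivative_comp, ← h]
  simp only [sq, derivative_mul]
  ring

theorem stmt16 (Fq : Type*) [Field Fq] [Fintype Fq] (hq : Odd (Fintype.card Fq))
    (f : Polynomial Fq) (hf : Squarefree f) (hf3 : f.natDegree = 3)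
    (A : Polynomial Fq) (hA : Squarefree A) (hAodd : Odd A.natDegree)
    (hAd : 1 < A.natDegree) :
    {P : Polynomial Fq × Polynomial Fq |
      A * P.2 ^ 2 = f.comp P.1 ∧ derivative P.1 ≠ 0}.Finite := by
  have hfin := finite_setOf_natDegree_lt Fq A.natDegree
  refine (hfin.prod hfin).subset ?_
  rintro ⟨F, G⟩ ⟨h, hF⟩
  have hsep : f.Separable := PerfectField.separable_iff_squarefree.mpr hf
  have hG : G.natDegree ≤ (derivative F).natDegree :=
    natDegree_le_of_dvd (dvd_derivative_of_mul_sq_eq_comp hsep h) hF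
  have hF0 : F.natDegree ≠ 0 := fun h0 => hF (derivative_of_natDegree_zero h0)
  have hF' : (derivative F).natDegree < F.natDegree := natDegree_derivative_lt hF0
  have hdeg : (A * G ^ 2).natDegree = 3 * F.natDegree := by
    rw [show A * G ^ 2 = f.comp F from h, natDegree_comp, hf3]
  have hG0 : G ≠ 0 := by
    rintro rfl
    simp at hdeg
    omega
  rw [natDegree_mul hA.ne_zero (pow_ne_zero 2 hG0), natDegree_pow] at hdeg
  simp only [Set.mem_prod, Set.mem_ofPred_eq]
  omega
end

section
/- Let q be an odd prime power and let f(x) = x³ + a·x + b with a, b ∈ 𝔽_q[t] and 4a³ + 27b² ≠ 0. Suppose there exist polynomials g₀, g₁ ∈ 𝔽_q[t][X₁, X₂], not both zero, such that for every squarefree d ∈ 𝔽_q[t] and every pair of separable ∞-integral points (F₁, G₁), (F₂, G₂) of the twist d·y² = f(x) (i.e., F_i, G_i ∈ 𝔽_q[t], d·G_i² = f(F_i), F_i′ ≠ 0), one has g₀(F₁, F₂) + g₁(F₁, F₂)·d·G₁·G₂ = 0. Then there exists a natural number N such that for every squarefree d ∈ 𝔽_q[t], the set {(F, G) ∈ 𝔽_q[t]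 × 𝔽_q[t] : d·G² = f(F), F′ ≠ 0} of separable ∞-integral points of d·y² = f(x) has at most N elements. -/
open Polynomial

/-- A nonzero polynomial cannot vanish on a power of a set larger than its total degree. -/
lemma MvPolynomial.finite_ncard_le_totalDegree {R σ : Type*} [CommRing R] [IsDomain R] [Finite σ]
    {P : MvPolynomial σ R} (hP : P ≠ 0) {S : Set R}
    (hS : ∀ x : σ → R, (∀ i, x i ∈ S) → MvPolynomial.eval x P = 0) :
    S.Finite ∧ S.ncard ≤ P.totalDegree := by
  have card_le (T : Finset R) (hT : (T : Set R) ⊆ S) : T.card ≤ P.totalDegree := by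
    by_contra! h
    exact hP (MvPolynomial.eq_zero_of_eval_zero_at_prod_finset P (fun _ => T)
      (fun i => (MvPolynomial.degreeOf_le_totalDegree P i).trans_lt h)
      fun x hx => hS x fun i => hT (hx i))
  have hfin : S.Finite := by
    by_contra hinf
    obtain ⟨T, hT, hcard⟩ := Set.Infinite.exists_subset_card_eq hinf (P.totalDegree + 1)
    have := card_le T hT
    omega
  refine ⟨hfin, ?_⟩
  rw [Set.ncard_eq_toFinset_card S hfin]
  exact card_le _ (by simp)

/-- The solutions of `d * y ^ 2 = e x` with `x` in a finite set are at most twice as many as the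
elements of that set. -/
lemma finite_ncard_mul_sq_eq_le {R : Type*} [CommRing R] [IsDomain R] {d : R} (hd : d ≠ 0)
    (e : R → R) (U : Finset R) {S : Set (R × R)}
    (hS : ∀ P ∈ S, P.1 ∈ U ∧ d * P.2 ^ 2 = e P.1) :
    S.Finite ∧ S.ncard ≤ U.card * 2 := by
  classical
  let p (x : R) : R[X] := C d * X ^ 2 + C 0 * X + C (-e x)
  have hp (x : R) : p x ≠ 0 := ne_zero_of_natDegree_gt
    (n := 0) (by rw [natDegree_quadratic hd]; norm_num)
  let V : Finset (R × R) := U.biUnion fun x => (p x).roots.toFinset.image (Prod.mk x)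
  have hSV : S ⊆ V := by
    intro P hP
    obtain ⟨hU, heq⟩ := hS P hP
    have hroot : P.2 ∈ (p P.1).roots := (mem_roots (hp _)).mpr (by simp [p, heq])
    exact Finset.mem_biUnion.mpr
      ⟨P.1, hU, Finset.mem_image.mpr ⟨P.2, Multiset.mem_toFinset.mpr hroot, rfl⟩⟩
  refine ⟨V.finite_toSet.subset hSV, ?_⟩
  calc S.ncard ≤ (V : Set (R × R)).ncard := Set.ncard_le_ncard hSV V.finite_toSet
    _ = V.card := Set.ncard_coe_finset V
    _ ≤ U.card * 2 := Finset.card_biUnion_le_card_mul _ _ _ fun x _ =>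
      Finset.card_image_le.trans <| (Multiset.toFinset_card_le _).trans <|
        (card_roots' _).trans natDegree_quadratic_le

theorem stmt17 (Fq : Type*) [Field Fq] [Fintype Fq] (hq : Odd (Fintype.card Fq))
    (a b : Polynomial Fq) (hΔ : 4 * a ^ 3 + 27 * b ^ 2 ≠ 0)
    (g₀ g₁ : MvPolynomial (Fin 2) (Polynomial Fq))
    (hg : ¬(g₀ = 0 ∧ g₁ = 0))
    (hcorr : ∀ d : Polynomial Fq, Squarefree d →
      ∀ F₁ G₁ F₂ G₂ : Polynomial Fq,
        d * G₁ ^ 2 = F₁ ^ 3 + a * F₁ + b → derivative F₁ ≠ 0 →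
        d * G₂ ^ 2 = F₂ ^ 3 + a * F₂ + b → derivative F₂ ≠ 0 →
        MvPolynomial.eval ![F₁, F₂] g₀
          + MvPolynomial.eval ![F₁, F₂] g₁ * (d * G₁ * G₂) = 0) :
    ∃ N : ℕ, ∀ d : Polynomial Fq, Squarefree d →
      {P : Polynomial Fq × Polynomial Fq |
          d * P.2 ^ 2 = P.1 ^ 3 + a * P.1 + b ∧ derivative P.1 ≠ 0}.Finite ∧
      {P : Polynomial Fq × Polynomial Fq |
          d * P.2 ^ 2 = P.1 ^ 3 + a * P.1 + b ∧ derivative P.1 ≠ 0}.ncard ≤ N := by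
  classical
  have h2 : (2 : Fq[X]) ≠ 0 := by
    have h : (2 : Fq) ≠ 0 := Ring.two_ne_zero fun h =>
      (Nat.not_even_iff_odd.mpr hq) (FiniteField.even_card_iff_char_two.mp h |> Nat.even_iff.mpr)
    rw [← C_ofNat]
    exact C_ne_zero.mpr h
  obtain ⟨h, hh, hvan⟩ : ∃ h : MvPolynomial (Fin 2) Fq[X], h ≠ 0 ∧
      ∀ d : Fq[X], Squarefree d → ∀ F₁ G₁ F₂ G₂ : Fq[X], G₁ ≠ 0 → G₂ ≠ 0 →
        d * G₁ ^ 2 = F₁ ^ 3 + a * F₁ + b → derivative F₁ ≠ 0 →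
        d * G₂ ^ 2 = F₂ ^ 3 + a * F₂ + b → derivative F₂ ≠ 0 →
        MvPolynomial.eval ![F₁, F₂] h = 0 := by
    by_cases h0 : g₀ = 0
    · refine ⟨g₁, fun h1 => hg ⟨h0, h1⟩, fun d hd F₁ G₁ F₂ G₂ hG₁ hG₂ e₁ s₁ e₂ s₂ => ?_⟩
      simpa [h0, hd.ne_zero, hG₁, hG₂] using hcorr d hd F₁ G₁ F₂ G₂ e₁ s₁ e₂ s₂
    · refine ⟨g₀, h0, fun d hd F₁ G₁ F₂ G₂ _ _ e₁ s₁ e₂ s₂ => ?_⟩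
      have hpos := hcorr d hd F₁ G₁ F₂ G₂ e₁ s₁ e₂ s₂
      have hneg := hcorr d hd F₁ G₁ F₂ (-G₂) e₁ s₁ (by rwa [neg_sq]) s₂
      exact (mul_eq_zero.mp (show 2 * MvPolynomial.eval ![F₁, F₂] g₀ = 0 by
        linear_combination hpos + hneg)).resolve_left h2
  refine ⟨(h.totalDegree + 3) * 2, fun d hd => ?_⟩
  let S : Set Fq[X] :=
    {F | ∃ G, G ≠ 0 ∧ d * G ^ 2 = F ^ 3 + a * F + b ∧ derivative F ≠ 0}
  obtain ⟨hfin, hcard⟩ := MvPolynomial.finite_ncard_le_totalDegree hh (S := S) (by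
    intro x hx
    obtain ⟨G₁, hG₁, e₁, s₁⟩ := hx 0
    obtain ⟨G₂, hG₂, e₂, s₂⟩ := hx 1
    have hx' : x = ![x 0, x 1] := by ext i : 1; fin_cases i <;> rfl
    rw [hx']
    exact hvan d hd _ G₁ _ G₂ hG₁ hG₂ e₁ s₁ e₂ s₂)
  let f : Fq[X][X] := C 1 * X ^ 3 + C 0 * X ^ 2 + C a * X + C b
  have hf : f ≠ 0 := ne_zero_of_natDegree_gt
    (n := 0) (by rw [natDegree_cubic one_ne_zero]; norm_num)
  let U : Finset Fq[X] := hfin.toFinset ∪ f.roots.toFinset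
  have hU : U.card ≤ h.totalDegree + 3 := (Finset.card_union_le _ _).trans <| add_le_add
    (by rwa [← Set.ncard_eq_toFinset_card S hfin])
    ((Multiset.toFinset_card_le _).trans ((card_roots' _).trans natDegree_cubic_le))
  obtain ⟨hfin', hcard'⟩ := finite_ncard_mul_sq_eq_le hd.ne_zero (fun F => F ^ 3 + a * F + b) U
    (S := {P | d * P.2 ^ 2 = P.1 ^ 3 + a * P.1 + b ∧ derivative P.1 ≠ 0}) (by
      rintro ⟨F, G⟩ ⟨e, s⟩
      refine ⟨?_, e⟩
      by_cases hG : G = 0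
      · refine Finset.mem_union_right _ ?_
        simp only [Multiset.mem_toFinset, mem_roots hf, IsRoot.def]
        simpa [hG, f] using e.symm
      · exact Finset.mem_union_left _ (hfin.mem_toFinset.mpr ⟨G, hG, e, s⟩))
  exact ⟨hfin', hcard'.trans (Nat.mul_le_mul_right 2 hU)⟩
end

section
/- Let q be a prime power with q ≡ 3 (mod 4). Then for every natural number N there exists a squarefree polynomial d ∈ 𝔽_q[t] such that the quadratic twist d·y² = x³ − x has at least N separable ∞-integral points; that is, the set {(F, G) ∈ 𝔽_q[t] × 𝔽_q[t] : d·G² = F³ − F and F′ ≠ 0} has at least N elements. (One may take d = t^{q^n} − t with n having at least N odd divisors.) In particular, the number of separable ∞-integral points on quadratic twists of y² = x³ − x by squarefree polynomials cannot be bounded independently of the twisting polynomial. -/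
open Polynomial

/-- The polynomial trace `X + X ^ Q + ⋯ + X ^ (Q ^ (k - 1))` for `Q` a power of the
characteristic `p`, together with its basic properties. -/
theorem exists_trace_polynomial {K : Type*} [Field K] (p : ℕ) [Fact p.Prime] [CharP K p]
    {e : ℕ} (he : e ≠ 0) (k : ℕ) (hk : k ≠ 0) :
    ∃ U : K[X], U.eval 0 = 1 ∧ derivative (X * U) = 1 ∧
      (X * U) ^ p ^ e - X * U = X ^ (p ^ e) ^ k - X := by
  have hQ : 1 < p ^ e := Nat.one_lt_pow he (Fact.out : p.Prime).one_lt
  have hQ0 : ((p ^ e : ℕ) : K[X]) = 0 := by simp [he]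
  induction k, Nat.one_le_iff_ne_zero.2 hk using Nat.le_induction with
  | base => exact ⟨1, by simp⟩
  | succ k hk1 ih =>
    obtain ⟨U, -, -, hU⟩ := ih (by omega)
    have hT : X * (1 + X ^ (p ^ e - 1) * U ^ p ^ e) = (X * U) ^ p ^ e + X := by
      rw [mul_pow, ← Nat.sub_add_cancel hQ.le, pow_succ X]
      simp only [Nat.add_sub_cancel]
      ring
    refine ⟨1 + X ^ (p ^ e - 1) * U ^ p ^ e, ?_, ?_, ?_⟩
    · simp [show p ^ e - 1 ≠ 0 by omega]
    · rw [hT, derivative_add, derivative_pow, derivative_X, map_natCast, hQ0]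
      simp
    · have h := congrArg (· ^ p ^ e) hU
      simp only [sub_pow_char_pow] at h
      rw [hT, add_pow_char_pow, pow_succ, pow_mul]
      linear_combination h

theorem exponent_eq_of_X_pow_mul_eq_X_pow_mul {K : Type*} [Field K] {a b : ℕ} {U V : K[X]}
    (hU : U.eval 0 ≠ 0) (hV : V.eval 0 ≠ 0) (h : X ^ a * U = X ^ b * V) : a = b := by
  wlog hab : a ≤ b generalizing a b U V
  · exact (this hV hU h.symm (by omega)).symm
  obtain ⟨c, rfl⟩ := Nat.exists_eq_add_of_le hab
  rw [pow_add, mul_assoc] at h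
  have h' := mul_left_cancel₀ (pow_ne_zero a X_ne_zero) h
  by_contra hc
  apply hU
  rw [h']
  simp [show c ≠ 0 by omega]

theorem stmt18 (Fq : Type*) [Field Fq] [Fintype Fq]
    (hq : Fintype.card Fq % 4 = 3) (N : ℕ) :
    ∃ d : Polynomial Fq, Squarefree d ∧
      ∃ P : Fin N → Polynomial Fq × Polynomial Fq, Function.Injective P ∧
        ∀ i, d * (P i).2 ^ 2 = (P i).1 ^ 3 - (P i).1 ∧ derivative (P i).1 ≠ 0 := by
  obtain ⟨p, hchar⟩ := CharP.exists Fq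
  obtain ⟨r, hp, hcard⟩ := FiniteField.card Fq p
  have : Fact p.Prime := ⟨hp⟩
  have hr : (r : ℕ) ≠ 0 := r.ne_zero
  rw [hcard] at hq
  have hmod : ∀ i : ℕ, p ^ ((r : ℕ) * 3 ^ i) % 4 = 3 := by
    intro i
    induction i with
    | zero => simpa using hq
    | succ i ih => rw [pow_succ, ← mul_assoc, pow_mul, Nat.pow_mod, ih]
  have hexp : ∀ i : ℕ, (r : ℕ) * 3 ^ i ≠ 0 := fun i => by positivity
  choose U hU0 hU1 hU using fun i : Fin N =>
    exists_trace_polynomial (K := Fq) p (hexp i) (3 ^ (N - i)) (by positivity)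
  have hd : ∀ i : Fin N, (p ^ ((r : ℕ) * 3 ^ (i : ℕ))) ^ 3 ^ (N - i) = p ^ ((r : ℕ) * 3 ^ N) := by
    intro i
    rw [← pow_mul, mul_assoc, ← pow_add, Nat.add_sub_cancel' i.2.le]
  refine ⟨X ^ p ^ ((r : ℕ) * 3 ^ N) - X, ?_,
    fun i => ((X * U i) ^ ((p ^ ((r : ℕ) * 3 ^ (i : ℕ)) - 1) / 2),
      (X * U i) ^ ((p ^ ((r : ℕ) * 3 ^ (i : ℕ)) - 3) / 4)), ?_, fun i => ⟨?_, ?_⟩⟩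
  · exact (galois_poly_separable p _ (dvd_pow_self p (hexp N))).squarefree
  · intro i j hij
    have h := (Prod.ext_iff.1 hij).1
    simp only [mul_pow] at h
    have h2 := exponent_eq_of_X_pow_mul_eq_X_pow_mul (by simp [hU0]) (by simp [hU0]) h
    have hi := hmod i
    have hj := hmod j
    have h3 := Nat.pow_right_injective hp.two_le
      (show p ^ ((r : ℕ) * 3 ^ (i : ℕ)) = p ^ ((r : ℕ) * 3 ^ (j : ℕ)) by omega)
    exact Fin.ext (Nat.pow_right_injective (by norm_num : 2 ≤ 3)
      (Nat.eq_of_mul_eq_mul_left r.pos h3))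
  · have h := hU i
    rw [hd] at h
    obtain ⟨m, hm⟩ : ∃ m, p ^ ((r : ℕ) * 3 ^ (i : ℕ)) = 4 * m + 3 :=
      ⟨p ^ ((r : ℕ) * 3 ^ (i : ℕ)) / 4, by have := hmod i; omega⟩
    rw [← h]
    simp only [hm, show (4 * m + 3 - 1) / 2 = 2 * m + 1 by omega,
      show (4 * m + 3 - 3) / 4 = m by omega]
    ring
  · have hT : X * U i ≠ 0 := fun h0 => by simpa [h0] using hU1 i
    have hne : (((p ^ ((r : ℕ) * 3 ^ (i : ℕ)) - 1) / 2 : ℕ) : Fq) ≠ 0 := by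
      intro h0
      have h1 : (((p ^ ((r : ℕ) * 3 ^ (i : ℕ)) - 1) / 2 * 2 + 1 : ℕ) : Fq) = 1 := by
        push_cast [h0]; ring
      rw [show (p ^ ((r : ℕ) * 3 ^ (i : ℕ)) - 1) / 2 * 2 + 1 = p ^ ((r : ℕ) * 3 ^ (i : ℕ)) by
        have := hmod i; omega] at h1
      simp [hr] at h1
    simp only [derivative_pow, hU1, mul_one]
    exact mul_ne_zero (C_ne_zero.2 hne) (pow_ne_zero _ hT)
end

section
/- Let q be a prime power with q ≡ 2 (mod 3). Then for every natural number N there exists a squarefree (in particular cube-free) polynomial d ∈ 𝔽_q[t] such that the cubic twist y² − y = d·x³ has at least N separable ∞-integral points; that is, the set {(F, G) ∈ 𝔽_q[t] × 𝔽_q[t] : G² − G = d·F³ and G′ ≠ 0} has at least N elements. (One may take d = t^{q^n} − t with n having at least N odd divisors.) In particular, the number of separable ∞-integral points on the fibers of the surface d·x³ = y² − y cannot be bounded independently of d. -/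
open Polynomial

/-- If `r` is a power of the characteristic, then the additive polynomial
`T = ∑_{j < k} X ^ (r ^ j)` satisfies `T ^ r - T = X ^ (r ^ k) - X`. -/
theorem sum_X_pow_pow_char_pow_sub {R : Type*} [CommRing R] (p : ℕ) [Fact p.Prime] [CharP R p]
    (s k : ℕ) :
    (∑ j ∈ Finset.range k, (X : R[X]) ^ (p ^ s) ^ j) ^ p ^ s
      - ∑ j ∈ Finset.range k, (X : R[X]) ^ (p ^ s) ^ j = X ^ (p ^ s) ^ k - X := by
  rw [sum_pow_char_pow, ← Finset.sum_sub_distrib]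
  simp_rw [← pow_mul X, ← pow_succ (p ^ s)]
  rw [Finset.sum_range_sub (fun j => (X : R[X]) ^ (p ^ s) ^ j)]
  simp

/-- If `T ^ r - T = d` with `r ≡ 2 (mod 3)`, then `(T ^ ((r - 2) / 3), T ^ (r - 1))` lies on the
cubic twist `y ^ 2 - y = d * x ^ 3`. -/
theorem cubicTwist_of_pow_sub_self {R : Type*} [CommRing R] {T d : R} {r : ℕ} (hr : r % 3 = 2)
    (h : T ^ r - T = d) :
    (T ^ (r - 1)) ^ 2 - T ^ (r - 1) = d * (T ^ ((r - 2) / 3)) ^ 3 := by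
  obtain ⟨c, rfl⟩ : ∃ c, r = 3 * c + 2 := ⟨r / 3, by omega⟩
  have h₁ : 3 * c + 2 - 1 = 3 * c + 1 := by omega
  have h₂ : (3 * c + 2 - 2) / 3 = c := by omega
  rw [← h, h₁, h₂]
  ring

theorem pow_mod_three_of_odd {q m : ℕ} (hq : q % 3 = 2) (hm : Odd m) : q ^ m % 3 = 2 := by
  obtain ⟨c, rfl⟩ := hm
  rw [pow_succ, pow_mul, Nat.mul_mod, Nat.pow_mod, Nat.pow_mod q 2, hq]
  simp

theorem stmt19 (Fq : Type*) [Field Fq] [Fintype Fq]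
    (hq : Fintype.card Fq % 3 = 2) (N : ℕ) :
    ∃ d : Polynomial Fq, Squarefree d ∧
      ∃ P : Fin N → Polynomial Fq × Polynomial Fq, Function.Injective P ∧
        ∀ i, (P i).2 ^ 2 - (P i).2 = d * (P i).1 ^ 3 ∧ derivative (P i).2 ≠ 0 := by
  obtain ⟨p, hp⟩ := CharP.exists Fq
  obtain ⟨s, hprime, hcard⟩ := FiniteField.card Fq p
  have : Fact p.Prime := ⟨hprime⟩
  set q := Fintype.card Fq
  have hq1 : 1 < q := Fintype.one_lt_card
  have hqp : p ∣ q := hcard ▸ dvd_pow_self p s.ne_zero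
  have hr_dvd (i : ℕ) : p ∣ q ^ 3 ^ i := hqp.trans (dvd_pow_self q (by positivity))
  have hr_mod (i : ℕ) : q ^ 3 ^ i % 3 = 2 := pow_mod_three_of_odd hq (Odd.pow (by decide))
  set d : Fq[X] := X ^ q ^ 3 ^ N - X with hd
  have hsep : d.Separable := galois_poly_separable p _ (hr_dvd N)
  have hd0 : d ≠ 0 := hsep.ne_zero
  let T (i : ℕ) : Fq[X] := ∑ j ∈ Finset.range (3 ^ (N - i)), X ^ (q ^ 3 ^ i) ^ j
  have hT (i : ℕ) (hi : i < N) : T i ^ q ^ 3 ^ i - T i = d := by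
    have h := sum_X_pow_pow_char_pow_sub (R := Fq) p (s * 3 ^ i) (3 ^ (N - i))
    rw [pow_mul p, ← hcard, ← pow_mul q, ← pow_add, Nat.add_sub_cancel' hi.le] at h
    exact h
  have hrcast (i : ℕ) : ((q ^ 3 ^ i : ℕ) : Fq[X]) = 0 := (CharP.cast_eq_zero_iff _ p _).2 (hr_dvd i)
  have hT' (i : ℕ) (hi : i < N) : derivative (T i) = 1 := by
    have h := congrArg derivative (hT i hi)
    simp only [hd, derivative_sub, derivative_pow, derivative_X, C_eq_natCast, hrcast] at h
    simpa using h
  have hTdeg (i : ℕ) (hi : i < N) : (T i).natDegree ≠ 0 := fun h => by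
    have h' := hT' i hi
    rw [derivative_of_natDegree_zero h] at h'
    exact zero_ne_one h'
  have hr_pos (i : ℕ) : 2 ≤ q ^ 3 ^ i := by have := hr_mod i; omega
  have hmul (i : ℕ) (hi : i < N) : (T i ^ (q ^ 3 ^ i - 1) - 1) * T i = d := by
    rw [sub_mul, ← pow_succ, one_mul, Nat.sub_add_cancel (by linarith [hr_pos i]), hT i hi]
  refine ⟨d, hsep.squarefree,
    fun i => (T i ^ ((q ^ 3 ^ (i : ℕ) - 2) / 3), T i ^ (q ^ 3 ^ (i : ℕ) - 1)), ?_, fun i =>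
      ⟨cubicTwist_of_pow_sub_self (hr_mod i) (hT i i.2), ?_⟩⟩
  · intro i j hij
    have hG : T i ^ (q ^ 3 ^ (i : ℕ) - 1) = T j ^ (q ^ 3 ^ (j : ℕ) - 1) := (Prod.ext_iff.1 hij).2
    have hTij : T i = T j := by
      have hi := hmul i i.2
      have hj := hmul j j.2
      rw [← hG, ← hi] at hj
      refine (mul_left_cancel₀ (fun h0 => hd0 ?_) hj).symm
      rw [← hi, h0, zero_mul]
    rw [← hTij] at hG
    have hdeg := congrArg natDegree hG
    rw [natDegree_pow, natDegree_pow] at hdeg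
    have hexp := Nat.eq_of_mul_eq_mul_right (Nat.pos_of_ne_zero (hTdeg i i.2)) hdeg
    have hpow : q ^ 3 ^ (i : ℕ) = q ^ 3 ^ (j : ℕ) := by
      have := hr_pos i
      have := hr_pos j
      omega
    exact Fin.ext (Nat.pow_right_injective (by norm_num) (Nat.pow_right_injective hq1 hpow))
  · have hT0 : T i ≠ 0 := fun h => hTdeg i i.2 (by rw [h, natDegree_zero])
    have hcast : ((q ^ 3 ^ (i : ℕ) - 1 : ℕ) : Fq[X]) = -1 := by
      rw [Nat.cast_sub (by linarith [hr_pos i]), hrcast]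
      simp
    simp only [derivative_pow, hT' i i.2, C_eq_natCast, hcast]
    simpa using fun h => absurd h hT0
end
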